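/- arXiv:1205.4821 — 15 statements merged into one kernel-verified Lean document; each statement's English description precedes it below -/
import Mathlib

section
/- The middle-thirds Cantor set satisfies 𝒞 + 𝒞 = [0,2]; that is, every real number in the interval [0,2] can be written as the sum of two elements of 𝒞 (equivalently, (1/2)𝒞 + (1/2)𝒞 = [0,1]). -/
open scoped Pointwise

/-- The middle-thirds Cantor set: reals admitting a ternary expansion
`∑_{n≥1} aₙ 3⁻ⁿ` with every digit `aₙ ∈ {0, 2}`. -/
def ternaryCantorSet : Set ℝ :=
  {x | ∃ a : ℕ → ℝ, (∀ n, a n = 0 ∨ a n = 2) ∧ x = ∑' n : ℕ, a n / 3 ^ (n + 1)}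

theorem tcs_summable (a : ℕ → ℝ) (ha : ∀ n, a n = 0 ∨ a n = 2) :
    Summable (fun n : ℕ => a n / 3 ^ (n + 1)) := by
  have hs : Summable (fun n : ℕ => (2/3 : ℝ) * (1/3) ^ n) :=
    (summable_geometric_of_lt_one (by norm_num) (by norm_num)).mul_left _
  refine Summable.of_nonneg_of_le (fun n => ?_) (fun n => ?_) hs
  · rcases ha n with h | h <;> rw [h] <;> positivity
  · have e : (2/3 : ℝ) * (1/3) ^ n = 2 / 3 ^ (n + 1) := by
      rw [div_pow, one_pow, pow_succ]; field_simp
    rw [e]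
    rcases ha n with h | h <;> rw [h]
    rw [zero_div]; positivity

theorem tcs_bounds (a : ℕ → ℝ) (ha : ∀ n, a n = 0 ∨ a n = 2) :
    0 ≤ ∑' n : ℕ, a n / 3 ^ (n + 1) ∧ ∑' n : ℕ, a n / 3 ^ (n + 1) ≤ 1 := by
  constructor
  · refine tsum_nonneg (fun n => ?_)
    rcases ha n with h | h <;> rw [h] <;> positivity
  · have hs : HasSum (fun n : ℕ => (2/3 : ℝ) * (1/3) ^ n) ((2/3) * (1 - 1/3)⁻¹) :=
      (hasSum_geometric_of_lt_one (by norm_num) (by norm_num)).mul_left _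
    have h1 : ((2/3 : ℝ) * (1 - 1/3)⁻¹) = 1 := by norm_num
    rw [h1] at hs
    rw [← hs.tsum_eq]
    refine (tcs_summable a ha).tsum_le_tsum (fun n => ?_) hs.summable
    have e : (2/3 : ℝ) * (1/3) ^ n = 2 / 3 ^ (n + 1) := by
      rw [div_pow, one_pow, pow_succ]; field_simp
    rw [e]
    rcases ha n with h | h <;> rw [h]
    rw [zero_div]; positivity

/-- The middle-thirds Cantor set satisfies `𝒞 + 𝒞 = [0, 2]`. -/
theorem ternaryCantorSet_add_ternaryCantorSet : ternaryCantorSet + ternaryCantorSet = Set.Icc (0 : ℝ) 2 := by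
  ext x
  rw [Set.mem_add]
  constructor
  · rintro ⟨_, ⟨a, ha, rfl⟩, _, ⟨b, hb, rfl⟩, rfl⟩
    have h1 := tcs_bounds a ha
    have h2 := tcs_bounds b hb
    constructor <;> linarith
  · rintro ⟨h0, h2⟩
    obtain ⟨d, -, hd⟩ := Real.ofDigits_SurjOn (b := 3) (by norm_num)
      (show x / 2 ∈ Set.Icc (0 : ℝ) 1 from ⟨by linarith, by linarith⟩)
    let a : ℕ → ℝ := fun n => if (d n : ℕ) = 0 then 0 else 2
    let b : ℕ → ℝ := fun n => if (d n : ℕ) = 2 then 2 else 0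
    have ha : ∀ n, a n = 0 ∨ a n = 2 := fun n => by
      by_cases h : (d n : ℕ) = 0 <;> simp only [a, h, if_true, if_false] <;> simp
    have hb : ∀ n, b n = 0 ∨ b n = 2 := fun n => by
      by_cases h : (d n : ℕ) = 2 <;> simp only [b, h, if_true, if_false] <;> simp
    refine ⟨_, ⟨a, ha, rfl⟩, _, ⟨b, hb, rfl⟩, ?_⟩
    rw [← (tcs_summable a ha).tsum_add (tcs_summable b hb)]
    have hx : x = 2 * Real.ofDigits d := by rw [hd]; ring
    rw [hx, Real.ofDigits, ← tsum_mul_left]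
    refine tsum_congr (fun n => ?_)
    have key : a n + b n = 2 * ((d n : ℕ) : ℝ) := by
      simp only [a, b]
      generalize d n = k
      fin_cases k <;> norm_num
    rw [← add_div, key, Real.ofDigitsTerm]
    push_cast
    rw [div_eq_mul_inv, mul_assoc]
end

section
/- (Lorentz's Lemma) There exists a constant c > 0 such that for every positive integer k the following holds: if A is a set of integers contained in [0, k) and ℓ is an integer with |A| ≥ ℓ ≥ 2, then there exists a set of integers B contained in the open interval (−k, k) such that every integer in [0, k) belongs to the sumset A + B, and |B| ≤ c · k · (log ℓ)/ℓ. -/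
lemma lorentz_step (k : ℕ) (hk : 0 < k) (A : Finset ℤ)
    (hA : ∀ a ∈ A, 0 ≤ a ∧ a < (k : ℤ)) (ℓ : ℕ) (hℓ : ℓ ≤ A.card) (U : Finset ℤ)
    (hU : U ⊆ Finset.Ico 0 (k : ℤ)) :
    ∃ b ∈ Finset.Ioo (-(k : ℤ)) k,
      ℓ * U.card ≤ 2 * k * (U.filter (fun u => u - b ∈ A)).card := by
  by_contra hcon
  push Not at hcon
  have hcard : (Finset.Ioo (-(k : ℤ)) k).card ≤ 2 * k := by
    rw [Int.card_Ioo]; omega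
  have hne : (Finset.Ioo (-(k : ℤ)) k).Nonempty := ⟨0, by simp; omega⟩
  have h1 := Finset.sum_lt_sum_of_nonempty hne hcon
  rw [← Finset.mul_sum, Finset.sum_const, smul_eq_mul] at h1
  have h2 : ∑ b ∈ Finset.Ioo (-(k : ℤ)) k, (U.filter (fun u => u - b ∈ A)).card
      = ∑ u ∈ U, ((Finset.Ioo (-(k : ℤ)) k).filter (fun b => u - b ∈ A)).card :=
    Finset.sum_card_bipartiteAbove_eq_sum_card_bipartiteBelow (fun b u => u - b ∈ A)
  have h3 : ∀ u ∈ U, ℓ ≤ ((Finset.Ioo (-(k : ℤ)) k).filter (fun b => u - b ∈ A)).card := by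
    intro u hu
    refine hℓ.trans ?_
    refine Finset.card_le_card_of_injOn (fun a => u - a) ?_ ?_
    · intro a ha
      have ha' : a ∈ A := ha
      have := hA a ha'
      have hu' := Finset.mem_Ico.1 (hU hu)
      simp only [Finset.coe_filter, Set.mem_ofPred_eq, Finset.mem_Ioo, sub_sub_cancel]
      exact ⟨⟨by omega, by omega⟩, ha'⟩
    · intro a _ b _ h
      simpa using h
  have h4 := Finset.card_nsmul_le_sum U _ ℓ h3
  rw [h2] at h1
  rw [smul_eq_mul] at h4
  have h5 := Nat.mul_le_mul_right (ℓ * U.card) hcard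
  have h6 := Nat.mul_le_mul_left (2 * k) h4
  nlinarith

lemma lorentz_greedy (k : ℕ) (hk : 0 < k) (A : Finset ℤ)
    (hA : ∀ a ∈ A, 0 ≤ a ∧ a < (k : ℤ)) (ℓ : ℕ) (hℓ : ℓ ≤ A.card) (hℓk : ℓ ≤ k) (m : ℕ) :
    ∃ B U : Finset ℤ, B.card ≤ m ∧ B ⊆ Finset.Ioo (-(k : ℤ)) k ∧ U ⊆ Finset.Ico 0 (k : ℤ) ∧
      (∀ i ∈ Finset.Ico 0 (k : ℤ), i ∉ U → ∃ a ∈ A, ∃ b ∈ B, i = a + b) ∧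
      (U.card : ℝ) ≤ k * (1 - ℓ / (2 * k)) ^ m := by
  induction m with
  | zero => exact ⟨∅, Finset.Ico 0 (k : ℤ), by simp, by simp, subset_rfl,
      fun i hi h => absurd hi h, by simp⟩
  | succ m ih =>
    obtain ⟨B, U, h1, h2, h3, h4, h5⟩ := ih
    obtain ⟨b, hb, hc⟩ := lorentz_step k hk A hA ℓ hℓ U h3
    refine ⟨insert b B, U.filter (fun u => ¬ (u - b ∈ A)), ?_, ?_, ?_, ?_, ?_⟩
    · exact (Finset.card_insert_le _ _).trans (by omega)
    · exact Finset.insert_subset hb h2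
    · exact (Finset.filter_subset _ _).trans h3
    · intro i hi hn
      by_cases hiU : i ∈ U
      · have : i - b ∈ A := by
          by_contra h
          exact hn (Finset.mem_filter.2 ⟨hiU, h⟩)
        exact ⟨i - b, this, b, Finset.mem_insert_self _ _, by ring⟩
      · obtain ⟨a, ha, b', hb', e⟩ := h4 i hi hiU
        exact ⟨a, ha, b', Finset.mem_insert_of_mem hb', e⟩
    · have hs := Finset.card_filter_add_card_filter_not (s := U) (fun u => u - b ∈ A)
      have hs' : ((U.filter (fun u => u - b ∈ A)).card : ℝ)
        + (U.filter (fun u => ¬ (u - b ∈ A))).card = U.card := by exact_mod_cast hs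
      have hc' : (ℓ : ℝ) * U.card ≤ 2 * k * (U.filter (fun u => u - b ∈ A)).card := by
        exact_mod_cast hc
      have hk' : (0 : ℝ) < k := by exact_mod_cast hk
      have hℓk' : (ℓ : ℝ) ≤ k := by exact_mod_cast hℓk
      have hd : (ℓ : ℝ) / (2 * k) * U.card ≤ (U.filter (fun u => u - b ∈ A)).card := by
        rw [div_mul_eq_mul_div, div_le_iff₀ (by positivity)]
        linarith
      have h0 : (0 : ℝ) ≤ 1 - ℓ / (2 * k) := by
        rw [sub_nonneg, div_le_one (by positivity)]
        linarith
      have := mul_le_mul_of_nonneg_right h5 h0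
      rw [pow_succ, ← mul_assoc]
      linarith

/-- **Lorentz's Lemma.** There is a constant `c > 0` such that for every positive
integer `k`: if `A` is a set of integers contained in `[0, k)` with `|A| ≥ ℓ ≥ 2`,
then there is a set of integers `B ⊆ (-k, k)` with `[0, k) ⊆ A + B` and
`|B| ≤ c · k · (log ℓ) / ℓ`. -/
theorem lorentz_lemma :
    ∃ c : ℝ, 0 < c ∧ ∀ k : ℕ, 0 < k → ∀ A : Finset ℤ,
      (∀ a ∈ A, 0 ≤ a ∧ a < (k : ℤ)) → ∀ ℓ : ℕ, 2 ≤ ℓ → (ℓ : ℕ) ≤ A.card →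
        ∃ B : Finset ℤ,
          (∀ b ∈ B, -(k : ℤ) < b ∧ b < (k : ℤ)) ∧
          (∀ i : ℤ, 0 ≤ i → i < (k : ℤ) → ∃ a ∈ A, ∃ b ∈ B, i = a + b) ∧
          (B.card : ℝ) ≤ c * k * (Real.log ℓ / ℓ) := by
  refine ⟨6, by norm_num, ?_⟩
  intro k hk A hA ℓ h2 hℓ
  have hℓk : ℓ ≤ k := by
    have : A ⊆ Finset.Ico 0 (k : ℤ) := fun a ha => Finset.mem_Ico.2 (hA a ha)
    have := Finset.card_le_card this
    simp at this
    omega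
  have hk' : (0 : ℝ) < k := by exact_mod_cast hk
  have hℓk' : (ℓ : ℝ) ≤ k := by exact_mod_cast hℓk
  have h2' : (2 : ℝ) ≤ ℓ := by exact_mod_cast h2
  have hℓ0 : (0 : ℝ) < ℓ := by linarith
  have hlog : (1 / 2 : ℝ) ≤ Real.log ℓ := by
    have := Real.log_le_log (by norm_num) h2'
    have := Real.log_two_gt_d9
    linarith
  set m := ⌈2 * k * (Real.log ℓ / ℓ)⌉₊ with hm
  obtain ⟨B, U, g1, g2, g3, g4, g5⟩ := lorentz_greedy k hk A hA ℓ hℓ hℓk m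
  obtain ⟨a, ha⟩ : A.Nonempty := Finset.card_pos.1 (by omega)
  refine ⟨B ∪ U.image (fun u => u - a), ?_, ?_, ?_⟩
  · intro b hb
    rcases Finset.mem_union.1 hb with hb | hb
    · exact Finset.mem_Ioo.1 (g2 hb)
    · obtain ⟨u, hu, rfl⟩ := Finset.mem_image.1 hb
      have := Finset.mem_Ico.1 (g3 hu)
      have := hA a ha
      constructor <;> omega
  · intro i h0 h1
    by_cases hi : i ∈ U
    · exact ⟨a, ha, i - a, Finset.mem_union_right _ (Finset.mem_image_of_mem _ hi), by ring⟩
    · obtain ⟨a', ha', b, hb, e⟩ := g4 i (Finset.mem_Ico.2 ⟨h0, h1⟩) hi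
      exact ⟨a', ha', b, Finset.mem_union_left _ hb, e⟩
  · have hc1 : (B ∪ U.image (fun u => u - a)).card ≤ m + U.card :=
      (Finset.card_union_le _ _).trans (add_le_add g1 Finset.card_image_le)
    have hc : ((B ∪ U.image (fun u => u - a)).card : ℝ) ≤ m + U.card := by exact_mod_cast hc1
    have hm1 : (m : ℝ) < 2 * k * (Real.log ℓ / ℓ) + 1 := Nat.ceil_lt_add_one (by positivity)
    have hm2 : 2 * k * (Real.log ℓ / ℓ) ≤ m := Nat.le_ceil _
    have h0 : (0 : ℝ) ≤ 1 - ℓ / (2 * k) := by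
      rw [sub_nonneg, div_le_one (by positivity)]
      linarith
    have hp : (1 - (ℓ : ℝ) / (2 * k)) ^ m ≤ 1 / ℓ := by
      calc (1 - (ℓ : ℝ) / (2 * k)) ^ m ≤ (Real.exp (-(ℓ / (2 * k)))) ^ m :=
            pow_le_pow_left₀ h0 (Real.one_sub_le_exp_neg _) m
        _ = Real.exp (-(m * (ℓ / (2 * k)))) := by
            rw [← Real.exp_nat_mul]; ring_nf
        _ ≤ Real.exp (-Real.log ℓ) := by
            apply Real.exp_le_exp.2
            apply neg_le_neg
            calc Real.log ℓ = 2 * k * (Real.log ℓ / ℓ) * (ℓ / (2 * k)) := by field_simp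
              _ ≤ _ := by gcongr
        _ = 1 / ℓ := by rw [Real.exp_neg, Real.exp_log hℓ0, one_div]
    have hU : (U.card : ℝ) ≤ k / ℓ := by
      calc (U.card : ℝ) ≤ _ := g5
        _ ≤ k * (1 / ℓ) := by gcongr
        _ = k / ℓ := by ring
    have h1 : (1 : ℝ) ≤ k / ℓ := by rwa [one_le_div hℓ0]
    have h3 : (k : ℝ) / ℓ * (1 / 2) ≤ k / ℓ * Real.log ℓ := by gcongr
    have h4 : (k : ℝ) * (Real.log ℓ / ℓ) = k / ℓ * Real.log ℓ := by ring
    rw [mul_assoc, h4] at hm1 ⊢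
    linarith
end

section
/- There exists a constant c > 0 such that for every positive integer k there is a finite set of integers B_k ⊆ (−3ᵏ, 3ᵏ) with the following properties: every integer i with 0 ≤ i < 3ᵏ can be written as i = a + b with a ∈ C_k and b ∈ B_k, and |B_k| ≤ c · k · (3/2)ᵏ. -/
/-- `Ck k` is the set of integers `∑_{j<k} δⱼ 3^j` with each `δⱼ ∈ {0,1}`,
i.e. the integers in `[0, 3^k)` all of whose ternary digits are 0 or 1. -/
def Ck (k : ℕ) : Set ℤ :=
  {i | ∃ δ : ℕ → ℤ, (∀ j, δ j = 0 ∨ δ j = 1) ∧ i = ∑ j ∈ Finset.range k, δ j * 3 ^ j}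

lemma exists_fin (k : ℕ) : ∃ A : Finset ℤ, (∀ a ∈ A, a ∈ Ck k) ∧
    (∀ a ∈ A, 0 ≤ a ∧ a < 3 ^ k) ∧ A.card = 2 ^ k := by
  induction k with
  | zero =>
    refine ⟨{0}, ?_, ?_, ?_⟩
    · intro a ha
      simp only [Finset.mem_singleton] at ha
      exact ⟨fun _ => 0, by simp, by simp [ha]⟩
    · simp
    · simp
  | succ k ih =>
    obtain ⟨A, h1, h2, h3⟩ := ih
    have key : ∀ e : ℤ, (e = 0 ∨ e = 1) → ∀ a ∈ A, a + e * 3 ^ k ∈ Ck (k + 1) := by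
      intro e he a ha
      obtain ⟨δ, hδ, hs⟩ := h1 a ha
      refine ⟨fun j => if j = k then e else δ j, ?_, ?_⟩
      · intro j
        dsimp only
        split_ifs
        · exact he
        · exact hδ j
      · rw [Finset.sum_range_succ, hs]
        simp only [if_true]
        congr 1
        apply Finset.sum_congr rfl
        intro j hj
        have : j ≠ k := (Finset.mem_range.1 hj).ne
        simp [this]
    have h3k : (0 : ℤ) < 3 ^ k := by positivity
    refine ⟨A ∪ A.image (· + 3 ^ k), ?_, ?_, ?_⟩
    · intro a ha
      rcases Finset.mem_union.1 ha with h | h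
      · simpa using key 0 (Or.inl rfl) a h
      · obtain ⟨b, hb, rfl⟩ := Finset.mem_image.1 h
        simpa using key 1 (Or.inr rfl) b hb
    · intro a ha
      rw [pow_succ]
      rcases Finset.mem_union.1 ha with h | h
      · have := h2 a h
        constructor <;> linarith
      · obtain ⟨b, hb, rfl⟩ := Finset.mem_image.1 h
        have := h2 b hb
        constructor <;> linarith
    · rw [Finset.card_union_of_disjoint, Finset.card_image_of_injective _ (add_left_injective _), h3]
      · ring
      · rw [Finset.disjoint_left]
        intro a ha h
        obtain ⟨b, hb, rfl⟩ := Finset.mem_image.1 h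
        have h4 := h2 b hb
        have h5 := h2 _ ha
        linarith

lemma greedy {α β : Type*} [DecidableEq β] (r : α → β → Prop) [∀ x y, Decidable (r x y)]
    (X : Finset α) (Y : Finset β) (p : ℝ) (d : ℕ)
    (hd : ∀ x ∈ X, d ≤ (Y.filter (fun y => r x y)).card)
    (hp : p * Y.card ≤ d) (hp1 : p ≤ 1) (hY : Y.Nonempty) (t : ℕ) :
    ∃ B ⊆ Y, B.card ≤ t ∧
      ((X.filter (fun x => ∀ b ∈ B, ¬ r x b)).card : ℝ) ≤ X.card * (1 - p) ^ t := by
  induction t with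
  | zero =>
    refine ⟨∅, by simp, by simp, by simp⟩
  | succ t ih =>
    obtain ⟨B, hB, hc, hu⟩ := ih
    set U := X.filter (fun x => ∀ b ∈ B, ¬ r x b) with hU
    have : ∃ y ∈ Y, p * U.card ≤ ((U.filter (fun x => r x y)).card : ℝ) := by
      by_contra! hcon
      have h1 := Finset.sum_lt_sum_of_nonempty hY hcon
      have h2 : ∑ y ∈ Y, (U.filter (fun x => r x y)).card
          = ∑ x ∈ U, (Y.filter (fun y => r x y)).card :=
        (Finset.sum_card_bipartiteAbove_eq_sum_card_bipartiteBelow r).symm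
      have h3 : U.card * d ≤ ∑ x ∈ U, (Y.filter (fun y => r x y)).card := by
        rw [← smul_eq_mul]
        exact Finset.card_nsmul_le_sum _ _ _ (fun x hx => hd x (Finset.mem_filter.1 hx).1)
      rw [← h2] at h3
      have h4 : (U.card : ℝ) * d ≤ ∑ y ∈ Y, ((U.filter (fun x => r x y)).card : ℝ) := by
        exact_mod_cast h3
      rw [Finset.sum_const, nsmul_eq_mul] at h1
      have h5 : (U.card : ℝ) * (p * Y.card) ≤ U.card * d :=
        mul_le_mul_of_nonneg_left hp (Nat.cast_nonneg _)
      linarith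
    obtain ⟨y, hy, hyU⟩ := this
    refine ⟨insert y B, ?_, ?_, ?_⟩
    · exact Finset.insert_subset hy hB
    · exact (Finset.card_insert_le _ _).trans (by omega)
    · have e : X.filter (fun x => ∀ b ∈ insert y B, ¬ r x b) = U.filter (fun x => ¬ r x y) := by
        ext x
        simp only [hU, Finset.mem_filter, Finset.forall_mem_insert]
        tauto
      rw [e]
      have h6 : (U.filter (fun x => r x y)).card + (U.filter (fun x => ¬ r x y)).card = U.card :=
        Finset.card_filter_add_card_filter_not _
      have h7 : ((U.filter (fun x => r x y)).card : ℝ) + (U.filter (fun x => ¬ r x y)).card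
          = U.card := by exact_mod_cast h6
      have h8 : (U.card : ℝ) * (1 - p) ≤ X.card * (1 - p) ^ t * (1 - p) :=
        mul_le_mul_of_nonneg_right hu (by linarith)
      rw [pow_succ]
      linarith

/-- There is a constant `c > 0` such that for every positive integer `k` there is a
finite set of integers `B_k ⊆ (−3^k, 3^k)` with: every integer `0 ≤ i < 3^k` can be
written as `i = a + b` with `a ∈ C_k`, `b ∈ B_k`, and `|B_k| ≤ c · k · (3/2)^k`. -/
theorem complementary_blocks_exist :
    ∃ c : ℝ, 0 < c ∧ ∀ k : ℕ, 0 < k →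
      ∃ B : Finset ℤ,
        (∀ b ∈ B, -(3 : ℤ) ^ k < b ∧ b < (3 : ℤ) ^ k) ∧
        (∀ i : ℤ, 0 ≤ i → i < (3 : ℤ) ^ k → ∃ a ∈ Ck k, ∃ b ∈ B, i = a + b) ∧
        (B.card : ℝ) ≤ c * k * (3 / 2) ^ k := by
  refine ⟨5, by norm_num, ?_⟩
  intro k hk
  obtain ⟨A, hA1, hA2, hA3⟩ := exists_fin k
  have h3k : (0 : ℤ) < 3 ^ k := by positivity
  have hk1 : (1 : ℝ) ≤ k := by exact_mod_cast hk
  have h32 : (1 : ℝ) ≤ (3 / 2) ^ k := one_le_pow₀ (by norm_num)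
  have hinv : ((2 : ℝ) / 3) ^ k * (3 / 2) ^ k = 1 := by
    rw [← mul_pow]; norm_num
  have h23 : (0 : ℝ) < (2 / 3) ^ k := by positivity
  have h23' : ((2 : ℝ) / 3) ^ k ≤ 1 := pow_le_one₀ (by norm_num) (by norm_num)
  set t := ⌈4 * (k : ℝ) * (3 / 2) ^ k⌉₊ with ht
  have ht1 : 4 * (k : ℝ) * (3 / 2) ^ k ≤ t := Nat.le_ceil _
  have ht2 : (t : ℝ) < 4 * (k : ℝ) * (3 / 2) ^ k + 1 := Nat.ceil_lt_add_one (by positivity)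
  set p : ℝ := (2 / 3) ^ k / 2 with hp
  obtain ⟨B, hB, hBc, hBu⟩ := greedy (fun (x y : ℤ) => x - y ∈ A)
    (Finset.Ico (0 : ℤ) (3 ^ k)) (Finset.Ioo (-(3 : ℤ) ^ k) (3 ^ k)) p (2 ^ k)
    (by
      intro x hx
      rw [← hA3, ← Finset.card_image_of_injective A (sub_right_injective (b := x))]
      apply Finset.card_le_card
      intro y hy
      obtain ⟨a, ha, rfl⟩ := Finset.mem_image.1 hy
      have := hA2 a ha
      have hx := Finset.mem_Ico.1 hx
      simp only [Finset.mem_filter, Finset.mem_Ioo]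
      refine ⟨⟨by linarith, by linarith⟩, by simpa using ha⟩)
    (by
      have hc : ((Finset.Ioo (-(3 : ℤ) ^ k) (3 ^ k)).card : ℝ) ≤ 2 * 3 ^ k := by
        rw [Int.card_Ioo]
        have : (((3 : ℤ) ^ k - -3 ^ k - 1).toNat : ℤ) ≤ 2 * 3 ^ k := by
          rw [Int.toNat_of_nonneg (by linarith)]; linarith
        exact_mod_cast this
      calc p * _ ≤ p * (2 * 3 ^ k) := mul_le_mul_of_nonneg_left hc (by positivity)
        _ = (2 / 3 * 3) ^ k := by rw [hp, mul_pow]; ring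
        _ ≤ _ := by norm_num)
    (by linarith) ⟨0, by simp [h3k]⟩ t
  refine ⟨B, ?_, ?_, ?_⟩
  · intro b hb
    exact Finset.mem_Ioo.1 (hB hb)
  · have hX : ((Finset.Ico (0 : ℤ) (3 ^ k)).card : ℝ) = 3 ^ k := by
      rw [Int.card_Ico]
      have : (((3 : ℤ) ^ k - 0).toNat : ℤ) = 3 ^ k := by
        rw [Int.toNat_of_nonneg (by linarith)]; ring
      exact_mod_cast this
    have hpt : (1 - p) ^ t ≤ Real.exp (-(2 * k)) := by
      have h1 : 1 - p ≤ Real.exp (-p) := by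
        have := Real.add_one_le_exp (-p); linarith
      calc (1 - p) ^ t ≤ Real.exp (-p) ^ t := pow_le_pow_left₀ (by linarith) h1 t
        _ = Real.exp (t * -p) := (Real.exp_nat_mul _ _).symm
        _ ≤ _ := by
          apply Real.exp_le_exp.2
          have h2 := mul_le_mul_of_nonneg_right ht1 (show 0 ≤ p by positivity)
          have h3 : 4 * (k : ℝ) * (3 / 2) ^ k * p = 2 * k * ((2 / 3) ^ k * (3 / 2) ^ k) := by
            rw [hp]; ring
          rw [h3, hinv] at h2
          linarith
    have hlt : (3 : ℝ) ^ k * Real.exp (-(2 * k)) < 1 := by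
      have h4 : (3 : ℝ) * Real.exp (-2) < 1 := by
        have h5 : (3 : ℝ) < Real.exp 2 := by
          have := Real.add_one_lt_exp (x := 2) (by norm_num)
          linarith
        rw [Real.exp_neg, ← div_eq_mul_inv, div_lt_one (Real.exp_pos _)]
        exact h5
      have h6 : Real.exp (-(2 * (k : ℝ))) = Real.exp (-2) ^ k := by
        rw [← Real.exp_nat_mul]; congr 1; ring
      rw [h6, ← mul_pow]
      exact pow_lt_one₀ (by positivity) h4 hk.ne'
    rw [hX] at hBu
    have h7 := mul_le_mul_of_nonneg_left hpt (show (0 : ℝ) ≤ 3 ^ k by positivity)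
    have h8 := lt_of_le_of_lt (hBu.trans h7) hlt
    have h9 := Nat.cast_lt_one.1 h8
    rw [Finset.card_eq_zero] at h9
    intro i hi0 hi1
    have h10 := Finset.filter_eq_empty_iff.1 h9 (Finset.mem_Ico.2 ⟨hi0, hi1⟩)
    push Not at h10
    obtain ⟨b, hb, hbA⟩ := h10
    exact ⟨i - b, hA1 _ hbA, b, hb, by ring⟩
  · have : (B.card : ℝ) ≤ t := by exact_mod_cast hBc
    have h1 : (1 : ℝ) ≤ k * (3 / 2) ^ k := one_le_mul_of_one_le_of_one_le hk1 h32
    linarith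
end

section
/- For every ε > 0 there exists a compact set E ⊆ ℝ such that 𝒞 + E ⊇ [0,2] and the Hausdorff dimension of E is at most 1 − log 2/log 3 + ε. -/
open scoped Pointwise

lemma hh_digits (m : ℕ) : ∃ A : Finset ℤ, A.card = 2 ^ m ∧ (∀ a ∈ A, 0 ≤ a ∧ a < 3 ^ m) ∧
    ∀ a ∈ A, ∃ c : ℕ → ℝ, (∀ j, c j = 0 ∨ c j = 2) ∧
      (a : ℝ) / 3 ^ m = ∑ j ∈ Finset.range m, c j / 3 ^ (j + 1) := by
  induction m with
  | zero => exact ⟨{0}, by simp, by simp, by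
      intro a ha
      exact ⟨fun _ => 0, by simp, by simpa using ha⟩⟩
  | succ m ih =>
    obtain ⟨A, h1, h2, h3⟩ := ih
    refine ⟨A.image (fun a => 3 * a) ∪ A.image (fun a => 3 * a + 2), ?_, ?_, ?_⟩
    · rw [Finset.card_union_of_disjoint, Finset.card_image_of_injective,
        Finset.card_image_of_injective, h1]
      · ring
      · intro a b h; simp only at h; omega
      · intro a b h; simp only at h; omega
      · rw [Finset.disjoint_left]
        intro x hx hy
        simp only [Finset.mem_image] at hx hy
        obtain ⟨a, _, rfl⟩ := hx
        obtain ⟨b, _, hb⟩ := hy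
        omega
    · intro x hx
      simp only [Finset.mem_union, Finset.mem_image] at hx
      rw [pow_succ]
      obtain ⟨a, ha, rfl⟩ | ⟨a, ha, rfl⟩ := hx <;> have := h2 a ha <;> constructor <;> omega
    · have key : ∀ a ∈ A, ∀ e : ℝ, (e = 0 ∨ e = 2) → ∃ c : ℕ → ℝ, (∀ j, c j = 0 ∨ c j = 2) ∧
          (3 * (a : ℝ) + e) / 3 ^ (m + 1) = ∑ j ∈ Finset.range (m + 1), c j / 3 ^ (j + 1) := by
        intro a ha e he
        obtain ⟨c, hc, hs⟩ := h3 a ha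
        refine ⟨fun j => if j = m then e else c j, ?_, ?_⟩
        · intro j
          by_cases h : j = m <;> simp [h, hc, he]
        · rw [Finset.sum_range_succ]
          have : ∑ j ∈ Finset.range m, (if j = m then e else c j) / 3 ^ (j + 1)
              = ∑ j ∈ Finset.range m, c j / 3 ^ (j + 1) := by
            apply Finset.sum_congr rfl
            intro j hj
            rw [if_neg (Finset.mem_range.1 hj).ne]
          rw [this, ← hs]
          simp only [if_true]
          field_simp
          ring
      intro x hx
      simp only [Finset.mem_union, Finset.mem_image] at hx
      obtain ⟨a, ha, rfl⟩ | ⟨a, ha, rfl⟩ := hx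
      · simpa using key a ha 0 (Or.inl rfl)
      · simpa using key a ha 2 (Or.inr rfl)

lemma hh_greedy (N : ℕ) (hN : 0 < N) (A : Finset ℤ) (hA : ∀ a ∈ A, 0 ≤ a ∧ a < N)
    (hA2 : A.card ≤ 2 * N) (k : ℕ) :
    ∃ B : Finset ℤ, B.card ≤ k ∧ (∀ b ∈ B, |b| ≤ N) ∧
      (((Finset.Ico (0 : ℤ) N).filter (fun u => ∀ b ∈ B, u - b ∉ A)).card : ℝ) ≤
        N * (1 - A.card / (2 * N)) ^ k := by
  induction k with
  | zero =>
    refine ⟨∅, by simp, by simp, ?_⟩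
    simp
  | succ k ih =>
    obtain ⟨B, h1, h2, h3⟩ := ih
    set U := (Finset.Ico (0 : ℤ) N).filter (fun u => ∀ b ∈ B, u - b ∉ A) with hU
    set T := Finset.Ico (-(N : ℤ)) N with hT
    have hTc : T.card = 2 * N := by simp [hT]; omega
    have hsum : ∑ t ∈ T, (U.filter (fun u => u - t ∈ A)).card = U.card * A.card := by
      rw [← Finset.sum_const_nat (s := U) (m := A.card) (f := fun u => (T.filter (fun t => u - t ∈ A)).card)]
      · simp only [Finset.card_filter]
        exact Finset.sum_comm
      · intro u hu
        have hu' : 0 ≤ u ∧ u < N := by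
          have := (Finset.mem_filter.1 hu).1
          simpa using this
        apply Finset.card_bij (fun t _ => u - t)
        · intro t ht; exact (Finset.mem_filter.1 ht).2
        · intro t _ t' _ h; omega
        · intro a ha
          have := hA a ha
          refine ⟨u - a, ?_, by ring⟩
          simp only [hT, Finset.mem_filter, Finset.mem_Ico]
          refine ⟨by omega, by simpa using ha⟩
    obtain ⟨t, htT, ht⟩ : ∃ t ∈ T, (U.card * A.card : ℝ) / (2 * N) ≤
        ((U.filter (fun u => u - t ∈ A)).card : ℝ) := by
      apply Finset.exists_le_of_sum_le
      · exact ⟨0, by simp [hT]; omega⟩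
      · rw [Finset.sum_const, hTc, nsmul_eq_mul]
        have : ((∑ t ∈ T, (U.filter (fun u => u - t ∈ A)).card : ℕ) : ℝ) = U.card * A.card := by
          rw [hsum]; push_cast; ring
        rw [← Nat.cast_sum, this]
        push_cast
        have : (N : ℝ) ≠ 0 := by positivity
        apply le_of_eq
        field_simp
    refine ⟨insert t B, ?_, ?_, ?_⟩
    · exact (Finset.card_insert_le _ _).trans (by omega)
    · intro b hb
      rcases Finset.mem_insert.1 hb with rfl | hb
      · simp only [hT, Finset.mem_Ico] at htT
        rw [abs_le]; omega
      · exact h2 b hb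
    · have e : (Finset.Ico (0 : ℤ) N).filter (fun u => ∀ b ∈ insert t B, u - b ∉ A)
          = U.filter (fun u => ¬ (u - t ∈ A)) := by
        ext u
        simp only [hU, Finset.mem_filter, Finset.forall_mem_insert]
        tauto
      rw [e]
      have hs := Finset.card_filter_add_card_filter_not (s := U) (fun u => u - t ∈ A)
      have hs' : ((U.filter (fun u => u - t ∈ A)).card : ℝ) + ((U.filter (fun u => ¬ (u - t ∈ A))).card : ℝ) = U.card := by
        exact_mod_cast hs
      have hq : (0 : ℝ) ≤ 1 - A.card / (2 * N) := by
        rw [sub_nonneg, div_le_one (by positivity)]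
        exact_mod_cast hA2
      calc ((U.filter (fun u => ¬ (u - t ∈ A))).card : ℝ)
          ≤ U.card * (1 - A.card / (2 * N)) := by
            have : (U.card : ℝ) * (1 - A.card / (2 * N)) = U.card - (U.card * A.card : ℝ) / (2 * N) := by ring
            rw [this]; linarith
        _ ≤ (N * (1 - A.card / (2 * N)) ^ k) * (1 - A.card / (2 * N)) := by gcongr
        _ = _ := by ring

lemma hh_summ (N : ℕ) (hN : 2 ≤ N) (d : ℕ → ℝ) (hd : ∀ n, |d n| ≤ N) :
    Summable (fun n => d n / (N : ℝ) ^ (n + 1)) ∧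
    ∀ n, |∑' i, d (i + n) / (N : ℝ) ^ (i + n + 1)| ≤ 2 * ((N : ℝ) ^ n)⁻¹ := by
  have hN' : (2 : ℝ) ≤ N := by exact_mod_cast hN
  have hN0 : (0 : ℝ) < N := by linarith
  have hi : (N : ℝ)⁻¹ ≤ 1 / 2 := by
    rw [one_div]; exact inv_anti₀ (by norm_num) hN'
  have hi0 : 0 ≤ (N : ℝ)⁻¹ := by positivity
  have hb : ∀ n i, ‖d (i + n) / (N : ℝ) ^ (i + n + 1)‖ ≤ ((N : ℝ) ^ n)⁻¹ * (1 / 2) ^ i := by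
    intro n i
    rw [Real.norm_eq_abs, abs_div, abs_of_pos (by positivity : (0 : ℝ) < (N : ℝ) ^ (i + n + 1))]
    calc |d (i + n)| / (N : ℝ) ^ (i + n + 1) ≤ N / (N : ℝ) ^ (i + n + 1) := by
          gcongr; exact hd _
      _ = ((N : ℝ) ^ n)⁻¹ * (N : ℝ)⁻¹ ^ i := by
          rw [pow_add, pow_add, inv_pow]; field_simp
      _ ≤ _ := by gcongr
  have hg : ∀ n, HasSum (fun i : ℕ => ((N : ℝ) ^ n)⁻¹ * (1 / 2 : ℝ) ^ i) (((N : ℝ) ^ n)⁻¹ * 2) :=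
    fun n => hasSum_geometric_two.mul_left _
  refine ⟨Summable.of_norm_bounded (hg 0).summable (fun i => by simpa using hb 0 i), ?_⟩
  intro n
  rw [mul_comm]
  exact tsum_of_norm_bounded (hg n) (hb n)

lemma hh_dim (N : ℕ) (hN : 2 ≤ N) (B : Finset ℤ) (hB : ∀ b ∈ B, |b| ≤ N) (s : ℝ) (hs : 0 ≤ s)
    (hc : (B.card : ℝ) ≤ (N : ℝ) ^ s) :
    IsCompact (Set.range (fun d : ℕ → B => ∑' n, ((d n : ℤ) : ℝ) / (N : ℝ) ^ (n + 1))) ∧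
    dimH (Set.range (fun d : ℕ → B => ∑' n, ((d n : ℤ) : ℝ) / (N : ℝ) ^ (n + 1)))
      ≤ ENNReal.ofReal s := by
  have hN' : (2 : ℝ) ≤ N := by exact_mod_cast hN
  have hN0 : (0 : ℝ) < N := by linarith
  have hb : ∀ (d : ℕ → B) n, |((d n : ℤ) : ℝ)| ≤ N := by
    intro d n
    exact_mod_cast hB _ (d n).2
  constructor
  · apply isCompact_range
    apply continuous_tsum (u := fun n => N / (N : ℝ) ^ (n + 1))
    · intro n
      have : Continuous (fun b : B => ((b : ℤ) : ℝ) / (N : ℝ) ^ (n + 1)) := continuous_of_discreteTopology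
      exact this.comp (continuous_apply n)
    · exact (hh_summ N hN (fun _ => N) (by simp)).1
    · intro n d
      rw [Real.norm_eq_abs, abs_div, abs_of_pos (by positivity : (0 : ℝ) < (N : ℝ) ^ (n + 1))]
      gcongr
      exact hb d n
  · set F : (ℕ → B) → ℝ := fun d => ∑' n, ((d n : ℤ) : ℝ) / (N : ℝ) ^ (n + 1) with hF
    have hdist : ∀ n (d e : ℕ → B), (∀ i < n, d i = e i) → dist (F d) (F e) ≤ 4 * ((N : ℝ) ^ n)⁻¹ := by
      intro n d e h
      have h1 := hh_summ N hN (fun n => ((d n : ℤ) : ℝ)) (hb d)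
      have h2 := hh_summ N hN (fun n => ((e n : ℤ) : ℝ)) (hb e)
      have e1 := h1.1.sum_add_tsum_nat_add n
      have e2 := h2.1.sum_add_tsum_nat_add n
      have e3 : ∑ i ∈ Finset.range n, ((d i : ℤ) : ℝ) / (N : ℝ) ^ (i + 1)
          = ∑ i ∈ Finset.range n, ((e i : ℤ) : ℝ) / (N : ℝ) ^ (i + 1) := by
        apply Finset.sum_congr rfl
        intro i hi
        rw [h i (Finset.mem_range.1 hi)]
      have t1 := abs_le.1 (h1.2 n)
      have t2 := abs_le.1 (h2.2 n)
      simp only [hF]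
      rw [← e1, ← e2, e3, Real.dist_eq, abs_le]
      constructor <;> linarith [t1.1, t1.2, t2.1, t2.2]
    have hM : MeasureTheory.Measure.hausdorffMeasure s (Set.range F) ≤ ENNReal.ofReal (4 ^ s) := by
      have hdiam : ∀ (n : ℕ) (w : Fin n → B),
          Metric.ediam (F '' {d | ∀ i : Fin n, d i = w i}) ≤ ENNReal.ofReal (4 * ((N : ℝ) ^ n)⁻¹) := by
        intro n w
        apply Metric.ediam_le
        rintro _ ⟨d, hd, rfl⟩ _ ⟨e, he, rfl⟩
        rw [edist_dist]
        apply ENNReal.ofReal_le_ofReal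
        apply hdist
        intro i hi
        rw [hd ⟨i, hi⟩, he ⟨i, hi⟩]
      refine (MeasureTheory.Measure.hausdorffMeasure_le_liminf_sum (β := ℕ) (ι := fun n => Fin n → B) s (Set.range F)
        (l := Filter.atTop) (fun n => ENNReal.ofReal (4 * ((N : ℝ) ^ n)⁻¹)) ?_
        (fun n w => F '' {d | ∀ i : Fin n, d i = w i}) ?_ ?_).trans ?_
      · rw [← ENNReal.ofReal_zero]
        apply ENNReal.tendsto_ofReal
        have : Filter.Tendsto (fun n : ℕ => 4 * ((N : ℝ)⁻¹) ^ n) Filter.atTop (nhds (4 * 0)) := by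
          apply Filter.Tendsto.const_mul
          apply tendsto_pow_atTop_nhds_zero_of_lt_one (by positivity)
          exact inv_lt_one_of_one_lt₀ (by linarith)
        simpa using this
      · exact Filter.Eventually.of_forall hdiam
      · refine Filter.Eventually.of_forall (fun n => ?_)
        rintro _ ⟨d, rfl⟩
        exact Set.mem_iUnion.2 ⟨fun i => d i, d, fun i => rfl, rfl⟩
      · apply Filter.liminf_le_of_frequently_le'
        refine Filter.Frequently.of_forall (fun n => ?_)
        calc ∑ w : Fin n → B, Metric.ediam (F '' {d | ∀ i : Fin n, d i = w i}) ^ s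
            ≤ ∑ w : Fin n → B, (ENNReal.ofReal (4 * ((N : ℝ) ^ n)⁻¹)) ^ s := by
              gcongr; exact hdiam n _
          _ = ENNReal.ofReal ((B.card : ℝ) ^ n * (4 * ((N : ℝ) ^ n)⁻¹) ^ s) := by
              rw [Finset.sum_const, nsmul_eq_mul, ENNReal.ofReal_rpow_of_nonneg (by positivity) hs,
                ENNReal.ofReal_mul (by positivity)]
              congr 1
              simp [ENNReal.ofReal_pow]
          _ ≤ _ := by
              apply ENNReal.ofReal_le_ofReal
              rw [Real.mul_rpow (by norm_num) (by positivity), Real.inv_rpow (by positivity)]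
              have : ((N : ℝ) ^ n) ^ s = ((N : ℝ) ^ s) ^ n := by
                rw [← Real.rpow_natCast, ← Real.rpow_natCast, ← Real.rpow_mul hN0.le, ← Real.rpow_mul hN0.le, mul_comm]
              rw [this]
              have hp : (0 : ℝ) < ((N : ℝ) ^ s) ^ n := by positivity
              calc (B.card : ℝ) ^ n * (4 ^ s * (((N : ℝ) ^ s) ^ n)⁻¹)
                  ≤ ((N : ℝ) ^ s) ^ n * (4 ^ s * (((N : ℝ) ^ s) ^ n)⁻¹) := by gcongr
                _ = 4 ^ s := by field_simp
    have := dimH_le_of_hausdorffMeasure_ne_top (s := Set.range F) (d := s.toNNReal)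
      (by rw [Real.coe_toNNReal s hs]; exact (hM.trans_lt ENNReal.ofReal_lt_top).ne)
    exact this

lemma hh_block (m : ℕ) (hm : 0 < m) (c : ℕ → ℕ → ℝ) (hc : ∀ k j, c k j = 0 ∨ c k j = 2)
    (a : ℕ → ℝ) (ha : ∀ k, a k / 3 ^ m = ∑ j ∈ Finset.range m, c k j / 3 ^ (j + 1)) :
    ∑' k, a k / ((3 ^ m : ℕ) : ℝ) ^ (k + 1) ∈ ternaryCantorSet := by
  have : NeZero m := ⟨hm.ne'⟩
  refine ⟨fun n => c (n / m) (n % m), fun n => hc _ _, ?_⟩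
  have hs : Summable (fun n : ℕ => c (n / m) (n % m) / (3 : ℝ) ^ (n + 1)) := by
    have := (hh_summ 3 (by norm_num) (fun n => c (n / m) (n % m)) (by
      intro n; rcases hc (n / m) (n % m) with h | h <;> rw [h] <;> norm_num)).1
    simpa using this
  rw [← (Nat.divModEquiv m).symm.tsum_eq (fun n : ℕ => c (n / m) (n % m) / (3 : ℝ) ^ (n + 1)), Summable.tsum_prod]
  · apply tsum_congr
    intro k
    rw [tsum_fintype]
    have h1 : a k / ((3 ^ m : ℕ) : ℝ) ^ (k + 1) = (a k / 3 ^ m) * ((3 : ℝ) ^ (m * k))⁻¹ := by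
      push_cast
      rw [← pow_mul, mul_add, mul_one, pow_add]
      field_simp
    rw [h1, ha, Finset.sum_range, Finset.sum_mul]
    apply Finset.sum_congr rfl
    intro j _
    have e1 : (k * m + j) / m = k := by
      rw [mul_comm, Nat.mul_add_div hm, Nat.div_eq_of_lt j.2, add_zero]
    have e2 : (k * m + (j : ℕ)) % m = j := by
      rw [mul_comm, Nat.mul_add_mod, Nat.mod_eq_of_lt j.2]
    simp only [Nat.divModEquiv_symm_apply, e1, e2]
    rw [mul_comm k m, add_assoc, pow_add _ (m * k), div_mul_eq_div_div_swap, div_eq_mul_inv (c k j / _)]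
  · exact hs.comp_injective (Nat.divModEquiv m).symm.injective

lemma hh_num (ε : ℝ) (hε : 0 < ε) : ∃ m k : ℕ, 0 < m ∧
    (k : ℝ) ≤ ((3 ^ m : ℕ) : ℝ) ^ (1 - Real.log 2 / Real.log 3 + ε) ∧
    ((3 ^ m : ℕ) : ℝ) * (1 - ((2 ^ m : ℕ) : ℝ) / (2 * ((3 ^ m : ℕ) : ℝ))) ^ k < 1 := by
  have hR : 1 < (3 : ℝ) ^ ε := Real.one_lt_rpow (by norm_num) hε
  set R := (3 : ℝ) ^ ε with hRd
  have hR0 : 0 < R := by linarith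
  have hl3 : 0 < Real.log 3 := Real.log_pos (by norm_num)
  have hl : Real.log 3 ≤ 2 := by
    have := Real.log_le_sub_one_of_pos (show (0 : ℝ) < 3 by norm_num)
    linarith
  have ht := tendsto_pow_const_div_const_pow_of_one_lt 1 hR
  obtain ⟨m, hm1, hm⟩ := ((ht.eventually (gt_mem_nhds (show (0 : ℝ) < 1 / 5 by norm_num))).and
    (Filter.eventually_ge_atTop 1)).exists.imp (fun m h => And.intro h.2 h.1)
  have hmR : (1 : ℝ) + 4 * m < R ^ m := by
    rw [pow_one, div_lt_iff₀ (by positivity)] at hm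
    have : (1 : ℝ) ≤ m := by exact_mod_cast hm1
    linarith
  have hpow : ((3 ^ m : ℕ) : ℝ) ^ (1 - Real.log 2 / Real.log 3 + ε) = (3 / 2) ^ m * R ^ m := by
    push_cast
    rw [← Real.rpow_natCast, ← Real.rpow_mul (by norm_num), mul_comm, Real.rpow_mul (by norm_num),
      Real.rpow_natCast, ← mul_pow, Real.rpow_add (by norm_num), Real.rpow_sub (by norm_num), Real.rpow_one]
    have : (3 : ℝ) ^ (Real.log 2 / Real.log 3) = 2 := by
      rw [Real.rpow_def_of_pos (by norm_num), mul_div_cancel₀ _ hl3.ne', Real.exp_log (by norm_num)]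
    rw [this]
  refine ⟨m, ⌊((3 : ℝ) / 2) ^ m * R ^ m⌋₊, hm1, ?_, ?_⟩
  · rw [hpow]; exact Nat.floor_le (by positivity)
  · set k := ⌊((3 : ℝ) / 2) ^ m * R ^ m⌋₊
    have hk : ((3 : ℝ) / 2) ^ m * R ^ m < k + 1 := Nat.lt_floor_add_one _
    push_cast
    set x : ℝ := 2 ^ m / (2 * 3 ^ m) with hx
    have hx0 : 0 < x := by positivity
    have hxe : x * (3 / 2) ^ m = 1 / 2 := by
      rw [hx, div_pow]; field_simp
    have hx1 : x ≤ 1 / 2 := by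
      have : (1 : ℝ) ≤ (3 / 2) ^ m := one_le_pow₀ (by norm_num)
      nlinarith
    have hkx : (m : ℝ) * Real.log 3 < k * x := by
      have : x * ((3 / 2) ^ m * R ^ m) < x * (k + 1) := by gcongr
      rw [← mul_assoc, hxe] at this
      have : (m : ℝ) * Real.log 3 ≤ m * 2 := by gcongr
      linarith
    calc (3 : ℝ) ^ m * (1 - x) ^ k ≤ 3 ^ m * (Real.exp (-x)) ^ k := by
          gcongr
          · linarith
          · have := Real.add_one_le_exp (-x); linarith
      _ = Real.exp (m * Real.log 3 - k * x) := by
          rw [← Real.exp_nat_mul, Real.exp_sub, Real.exp_nat_mul (Real.log 3), Real.exp_log (by norm_num), mul_neg, Real.exp_neg]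
          rfl
      _ < 1 := by rw [Real.exp_lt_one_iff]; linarith

/-- For every `ε > 0` there is a compact set `E ⊆ ℝ` with `𝒞 + E ⊇ [0,2]` and
`dim_H E ≤ 1 − log 2 / log 3 + ε`. -/
theorem exists_compact_complement_set (ε : ℝ) (hε : 0 < ε) :
    ∃ E : Set ℝ, IsCompact E ∧ Set.Icc (0 : ℝ) 2 ⊆ ternaryCantorSet + E ∧
      dimH E ≤ ENNReal.ofReal (1 - Real.log 2 / Real.log 3 + ε) := by
  obtain ⟨m, k, hm, hk, hlt⟩ := hh_num ε hε
  obtain ⟨A, hA1, hA2, hA3⟩ := hh_digits m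
  have hN3 : 3 ≤ 3 ^ m := by
    calc 3 = 3 ^ 1 := by norm_num
      _ ≤ 3 ^ m := Nat.pow_le_pow_right (by norm_num) hm
  have h23 : 2 ^ m ≤ 3 ^ m := Nat.pow_le_pow_left (by norm_num) m
  obtain ⟨B, hB1, hB2, hB3⟩ := hh_greedy (3 ^ m) (by positivity) A
    (by intro a ha; exact_mod_cast hA2 a ha) (by rw [hA1]; omega) k
  rw [hA1] at hB3
  have hcov : ∀ u : ℤ, 0 ≤ u → u < (3 ^ m : ℕ) → ∃ b ∈ B, u - b ∈ A := by
    have h0 := hB3.trans_lt hlt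
    rw [Nat.cast_lt_one, Finset.card_eq_zero] at h0
    intro u hu0 hu1
    by_contra! hcon
    have : u ∈ (Finset.Ico (0 : ℤ) (3 ^ m : ℕ)).filter (fun u => ∀ b ∈ B, u - b ∉ A) := by
      simp only [Finset.mem_filter, Finset.mem_Ico]
      exact ⟨⟨hu0, hu1⟩, hcon⟩
    rw [h0] at this
    simp at this
  have hs : 0 ≤ 1 - Real.log 2 / Real.log 3 + ε := by
    have : Real.log 2 / Real.log 3 ≤ 1 := by
      rw [div_le_one (Real.log_pos (by norm_num))]
      exact Real.log_le_log (by norm_num) (by norm_num)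
    linarith
  obtain ⟨hE1, hE2⟩ := hh_dim (3 ^ m) (by omega) B hB2 _ hs (le_trans (by exact_mod_cast hB1) hk)
  set F : (ℕ → B) → ℝ := fun d => ∑' n, ((d n : ℤ) : ℝ) / ((3 ^ m : ℕ) : ℝ) ^ (n + 1) with hF
  refine ⟨⋃ i : Fin 3, (fun x => ((i : ℕ) : ℝ) + x) '' Set.range F, ?_, ?_, ?_⟩
  · apply isCompact_iUnion
    intro i
    exact hE1.image (by fun_prop)
  · intro x hx
    have hfl : ⌊x⌋₊ < 3 := by
      rw [Nat.floor_lt hx.1]; have := hx.2; norm_num; linarith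
    set y := x - ⌊x⌋₊ with hy
    have hy01 : y ∈ Set.Ico (0 : ℝ) 1 := by
      have h1 := Nat.floor_le hx.1
      have h2 := Nat.lt_floor_add_one x
      constructor <;> simp only [hy] <;> linarith
    have : NeZero (3 ^ m) := ⟨by positivity⟩
    have hd := Real.ofDigits_digits (b := 3 ^ m) (by omega) hy01
    set D := Real.digits y (3 ^ m)
    choose b hbB hbA using fun n => hcov ((D n : ℕ) : ℤ) (by positivity) (by exact_mod_cast (D n).2)
    choose c hc0 hc1 using fun n => hA3 _ (hbA n)
    have hC := hh_block m hm c hc0 (fun n => (((((D n : ℕ) : ℤ) - b n : ℤ)) : ℝ)) hc1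
    refine Set.mem_add.2 ⟨_, hC, ((⌊x⌋₊ : ℕ) : ℝ) + F (fun n => ⟨b n, hbB n⟩),
      Set.mem_iUnion.2 ⟨⟨⌊x⌋₊, hfl⟩, F (fun n => ⟨b n, hbB n⟩), ⟨_, rfl⟩, rfl⟩, ?_⟩
    have s1 := (hh_summ (3 ^ m) (by omega) (fun n => (((((D n : ℕ) : ℤ) - b n : ℤ)) : ℝ)) (by
      intro n
      have := hA2 _ (hbA n)
      rw [← Int.cast_abs, abs_of_nonneg this.1]
      exact_mod_cast this.2.le)).1
    have s2 := (hh_summ (3 ^ m) (by omega) (fun n => ((b n : ℤ) : ℝ)) (by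
      intro n
      exact_mod_cast hB2 _ (hbB n))).1
    have hsum : (∑' n, (((((D n : ℕ) : ℤ) - b n : ℤ)) : ℝ) / ((3 ^ m : ℕ) : ℝ) ^ (n + 1))
        + F (fun n => ⟨b n, hbB n⟩) = y := by
      rw [hF, ← s1.tsum_add s2, ← hd, Real.ofDigits]
      apply tsum_congr
      intro n
      simp only [Real.ofDigitsTerm]
      push_cast
      ring
    rw [add_left_comm, hsum, hy]
    ring
  · rw [dimH_iUnion]
    apply iSup_le
    intro i
    rw [(isometry_add_left ((i : ℕ) : ℝ)).dimH_image]
    exact hE2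
end

section
/- If E ⊆ ℝ is any set such that the sumset 𝒞 + E contains the interval [0,2], then the Hausdorff dimension of E is at least 1 − log 2/log 3. -/
open scoped Pointwise

open MeasureTheory in
theorem cantor_cover (n : ℕ) : ∃ P : Finset ℝ, P.card ≤ 2 ^ n ∧
    ∀ x ∈ ternaryCantorSet, ∃ p ∈ P, p ≤ x ∧ x ≤ p + (1 / 3) ^ n := by
  classical
  have hsum : ∀ a : ℕ → ℝ, (∀ n, a n = 0 ∨ a n = 2) →
      Summable (fun n : ℕ => a n / 3 ^ (n + 1)) ∧ 0 ≤ ∑' n : ℕ, a n / 3 ^ (n + 1) ∧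
      ∑' n : ℕ, a n / 3 ^ (n + 1) ≤ 1 := by
    intro a ha
    have hg : HasSum (fun n : ℕ => (2 / 3 : ℝ) * (1 / 3) ^ n) 1 := by
      have := (hasSum_geometric_of_lt_one (r := (1 / 3 : ℝ)) (by norm_num) (by norm_num)).mul_left
        (2 / 3)
      rwa [show (2 / 3 : ℝ) * (1 - 1 / 3)⁻¹ = 1 by norm_num] at this
    have h0 : ∀ n, 0 ≤ a n / 3 ^ (n + 1) := by
      intro n
      have : 0 ≤ a n := by rcases ha n with h | h <;> rw [h] <;> norm_num
      positivity
    have h1 : ∀ n, a n / 3 ^ (n + 1) ≤ (2 / 3 : ℝ) * (1 / 3) ^ n := by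
      intro n
      have : a n ≤ 2 := by rcases ha n with h | h <;> rw [h]; norm_num
      calc a n / 3 ^ (n + 1) ≤ 2 / 3 ^ (n + 1) := by gcongr
        _ = _ := by rw [pow_succ, div_pow, one_pow]; field_simp
    have hs : Summable (fun n : ℕ => a n / 3 ^ (n + 1)) := Summable.of_nonneg_of_le h0 h1 hg.summable
    refine ⟨hs, tsum_nonneg h0, ?_⟩
    rw [← hg.tsum_eq]
    exact hs.tsum_le_tsum h1 hg.summable
  induction n with
  | zero =>
    refine ⟨{0}, by simp, ?_⟩
    rintro x ⟨a, ha, rfl⟩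
    refine ⟨0, by simp, (hsum a ha).2.1, ?_⟩
    simpa using (hsum a ha).2.2
  | succ n ih =>
    obtain ⟨P, hP, h⟩ := ih
    refine ⟨P.image (fun p => p / 3) ∪ P.image (fun p => p / 3 + 2 / 3), ?_, ?_⟩
    · calc _ ≤ _ := Finset.card_union_le _ _
        _ ≤ P.card + P.card := add_le_add Finset.card_image_le Finset.card_image_le
        _ ≤ 2 ^ (n + 1) := by rw [pow_succ]; omega
    · rintro x ⟨a, ha, rfl⟩
      obtain ⟨p, hp, h1, h2⟩ := h (∑' n : ℕ, a (n + 1) / 3 ^ (n + 1))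
        ⟨fun n => a (n + 1), fun n => ha _, rfl⟩
      have key : ∑' n : ℕ, a n / 3 ^ (n + 1) =
          a 0 / 3 + (∑' n : ℕ, a (n + 1) / 3 ^ (n + 1)) / 3 := by
        rw [(hsum a ha).1.tsum_eq_zero_add, ← tsum_div_const]
        simp only [zero_add, pow_one]
        congr 1
        apply tsum_congr
        intro b
        rw [pow_succ 3 (b + 1), div_div]
      rw [key, pow_succ]
      rcases ha 0 with h0 | h0
      · refine ⟨p / 3, Finset.mem_union_left _ (Finset.mem_image_of_mem _ hp), ?_, ?_⟩ <;>
          rw [h0] <;> linarith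
      · refine ⟨p / 3 + 2 / 3, Finset.mem_union_right _
          (Finset.mem_image_of_mem (fun p => p / 3 + 2 / 3) hp), ?_, ?_⟩ <;>
          rw [h0] <;> linarith

open MeasureTheory in
theorem vol_bound (n : ℕ) (S : Set ℝ) (x : ℝ) (hS : S ⊆ Set.Icc (x - (1 / 3) ^ n) (x + (1 / 3) ^ n)) :
    volume (ternaryCantorSet + S) ≤ ENNReal.ofReal (3 * (2 / 3) ^ n) := by
  obtain ⟨P, hP, h⟩ := cantor_cover n
  have hsub : ternaryCantorSet + S ⊆
      ⋃ p ∈ P, Set.Icc (p + x - (1 / 3) ^ n) (p + x + 2 * (1 / 3) ^ n) := by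
    rintro _ ⟨c, hc, s, hs, rfl⟩
    obtain ⟨p, hp, h1, h2⟩ := h c hc
    obtain ⟨h3, h4⟩ := hS hs
    simp only [Set.mem_iUnion]
    refine ⟨p, hp, ?_, ?_⟩ <;> linarith
  calc _ ≤ _ := measure_mono hsub
    _ ≤ _ := measure_biUnion_finset_le _ _
    _ = ∑ p ∈ P, ENNReal.ofReal (3 * (1 / 3) ^ n) := by
        apply Finset.sum_congr rfl
        intro p _
        rw [Real.volume_Icc]
        congr 1
        ring
    _ = P.card * ENNReal.ofReal (3 * (1 / 3) ^ n) := by simp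
    _ ≤ ((2 ^ n : ℕ) : ENNReal) * ENNReal.ofReal (3 * (1 / 3) ^ n) := by gcongr
    _ = _ := by
        rw [← ENNReal.ofReal_natCast, ← ENNReal.ofReal_mul (by positivity)]
        congr 1
        push_cast
        rw [div_pow, div_pow]
        ring

theorem vol_bound' (S : Set ℝ) (hS : Metric.ediam S ≤ 1) :
    MeasureTheory.volume (ternaryCantorSet + S) ≤
      9 * Metric.ediam S ^ (1 - Real.log 2 / Real.log 3) := by
  have hl3 : 0 < Real.log 3 := Real.log_pos (by norm_num)
  have hl : Real.log 2 < Real.log 3 := Real.log_lt_log (by norm_num) (by norm_num)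
  have hl2 : 0 < Real.log 2 := Real.log_pos (by norm_num)
  set d := 1 - Real.log 2 / Real.log 3 with hd
  have hd0 : 0 < d := by
    rw [hd, sub_pos, div_lt_one hl3]; exact hl
  have hd1 : d ≤ 1 := by
    have : 0 ≤ Real.log 2 / Real.log 3 := by positivity
    linarith
  have h3d : (1 / 3 : ℝ) ^ d = 2 / 3 := by
    rw [Real.rpow_def_of_pos (by norm_num), one_div, Real.log_inv, hd]
    have : -Real.log 3 * (1 - Real.log 2 / Real.log 3) = Real.log 2 - Real.log 3 := by
      field_simp; ring
    rw [this, Real.exp_sub, Real.exp_log (by norm_num), Real.exp_log (by norm_num)]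
  rcases S.eq_empty_or_nonempty with rfl | ⟨x, hx⟩
  · simp
  have hfin : Metric.ediam S ≠ ⊤ := ne_top_of_le_ne_top (by simp) hS
  have hsub : ∀ n : ℕ, (Metric.ediam S).toReal ≤ (1 / 3) ^ n →
      S ⊆ Set.Icc (x - (1 / 3) ^ n) (x + (1 / 3) ^ n) := by
    intro n hn y hy
    have h1 : dist y x ≤ (Metric.ediam S).toReal := by
      rw [dist_edist]
      exact ENNReal.toReal_mono hfin (Metric.edist_le_ediam_of_mem hy hx)
    rw [Real.dist_eq] at h1
    have := abs_le.1 (h1.trans hn)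
    constructor <;> linarith [this.1, this.2]
  have hδ : Metric.ediam S = ENNReal.ofReal (Metric.ediam S).toReal :=
    (ENNReal.ofReal_toReal hfin).symm
  have hδ1 : (Metric.ediam S).toReal ≤ 1 := ENNReal.toReal_le_of_le_ofReal (by norm_num) (by simpa using hS)
  rcases (ENNReal.toReal_nonneg (a := Metric.ediam S)).eq_or_lt with h0 | hpos
  · have : MeasureTheory.volume (ternaryCantorSet + S) ≤ 0 := by
      have ht : Filter.Tendsto (fun n : ℕ => ENNReal.ofReal (3 * (2 / 3) ^ n)) Filter.atTop
          (nhds 0) := by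
        have := ENNReal.tendsto_ofReal ((tendsto_pow_atTop_nhds_zero_of_lt_one (r := (2 / 3 : ℝ))
          (by norm_num) (by norm_num)).const_mul 3)
        simpa using this
      refine ge_of_tendsto' ht fun n => vol_bound n S x (hsub n ?_)
      rw [← h0]; positivity
    exact this.trans zero_le
  · obtain ⟨n, hn1, hn2⟩ := exists_nat_pow_near_of_lt_one hpos hδ1 (y := (1 / 3 : ℝ))
      (by norm_num) (by norm_num)
    refine (vol_bound n S x (hsub n hn2)).trans ?_
    rw [hδ, ENNReal.ofReal_rpow_of_pos (by simpa using hpos),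
      show (9 : ENNReal) = ENNReal.ofReal 9 by norm_num, ← ENNReal.ofReal_mul (by norm_num)]
    apply ENNReal.ofReal_le_ofReal
    have h2 : ((1 / 3 : ℝ) ^ (n + 1)) ^ d ≤ (Metric.ediam S).toReal ^ d :=
      Real.rpow_le_rpow (by positivity) hn1.le hd0.le
    have h3 : ((1 / 3 : ℝ) ^ (n + 1)) ^ d = (2 / 3) ^ (n + 1) := by
      rw [← Real.rpow_natCast, ← Real.rpow_mul (by norm_num), mul_comm, Real.rpow_mul (by norm_num),
        h3d, Real.rpow_natCast]
    rw [h3, pow_succ] at h2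
    have : (0 : ℝ) < (2 / 3) ^ n := by positivity
    linarith

/-- The outer measure `S ↦ |𝒞 + S|`. -/
noncomputable def sumOuter : MeasureTheory.OuterMeasure ℝ where
  measureOf S := MeasureTheory.volume (ternaryCantorSet + S)
  empty := by simp
  mono h := MeasureTheory.measure_mono (Set.add_subset_add_left h)
  iUnion_nat s _ := by
    rw [Set.add_iUnion]
    exact MeasureTheory.measure_iUnion_le _

/-- If `𝒞 + E ⊇ [0,2]` then `dim_H E ≥ 1 − log 2 / log 3`. -/
theorem dimH_lower_of_sumset (E : Set ℝ) (hE : Set.Icc (0 : ℝ) 2 ⊆ ternaryCantorSet + E) :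
    ENNReal.ofReal (1 - Real.log 2 / Real.log 3) ≤ dimH E := by
  have hl3 : 0 < Real.log 3 := Real.log_pos (by norm_num)
  have hl : Real.log 2 < Real.log 3 := Real.log_lt_log (by norm_num) (by norm_num)
  have hd0 : 0 < 1 - Real.log 2 / Real.log 3 := by
    rw [sub_pos, div_lt_one hl3]; exact hl
  have h1 := MeasureTheory.OuterMeasure.le_mkMetric
    ((9 : ENNReal) • fun r : ENNReal => r ^ (1 - Real.log 2 / Real.log 3)) sumOuter 1 (by simp)
    (fun s hs => vol_bound' s hs)
  rw [MeasureTheory.OuterMeasure.mkMetric_smul _ (by simp) (by simp)] at h1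
  have h2 := h1 E
  have h3 : (2 : ENNReal) ≤ sumOuter E := by
    have := MeasureTheory.measure_mono (μ := MeasureTheory.volume) hE
    rw [Real.volume_Icc] at this
    refine le_trans ?_ this
    norm_num
  have h4 : MeasureTheory.Measure.hausdorffMeasure (1 - Real.log 2 / Real.log 3) E ≠ 0 := by
    intro h0
    rw [MeasureTheory.Measure.hausdorffMeasure, ← MeasureTheory.OuterMeasure.coe_mkMetric] at h0
    have h5 := h3.trans h2
    rw [smul_apply, h0] at h5
    simp at h5
  apply le_dimH_of_hausdorffMeasure_ne_zero (d := (1 - Real.log 2 / Real.log 3).toNNReal)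
  rwa [Real.coe_toNNReal _ hd0.le]
end

section
/- For every real number r ∈ [0,1) there exists a point t in the middle-thirds Cantor set 𝒞 such that the sum r + t admits a ternary expansion ∑_{n≥1} dₙ 3⁻ⁿ in which every digit dₙ lies in {1,2}. -/
/-- For every `r ∈ [0,1)` there is `t ∈ 𝒞` such that `r + t` admits a ternary
expansion all of whose digits lie in `{1, 2}`. -/
theorem exists_cantor_translate_digits_one_two (r : ℝ) (hr : r ∈ Set.Ico (0 : ℝ) 1) :
    ∃ t ∈ ternaryCantorSet, ∃ d : ℕ → ℝ,
      (∀ n, d n = 1 ∨ d n = 2) ∧ r + t = ∑' n : ℕ, d n / 3 ^ (n + 1) := by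
  have hs := Real.hasSum_ofDigitsTerm_digits r (b := 3) (by norm_num) hr
  generalize Real.digits r 3 = e at hs
  let f : ℕ → Fin 3 := fun n => if e n = 0 then 2 else 0
  have hf : Summable (Real.ofDigitsTerm f) := Real.summable_ofDigitsTerm
  have hfe : ∀ n, ((f n : ℕ) = 0 ∨ (f n : ℕ) = 2) ∧
      ((e n : ℕ) + (f n : ℕ) = 1 ∨ (e n : ℕ) + (f n : ℕ) = 2) := by
    intro n
    simp only [f]
    generalize e n = x
    revert x
    decide
  refine ⟨∑' n, Real.ofDigitsTerm f n, ⟨fun n => ((f n : ℕ) : ℝ), fun n => ?_, ?_⟩,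
    fun n => (((e n : ℕ) + (f n : ℕ) : ℕ) : ℝ), fun n => ?_, ?_⟩
  · rcases (hfe n).1 with h | h <;> simp only [h] <;> norm_num
  · simp [Real.ofDigitsTerm, div_eq_mul_inv]
  · rcases (hfe n).2 with h | h <;> simp only [h] <;> norm_num
  · rw [← (hs.add hf.hasSum).tsum_eq]
    refine tsum_congr fun n => ?_
    simp [Real.ofDigitsTerm, div_eq_mul_inv, add_mul]
end

section
/- Let D be a real number with 0 < D ≤ 1 and let n be a positive integer. Among all fractions r/s with r, s positive integers, s ≤ n, and r/s ≤ 1/D, let r/s be one attaining the maximal value. Then for every integer y with 1 ≤ y ≤ n, one has ⌊y/D⌋ = ⌊r·y/s⌋. -/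
/-- Let `0 < D ≤ 1`, let `n ≥ 1`, and let `r/s` attain the maximum of all
fractions `r'/s'` with `r', s'` positive integers, `s' ≤ n` and `r'/s' ≤ 1/D`.
Then `⌊y/D⌋ = ⌊r·y/s⌋` for every `1 ≤ y ≤ n`. -/
theorem floor_eq_of_best_rational_approx (D : ℝ) (hD0 : 0 < D) (hD1 : D ≤ 1)
    (n : ℕ) (hn : 0 < n) (r s : ℕ) (hr : 0 < r) (hs : 0 < s) (hsn : s ≤ n)
    (hle : (r : ℝ) / s ≤ 1 / D)
    (hmax : ∀ r' s' : ℕ, 0 < r' → 0 < s' → s' ≤ n → (r' : ℝ) / s' ≤ 1 / D →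
      (r' : ℝ) / s' ≤ (r : ℝ) / s) :
    ∀ y : ℕ, 1 ≤ y → y ≤ n → ⌊(y : ℝ) / D⌋ = ⌊((r : ℝ) * y) / s⌋ := by
  intro y hy hyn
  have hy0 : (0 : ℝ) < y := by exact_mod_cast hy
  have hy1 : (1 : ℝ) ≤ y := by exact_mod_cast hy
  have hyD : 0 ≤ (y : ℝ) / D := by positivity
  have h1 : 1 ≤ (y : ℝ) / D := by
    rw [le_div_iff₀ hD0]; linarith
  have hm : 0 < ⌊(y : ℝ) / D⌋₊ := Nat.floor_pos.mpr h1
  have hml : (⌊(y : ℝ) / D⌋₊ : ℝ) ≤ (y : ℝ) / D := Nat.floor_le hyD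
  have key := hmax _ y hm hy hyn (by
    rw [div_le_iff₀ hy0]
    calc _ ≤ (y : ℝ) / D := hml
      _ = 1 / D * y := by ring)
  rw [div_le_iff₀ hy0] at key
  have e : ((r : ℝ) * y) / s = (r : ℝ) / s * y := by ring
  apply le_antisymm
  · rw [Int.le_floor, ← natCast_floor_eq_intCast_floor hyD, e]
    exact key
  · apply Int.floor_le_floor
    rw [e]
    calc (r : ℝ) / s * y ≤ 1 / D * y := mul_le_mul_of_nonneg_right hle hy0.le
      _ = (y : ℝ) / D := by ring
end

section
/- Let A be a set of positive integers having density D ∈ [0,1], i.e., lim_{n→∞} |A ∩ {1,…,n}|/n = D. Then the Hausdorff dimension of 𝒞_{Ā} is at least (1 − D) · log 2/log 3, where Ā denotes the complement of A in the positive integers. -/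
open Filter

/-- `𝒞_A`: reals `∑_{n≥1} aₙ 3⁻ⁿ` where each `aₙ ∈ {0,2}` and `aₙ = 2` only
for positions `n ∈ A`. -/
def cantorSetRestricted (A : Set ℕ) : Set ℝ :=
  {x | ∃ a : ℕ → ℝ, (∀ n, a n = 0 ∨ a n = 2) ∧ (∀ n, a n = 2 → (n + 1) ∈ A) ∧
    x = ∑' n : ℕ, a n / 3 ^ (n + 1)}

noncomputable def cgen (b : ℕ → Bool) : ℝ :=
  Real.ofDigits (fun i => cond (b i) (2 : Fin 3) 0)

lemma cgen_sep_aux (b b' : ℕ → Bool) (n : ℕ) (h : ∀ i < n, b i = b' i)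
    (h1 : b n = true) (h2 : b' n = false) :
    ((3 : ℝ) ^ (n + 1))⁻¹ ≤ cgen b - cgen b' := by
  unfold cgen
  rw [Real.ofDigits_eq_sum_add_ofDigits _ (n + 1),
    Real.ofDigits_eq_sum_add_ofDigits (fun i => cond (b' i) (2 : Fin 3) 0) (n + 1),
    Finset.sum_range_succ, Finset.sum_range_succ]
  have e : ∑ i ∈ Finset.range n, Real.ofDigitsTerm (fun i => cond (b i) (2 : Fin 3) 0) i
      = ∑ i ∈ Finset.range n, Real.ofDigitsTerm (fun i => cond (b' i) (2 : Fin 3) 0) i := by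
    refine Finset.sum_congr rfl fun i hi => ?_
    simp [Real.ofDigitsTerm, h i (Finset.mem_range.1 hi)]
  have l0 := Real.ofDigits_nonneg (fun i => (fun i => cond (b i) (2 : Fin 3) 0) (i + (n + 1)))
  have l1 := Real.ofDigits_le_one (fun i => (fun i => cond (b' i) (2 : Fin 3) 0) (i + (n + 1)))
  have t1 : Real.ofDigitsTerm (fun i => cond (b i) (2 : Fin 3) 0) n = 2 * ((3 : ℝ) ^ (n + 1))⁻¹ := by
    simp [Real.ofDigitsTerm, h1]
  have t2 : Real.ofDigitsTerm (fun i => cond (b' i) (2 : Fin 3) 0) n = 0 := by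
    simp [Real.ofDigitsTerm, h2]
  rw [e, t1, t2]
  have hp : 0 < ((3 : ℝ) ^ (n + 1))⁻¹ := by positivity
  push_cast
  nlinarith

lemma cgen_sep (b b' : ℕ → Bool) (n : ℕ) (h : ∀ i < n, b i = b' i) (hn : b n ≠ b' n) :
    ((3 : ℝ) ^ (n + 1))⁻¹ ≤ |cgen b - cgen b'| := by
  cases h1 : b n
  · have h2 : b' n = true := by
      cases h2 : b' n
      · simp_all
      · rfl
    rw [abs_sub_comm]
    exact (cgen_sep_aux b' b n (fun i hi => (h i hi).symm) h2 h1).trans (le_abs_self _)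
  · have h2 : b' n = false := by
      cases h2 : b' n
      · rfl
      · simp_all
    exact (cgen_sep_aux b b' n h h1 h2).trans (le_abs_self _)

lemma cgen_inj : Function.Injective cgen := by
  intro b b' hb
  by_contra hne
  have hex : ∃ n, b n ≠ b' n := Function.ne_iff.1 hne
  classical
  have := cgen_sep b b' (Nat.find hex) (fun i hi => not_not.1 (Nat.find_min hex hi))
    (Nat.find_spec hex)
  rw [hb, sub_self, abs_zero] at this
  have hp : 0 < ((3 : ℝ) ^ (Nat.find hex + 1))⁻¹ := by positivity
  linarith

lemma mem_cantor_iff (B : Set ℕ) (x : ℝ) :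
    x ∈ cantorSetRestricted B ↔ ∃ b : ℕ → Bool, (∀ n, b n = true → n + 1 ∈ B) ∧ cgen b = x := by
  constructor
  · rintro ⟨a, h0, h1, rfl⟩
    classical
    refine ⟨fun n => decide (a n = 2), fun n hn => h1 n (by simpa using hn), ?_⟩
    unfold cgen Real.ofDigits
    refine tsum_congr fun n => ?_
    rcases h0 n with h | h <;> simp [Real.ofDigitsTerm, h, div_eq_mul_inv]
  · rintro ⟨b, h, rfl⟩
    refine ⟨fun n => cond (b n) 2 0, fun n => ?_, fun n hn => h n ?_, ?_⟩
    · cases h : b n <;> simp [h]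
    · cases hb : b n <;> simp_all
    · unfold cgen Real.ofDigits
      refine tsum_congr fun n => ?_
      cases h : b n <;> simp [Real.ofDigitsTerm, h, div_eq_mul_inv]

open Classical in
lemma count_add (A : Set ℕ) (n : ℕ) :
    (A ∩ Set.Icc 1 n).ncard + Nat.count (fun k => k + 1 ∉ A) n = n := by
  have h1 : A ∩ Set.Icc 1 n =
      (((Finset.range n).filter (fun k => k + 1 ∈ A)).image (fun k => k + 1) : Finset ℕ) := by
    ext m
    simp only [Set.mem_inter_iff, Set.mem_Icc, Finset.coe_image, Set.mem_image, Finset.mem_coe,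
      Finset.mem_filter, Finset.mem_range]
    constructor
    · rintro ⟨h, h1, h2⟩
      exact ⟨m - 1, ⟨by omega, by rwa [Nat.sub_add_cancel h1]⟩, by omega⟩
    · rintro ⟨k, ⟨h, h1⟩, rfl⟩
      exact ⟨h1, by omega, by omega⟩
  rw [h1, Set.ncard_coe_finset, Finset.card_image_of_injective _ (add_left_injective 1),
    Nat.count_eq_card_filter_range, Finset.card_filter_add_card_filter_not, Finset.card_range]

open Classical in
lemma growth (A : Set ℕ) (D r : ℝ) 
    (hdens : Tendsto (fun n : ℕ => ((A ∩ Set.Icc 1 n).ncard : ℝ) / n) atTop (nhds D))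
    (hr : r * Real.log 3 < (1 - D) * Real.log 2) :
    ∀ᶠ n : ℕ in atTop, r * ((n : ℝ) + 1) * Real.log 3 ≤
      (Nat.count (fun k => k + 1 ∉ A) n : ℝ) * Real.log 2 := by
  have h1 : Tendsto (fun n : ℕ => (1 - ((A ∩ Set.Icc 1 n).ncard : ℝ) / n) * Real.log 2
      - r * (1 + 1 / (n : ℝ)) * Real.log 3) atTop
      (nhds ((1 - D) * Real.log 2 - r * (1 + 0) * Real.log 3)) :=
    ((tendsto_const_nhds.sub hdens).mul_const _).sub
      (((tendsto_const_nhds.add tendsto_one_div_atTop_nhds_zero_nat).const_mul r).mul_const _)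
  have h2 : 0 < (1 - D) * Real.log 2 - r * (1 + 0) * Real.log 3 := by linarith
  filter_upwards [h1.eventually (lt_mem_nhds h2), eventually_gt_atTop 0] with n hn hpos
  have hn0 : (0 : ℝ) < n := by exact_mod_cast hpos
  have e : ((A ∩ Set.Icc 1 n).ncard : ℝ) + Nat.count (fun k => k + 1 ∉ A) n = n := by
    exact_mod_cast count_add A n
  have e2 : ((A ∩ Set.Icc 1 n).ncard : ℝ) = n - Nat.count (fun k => k + 1 ∉ A) n := by linarith
  rw [e2] at hn
  have := mul_pos hn hn0
  have e3 : ((1 - ((n : ℝ) - (Nat.count (fun k => k + 1 ∉ A) n : ℝ)) / n) * Real.log 2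
      - r * (1 + 1 / (n : ℝ)) * Real.log 3) * n
      = (Nat.count (fun k => k + 1 ∉ A) n : ℝ) * Real.log 2 - r * ((n : ℝ) + 1) * Real.log 3 := by
    field_simp
    ring
  linarith

open Classical in
lemma main_lower (A : Set ℕ) (D : ℝ) (r : NNReal) (hr0 : 0 < r)
    (hdens : Tendsto (fun n : ℕ => ((A ∩ Set.Icc 1 n).ncard : ℝ) / n) atTop (nhds D))
    (hr : r * Real.log 3 < (1 - D) * Real.log 2) :
    (r : ENNReal) ≤ dimH (cantorSetRestricted {m : ℕ | 0 < m ∧ m ∉ A}) := by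
  set p : ℕ → Prop := fun k => k + 1 ∉ A with hp
  obtain ⟨N, hN⟩ := eventually_atTop.1 (growth A D r hdens hr)
  have hr0' : (0 : ℝ) < r := hr0
  have l2 : 0 < Real.log 2 := Real.log_pos (by norm_num)
  have l3 : 0 < Real.log 3 := Real.log_pos (by norm_num)
  have hinf : (Set.ofPred p).Infinite := by
    intro hfin
    have hb : ∀ n, (Nat.count p n : ℝ) ≤ hfin.toFinset.card := by
      intro n
      rw [Nat.count_eq_card_filter_range]
      exact_mod_cast Finset.card_le_card (fun x hx => by
        simpa using (Finset.mem_filter.1 hx).2)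
    obtain ⟨M, hM⟩ := exists_nat_gt (hfin.toFinset.card * Real.log 2 / (r * Real.log 3))
    rw [div_lt_iff₀ (by positivity)] at hM
    have h1 := hN (max N M) (le_max_left _ _)
    have h2 := mul_le_mul_of_nonneg_right (hb (max N M)) l2.le
    have h3 : (M : ℝ) ≤ (max N M : ℕ) := by exact_mod_cast le_max_right _ _
    have h4 : 0 < (r : ℝ) * Real.log 3 := by positivity
    nlinarith
  -- the growth bound with a constant
  set C : ℝ := ((3 : ℝ) ^ (N + 1)) ^ (r : ℝ) with hC
  have hC1 : 1 ≤ C := Real.one_le_rpow (one_le_pow₀ (by norm_num)) r.coe_nonneg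
  have hbound : ∀ n, ((2 : ℝ) ^ (Nat.count p n))⁻¹ ≤ C * (((3 : ℝ) ^ (n + 1))⁻¹) ^ (r : ℝ) := by
    intro n
    have hpos : 0 < (((3 : ℝ) ^ (n + 1))⁻¹) ^ (r : ℝ) := by positivity
    rcases le_or_gt N n with h | h
    · have : ((2 : ℝ) ^ (Nat.count p n))⁻¹ ≤ (((3 : ℝ) ^ (n + 1))⁻¹) ^ (r : ℝ) := by
        rw [← Real.log_le_log_iff (by positivity) hpos, Real.log_rpow (by positivity),
          Real.log_inv, Real.log_inv, Real.log_pow, Real.log_pow]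
        have := hN n h
        push_cast
        linarith
      nlinarith
    · have : 1 ≤ C * (((3 : ℝ) ^ (n + 1))⁻¹) ^ (r : ℝ) := by
        rw [hC, ← Real.mul_rpow (by positivity) (by positivity)]
        apply Real.one_le_rpow _ r.coe_nonneg
        rw [← div_eq_mul_inv, one_le_div (by positivity)]
        exact pow_le_pow_right₀ (by norm_num) (by omega)
      exact (inv_le_one_of_one_le₀ (one_le_pow₀ (by norm_num))).trans this
  -- the map
  let F : (ℕ → Bool) → ℝ := fun b =>
    Real.ofDigits (fun k => cond (b (Nat.nth p k)) (1 : Fin 2) 0)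
  let f : ℝ → ℝ := fun x => F (Function.invFun cgen x)
  have hf : ∀ b, f (cgen b) = F b := fun b => by
    simp only [f, Function.leftInverse_invFun cgen_inj b]
  have hhol : HolderOnWith (Real.toNNReal C) r f
      (cantorSetRestricted {m : ℕ | 0 < m ∧ m ∉ A}) := by
    intro x hx y hy
    obtain ⟨b, -, rfl⟩ := (mem_cantor_iff _ _).1 hx
    obtain ⟨b', -, rfl⟩ := (mem_cantor_iff _ _).1 hy
    rw [hf, hf]
    by_cases hbb : b = b'
    · subst hbb
      simp
    have hex : ∃ n, b n ≠ b' n := Function.ne_iff.1 hbb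
    set n := Nat.find hex
    have hlt : ∀ i < n, b i = b' i := fun i hi => not_not.1 (Nat.find_min hex hi)
    have h1 := cgen_sep b b' n hlt (Nat.find_spec hex)
    have h2 : |F b - F b'| ≤ ((2 : ℝ) ^ (Nat.count p n))⁻¹ := by
      have := Real.abs_ofDigits_sub_ofDigits_le
        (x := fun k => cond (b (Nat.nth p k)) (1 : Fin 2) 0)
        (y := fun k => cond (b' (Nat.nth p k)) (1 : Fin 2) 0) (n := Nat.count p n)
        (fun i hi => by
          simp only [hlt _ (Nat.nth_lt_of_lt_count hi)])
      exact_mod_cast this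
    have h3 : |F b - F b'| ≤ C * |cgen b - cgen b'| ^ (r : ℝ) := by
      refine h2.trans ((hbound n).trans ?_)
      gcongr
    rw [edist_dist, edist_dist, Real.dist_eq, Real.dist_eq,
      ENNReal.ofReal_rpow_of_nonneg (abs_nonneg _) r.coe_nonneg]
    change _ ≤ ENNReal.ofReal C * _
    rw [← ENNReal.ofReal_mul (by linarith)]
    exact ENNReal.ofReal_le_ofReal h3
  have hsurj : Set.Icc (0 : ℝ) 1 ⊆ f '' (cantorSetRestricted {m : ℕ | 0 < m ∧ m ∉ A}) := by
    intro y hy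
    obtain ⟨d, -, rfl⟩ := Real.ofDigits_SurjOn (b := 2) (by norm_num) hy
    let b : ℕ → Bool := fun n => decide (p n ∧ d (Nat.count p n) = 1)
    refine ⟨cgen b, (mem_cantor_iff _ _).2 ⟨b, fun n hn => ⟨Nat.succ_pos n, ?_⟩, rfl⟩, ?_⟩
    · exact (of_decide_eq_true hn).1
    · rw [hf]
      simp only [F]
      congr 1
      funext k
      have e1 : p (Nat.nth p k) := Nat.nth_mem_of_infinite hinf k
      have e2 : Nat.count p (Nat.nth p k) = k := Nat.count_nth_of_infinite hinf k
      have e3 : b (Nat.nth p k) = decide (d k = 1) := by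
        simp only [b, e2, e1, true_and]
      rw [e3]
      generalize d k = z
      fin_cases z <;> rfl
  have hdim := (dimH_mono hsurj).trans (hhol.dimH_image_le hr0)
  have h01 : dimH (Set.Icc (0 : ℝ) 1) = 1 := by
    rw [Real.dimH_of_nonempty_interior (by simp)]
    simp
  rw [h01, ENNReal.le_div_iff_mul_le (Or.inl (by simpa using hr0.ne')) (Or.inl (by simp)),
    one_mul] at hdim
  exact hdim

/-- If a set `A` of positive integers has density `D ∈ [0,1]`, then
`dim_H 𝒞_{Ā} ≥ (1 − D) · log 2 / log 3`, where `Ā` is the complement of `A`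
in the positive integers. -/
theorem dimH_cantorSetRestricted_compl_ge (A : Set ℕ) (hApos : ∀ a ∈ A, 0 < a)
    (D : ℝ) (hD : D ∈ Set.Icc (0 : ℝ) 1)
    (hdens : Tendsto (fun n : ℕ => ((A ∩ Set.Icc 1 n).ncard : ℝ) / n) atTop (nhds D)) :
    ENNReal.ofReal ((1 - D) * Real.log 2 / Real.log 3) ≤
      dimH (cantorSetRestricted {m : ℕ | 0 < m ∧ m ∉ A}) := by
  refine ENNReal.le_of_forall_nnreal_lt fun r hr => ?_
  rcases eq_or_lt_of_le (zero_le (a := r)) with h | h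
  · simp [← h]
  · refine main_lower A D r h hdens ?_
    have l3 : 0 < Real.log 3 := Real.log_pos (by norm_num)
    rw [← ENNReal.ofReal_coe_nnreal, ENNReal.ofReal_lt_ofReal_iff_of_nonneg r.coe_nonneg,
      lt_div_iff₀ l3] at hr
    exact hr
end

section
/- Let α be a real number with 1 − log 2/log 3 ≤ α < 1, let D = (1 − α)/(log 2/log 3), and let A = {⌊y/D⌋ : y a positive integer}. Then there exists a closed set E ⊆ ℝ such that 𝒞_A + E = [0,2] and the Hausdorff dimension of E is at most α. -/
open scoped Pointwise

lemma greedy_step (U R S : Finset ℕ) (hU : U.Nonempty)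
    (h : ∀ z ∈ R, ∀ s ∈ S, ∃ u ∈ U, s + u = z) :
    ∃ u ∈ U, (R.card * S.card : ℝ) ≤ U.card * (R.filter (fun z => ∃ s ∈ S, s + u = z)).card := by
  by_contra! hc
  have h1 : ∑ u ∈ U, (R.filter (fun z => ∃ s ∈ S, s + u = z)).card
      = ∑ z ∈ R, (U.filter (fun u => ∃ s ∈ S, s + u = z)).card := by
    have := Finset.sum_card_bipartiteAbove_eq_sum_card_bipartiteBelow (s := U) (t := R)
      (fun u z => ∃ s ∈ S, s + u = z)
    simpa [Finset.bipartiteAbove, Finset.bipartiteBelow] using this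
  have h2 : ∑ z ∈ R, S.card ≤ ∑ z ∈ R, (U.filter (fun u => ∃ s ∈ S, s + u = z)).card := by
    refine Finset.sum_le_sum fun z hz => ?_
    refine Finset.card_le_card_of_injOn (fun s => z - s) ?_ ?_
    · intro s hs
      obtain ⟨u, hu, hsu⟩ := h z hz s hs
      have : z - s = u := by omega
      simp only [Finset.coe_filter, Set.mem_ofPred_eq, this]
      exact ⟨hu, s, hs, hsu⟩
    · intro s hs s' hs' hss
      obtain ⟨u, hu, hsu⟩ := h z hz s hs
      obtain ⟨u', hu', hsu'⟩ := h z hz s' hs'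
      simp only at hss
      omega
  have h3 : ∑ u ∈ U, (U.card * (R.filter (fun z => ∃ s ∈ S, s + u = z)).card : ℝ)
      < ∑ u ∈ U, (R.card * S.card : ℝ) := Finset.sum_lt_sum_of_nonempty hU hc
  rw [← Finset.mul_sum] at h3
  simp only [Finset.sum_const, nsmul_eq_mul, smul_eq_mul] at h3 h2
  rw [← h1] at h2
  have h4 : (R.card * S.card : ℝ) ≤ ∑ u ∈ U, ((R.filter (fun z => ∃ s ∈ S, s + u = z)).card : ℝ) := by
    exact_mod_cast h2
  have : (0:ℝ) < U.card := by exact_mod_cast hU.card_pos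
  nlinarith

lemma greedy_s11 (U Z S : Finset ℕ) (hU : U.Nonempty) (hSU : S.card ≤ U.card)
    (h : ∀ z ∈ Z, ∀ s ∈ S, ∃ u ∈ U, s + u = z) (n : ℕ) :
    ∃ T ⊆ U, T.card ≤ n ∧ ((Z.filter (fun z => ¬ ∃ s ∈ S, ∃ t ∈ T, s + t = z)).card : ℝ)
      ≤ Z.card * (1 - S.card / U.card : ℝ) ^ n := by
  have hUp : (0:ℝ) < U.card := by exact_mod_cast hU.card_pos
  have hle : (0:ℝ) ≤ 1 - S.card / U.card := by
    rw [sub_nonneg, div_le_one hUp]; exact_mod_cast hSU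
  induction n with
  | zero => exact ⟨∅, by simp, by simp, by simp⟩
  | succ n ih =>
    obtain ⟨T, hT, hTn, hR⟩ := ih
    set R := Z.filter (fun z => ¬ ∃ s ∈ S, ∃ t ∈ T, s + t = z) with hRdef
    obtain ⟨u, hu, hcov⟩ := greedy_step U R S hU
      (fun z hz => h z (Finset.mem_of_mem_filter z hz))
    refine ⟨insert u T, Finset.insert_subset hu hT,
      (Finset.card_insert_le _ _).trans (by omega), ?_⟩
    have h5 : (Z.filter (fun z => ¬ ∃ s ∈ S, ∃ t ∈ insert u T, s + t = z))
        ⊆ R.filter (fun z => ¬ ∃ s ∈ S, s + u = z) := by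
      intro z hz
      simp only [hRdef, Finset.mem_filter, Finset.mem_insert] at hz ⊢
      refine ⟨⟨hz.1, ?_⟩, ?_⟩
      · rintro ⟨s, hs, t, ht, e⟩; exact hz.2 ⟨s, hs, t, Or.inr ht, e⟩
      · rintro ⟨s, hs, e⟩; exact hz.2 ⟨s, hs, u, Or.inl rfl, e⟩
    have h6 := Finset.card_le_card h5
    have h7 := Finset.card_filter_add_card_filter_not (s := R) (fun z => ∃ s ∈ S, s + u = z)
    have h6' : ((Z.filter (fun z => ¬ ∃ s ∈ S, ∃ t ∈ insert u T, s + t = z)).card : ℝ) ≤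
      (R.filter (fun z => ¬ ∃ s ∈ S, s + u = z)).card := by exact_mod_cast h6
    have h7' : ((R.filter (fun z => ∃ s ∈ S, s + u = z)).card : ℝ) +
      (R.filter (fun z => ¬ ∃ s ∈ S, s + u = z)).card = R.card := by exact_mod_cast h7
    have h8 : (R.card : ℝ) * (S.card / U.card) ≤ (R.filter (fun z => ∃ s ∈ S, s + u = z)).card := by
      rw [← mul_div_assoc, div_le_iff₀ hUp]; linarith
    rw [pow_succ, ← mul_assoc]
    calc _ ≤ (R.card : ℝ) * (1 - S.card / U.card) := by linarith
      _ ≤ _ := by gcongr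

lemma greedy_cover (U Z S : Finset ℕ) (hU : U.Nonempty) (hSU : S.card ≤ U.card)
    (h : ∀ z ∈ Z, ∀ s ∈ S, ∃ u ∈ U, s + u = z) (n : ℕ)
    (hn : Z.card < Real.exp (n * (S.card / U.card))) :
    ∃ T ⊆ U, T.card ≤ n ∧ ∀ z ∈ Z, ∃ s ∈ S, ∃ t ∈ T, s + t = z := by
  obtain ⟨T, hT, hTn, hb⟩ := greedy_s11 U Z S hU hSU h n
  refine ⟨T, hT, hTn, ?_⟩
  have hUp : (0:ℝ) < U.card := by exact_mod_cast hU.card_pos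
  have hle : (0:ℝ) ≤ 1 - S.card / U.card := by
    rw [sub_nonneg, div_le_one hUp]; exact_mod_cast hSU
  have h1 : (1 - S.card / U.card : ℝ) ^ n ≤ Real.exp (-(n * (S.card / U.card))) := by
    have := Real.add_one_le_exp (-(S.card / U.card : ℝ))
    calc (1 - S.card / U.card : ℝ) ^ n ≤ (Real.exp (-(S.card / U.card : ℝ))) ^ n := by
          apply pow_le_pow_left₀ hle; linarith
      _ = _ := by rw [← Real.exp_nat_mul]; ring_nf
  have h2 : ((Z.filter (fun z => ¬ ∃ s ∈ S, ∃ t ∈ T, s + t = z)).card : ℝ) < 1 := by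
    calc _ ≤ _ := hb
      _ ≤ Z.card * Real.exp (-(n * (S.card / U.card))) := by gcongr
      _ < 1 := by
        rw [Real.exp_neg, ← div_eq_mul_inv, div_lt_one (Real.exp_pos _)]; exact hn
  have h3 : (Z.filter (fun z => ¬ ∃ s ∈ S, ∃ t ∈ T, s + t = z)).card = 0 := by
    have : (Z.filter (fun z => ¬ ∃ s ∈ S, ∃ t ∈ T, s + t = z)).card < 1 := by exact_mod_cast h2
    omega
  rw [Finset.card_eq_zero, Finset.filter_eq_empty_iff] at h3
  intro z hz
  simpa using h3 hz

lemma two_geom_lt (B : Finset ℕ) (k : ℕ) (h : ∀ i ∈ B, i < k) : 2 * ∑ i ∈ B, 3 ^ i < 3 ^ k := by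
  have h1 : ∑ i ∈ B, 3 ^ i ≤ ∑ i ∈ Finset.range k, 3 ^ i :=
    Finset.sum_le_sum_of_subset fun i hi => Finset.mem_range.2 (h i hi)
  have h2 : 2 * ∑ i ∈ Finset.range k, 3 ^ i + 1 = 3 ^ k := by
    induction' k with k ih generalizing B
    · simp
    · have := ih ∅ (by simp) (by simp)
      rw [Finset.sum_range_succ, pow_succ]; omega
  omega

lemma scale_cover (α D : ℝ) (hα : 0 ≤ α) (hαD : (2:ℝ) ^ D = 3 ^ (1 - α)) (X : Finset ℕ) (k : ℕ)
    (hX : D * k - 1 ≤ (X.filter (· < k)).card) :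
    ∃ T ⊆ Finset.range (3 ^ (k + 1)), (T.card : ℝ) ≤ 14 * (k + 1) * 3 ^ (α * k) ∧
      ∀ z, 3 ^ k ≤ z → z < 3 ^ (k + 1) → ∃ B ⊆ X.filter (· < k), ∃ t ∈ T,
        2 * ∑ i ∈ B, 3 ^ i + t = z := by
  classical
  set Y := X.filter (· < k) with hY
  let f : Finset ℕ → ℕ := fun B => 2 * ∑ i ∈ B, 3 ^ i
  have hf : Function.Injective f := by
    intro a b hab
    apply Finset.geomSum_injective (n := 3) (by norm_num)
    simp only [f] at hab ⊢
    omega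
  set S := Y.powerset.image f with hS
  have hScard : S.card = 2 ^ Y.card := by
    rw [hS, Finset.card_image_of_injective _ hf, Finset.card_powerset]
  have hlt : ∀ s ∈ S, s < 3 ^ k := by
    intro s hs
    obtain ⟨B, hB, rfl⟩ := Finset.mem_image.1 hs
    apply two_geom_lt
    intro i hi
    exact (Finset.mem_filter.1 (Finset.mem_powerset.1 hB hi)).2
  have h3k : 3 ^ (k + 1) = 3 * 3 ^ k := by ring
  have hSle : S.card ≤ 3 ^ (k+1) := by
    have : S ⊆ Finset.range (3 ^ (k + 1)) := fun s hs => Finset.mem_range.2 (by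
      have := hlt s hs
      omega)
    simpa using Finset.card_le_card this
  have hp : (0:ℝ) < 3 ^ (α * k) := by positivity
  have hp1 : (1:ℝ) ≤ 3 ^ (α * k) := Real.one_le_rpow (by norm_num) (by positivity)
  set n := ⌈12 * (k + 1) * (3:ℝ) ^ (α * k)⌉₊ with hn
  have hn1 : 12 * (k + 1) * (3:ℝ) ^ (α * k) ≤ n := Nat.le_ceil _
  have hn2 : (n : ℝ) < 12 * (k + 1) * (3:ℝ) ^ (α * k) + 1 := Nat.ceil_lt_add_one (by positivity)
  have hSr : (3:ℝ) ^ ((1 - α) * k) / 2 ≤ S.card := by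
    have e1 : (3:ℝ) ^ ((1 - α) * k) / 2 = 2 ^ (D * k - 1) := by
      rw [Real.rpow_sub (by norm_num), Real.rpow_mul (by norm_num), Real.rpow_mul (by norm_num), hαD]
      simp
    rw [e1, hScard]
    push_cast
    rw [← Real.rpow_natCast]
    exact Real.rpow_le_rpow_of_exponent_le (by norm_num) hX
  have hkey : (2 * (k + 1) : ℝ) ≤ n * (S.card / (3:ℝ) ^ (k + 1)) := by
    have e2 : (3:ℝ) ^ (α * k) * (3:ℝ) ^ ((1 - α) * k) = 3 ^ k := by
      rw [← Real.rpow_add (by norm_num), ← Real.rpow_natCast]; ring_nf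
    rw [← mul_div_assoc, le_div_iff₀ (by positivity)]
    calc (2 * (k + 1) : ℝ) * 3 ^ (k + 1) = (12 * (k + 1)) * (3 ^ k) / 2 := by ring
      _ = (12 * (k + 1) * (3:ℝ) ^ (α * k)) * ((3:ℝ) ^ ((1 - α) * k) / 2) := by rw [← e2]; ring
      _ ≤ n * S.card := by gcongr
  obtain ⟨T, hT, hTn, hcov⟩ := greedy_cover (Finset.range (3 ^ (k + 1)))
    (Finset.Ico (3 ^ k) (3 ^ (k + 1))) S ⟨0, by simp⟩ (by simpa using hSle) (by
      intro z hz s hs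
      have := hlt s hs
      rw [Finset.mem_Ico] at hz
      exact ⟨z - s, Finset.mem_range.2 (by omega), by omega⟩) n (by
      simp only [Nat.card_Ico, Finset.card_range]
      have h1 : ((3 ^ (k + 1) - 3 ^ k : ℕ) : ℝ) < 3 ^ (k + 1) := by
        have : 3 ^ (k + 1) - 3 ^ k < 3 ^ (k + 1) := by
          have : 0 < 3 ^ k := by positivity
          omega
        exact_mod_cast this
      refine h1.trans_le ?_
      calc (3:ℝ) ^ (k + 1) ≤ (Real.exp 2) ^ (k + 1) := by
            gcongr
            have := Real.add_one_le_exp (2:ℝ)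
            linarith
        _ = Real.exp (2 * (k + 1)) := by rw [← Real.exp_nat_mul]; push_cast; ring_nf
        _ ≤ _ := Real.exp_le_exp.2 (by push_cast; exact hkey))
  refine ⟨T, hT, ?_, ?_⟩
  · have : (T.card : ℝ) ≤ n := by exact_mod_cast hTn
    have hk : (0:ℝ) ≤ k := by positivity
    nlinarith [mul_nonneg hk hp.le]
  · intro z h1 h2
    obtain ⟨s, hs, t, ht, e⟩ := hcov z (Finset.mem_Ico.2 ⟨h1, h2⟩)
    obtain ⟨B, hB, rfl⟩ := Finset.mem_image.1 hs
    exact ⟨B, Finset.mem_powerset.1 hB, t, ht, e⟩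

lemma block_cover (α D : ℝ) (hα : 0 ≤ α) (hαD : (2:ℝ) ^ D = 3 ^ (1 - α)) (X : Finset ℕ) (L : ℕ)
    (hX : ∀ k < L, D * k - 1 ≤ (X.filter (· < k)).card) :
    ∃ T ⊆ Finset.range (3 ^ L), (T.card : ℝ) ≤ 15 * (L + 1) ^ 2 * 3 ^ (α * L) ∧
      ∀ z < 3 ^ L, ∃ B ⊆ X.filter (· < L), ∃ t ∈ T,
        2 * ∑ i ∈ B, 3 ^ i + t = z := by
  classical
  have hs : ∀ k, ∃ T : Finset ℕ, k < L → T ⊆ Finset.range (3 ^ (k + 1)) ∧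
      (T.card : ℝ) ≤ 14 * (k + 1) * 3 ^ (α * k) ∧
      ∀ z, 3 ^ k ≤ z → z < 3 ^ (k + 1) → ∃ B ⊆ X.filter (· < k), ∃ t ∈ T,
        2 * ∑ i ∈ B, 3 ^ i + t = z := by
    intro k
    by_cases hk : k < L
    · obtain ⟨T, h⟩ := scale_cover α D hα hαD X k (hX k hk)
      exact ⟨T, fun _ => h⟩
    · exact ⟨∅, fun h => absurd h hk⟩
  choose T hT using hs
  refine ⟨insert 0 ((Finset.range L).biUnion T), ?_, ?_, ?_⟩
  · apply Finset.insert_subset (by simp)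
    apply Finset.biUnion_subset.2
    intro k hk
    have hk := Finset.mem_range.1 hk
    refine (hT k hk).1.trans ?_
    intro x hx
    rw [Finset.mem_range] at hx ⊢
    exact hx.trans_le (Nat.pow_le_pow_right (by norm_num) hk)
  · have hp1 : (1:ℝ) ≤ 3 ^ (α * L) := Real.one_le_rpow (by norm_num) (by positivity)
    have h1 : (((Finset.range L).biUnion T).card : ℝ) ≤ ∑ k ∈ Finset.range L, ((T k).card : ℝ) := by
      exact_mod_cast Finset.card_biUnion_le
    have h2 : ∑ k ∈ Finset.range L, ((T k).card : ℝ) ≤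
        ∑ k ∈ Finset.range L, 14 * (L + 1) * (3:ℝ) ^ (α * L) := by
      refine Finset.sum_le_sum fun k hk => ?_
      have hk := Finset.mem_range.1 hk
      refine (hT k hk).2.1.trans ?_
      have : (k:ℝ) ≤ L := by exact_mod_cast hk.le
      gcongr
      norm_num
    have h3 : ((insert 0 ((Finset.range L).biUnion T)).card : ℝ) ≤
        ((Finset.range L).biUnion T).card + 1 := by exact_mod_cast Finset.card_insert_le _ _
    simp only [Finset.sum_const, Finset.card_range, nsmul_eq_mul] at h2
    have hL : (0:ℝ) ≤ L := by positivity
    have h4 : (1:ℝ) ≤ (L + 1) * 3 ^ (α * L) := by nlinarith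
    nlinarith [mul_nonneg hL (zero_le_one.trans h4)]
  · intro z hz
    rcases Nat.eq_zero_or_pos z with rfl | hz0
    · exact ⟨∅, by simp, 0, by simp, by simp⟩
    · set k := Nat.log 3 z
      have h1 : 3 ^ k ≤ z := Nat.pow_log_le_self 3 hz0.ne'
      have h2 : z < 3 ^ (k + 1) := Nat.lt_pow_succ_log_self (by norm_num) z
      have hk : k < L := (Nat.pow_lt_pow_iff_right (by norm_num)).1 (h1.trans_lt hz)
      obtain ⟨B, hB, t, ht, e⟩ := (hT k hk).2.2 z h1 h2
      refine ⟨B, ?_, t, ?_, e⟩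
      · intro i hi
        have := Finset.mem_filter.1 (hB hi)
        exact Finset.mem_filter.2 ⟨this.1, this.2.trans hk⟩
      · exact Finset.mem_insert_of_mem (Finset.mem_biUnion.2 ⟨k, Finset.mem_range.2 hk, ht⟩)

lemma beatty_count (D : ℝ) (hD0 : 0 < D) (hD1 : D ≤ 1) (A : Set ℕ)
    (hA : A = {m : ℕ | ∃ y : ℕ, 0 < y ∧ (m : ℤ) = ⌊(y : ℝ) / D⌋}) (q k : ℕ) (hk : k ≤ q)
    (X : Finset ℕ) (hX : ∀ i < k, q - i ∈ A → i ∈ X) :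
    D * k - 1 ≤ (X.filter (· < k)).card := by
  set a := ⌈D * (q - k + 1)⌉₊ with ha
  set b := ⌈D * (q + 1)⌉₊ with hb
  have hkq : (k:ℝ) ≤ q := by exact_mod_cast hk
  have ha1 : (a : ℝ) < D * (q - k + 1) + 1 := Nat.ceil_lt_add_one (by nlinarith)
  have ha2 : D * (q - k + 1) ≤ a := Nat.le_ceil _
  have hb1 : D * (q + 1) ≤ b := Nat.le_ceil _
  have hle : (Finset.Ico a b).card ≤ (X.filter (· < k)).card := by
    have key : ∀ y ∈ Finset.Ico a b, q - k + 1 ≤ ⌊(y:ℝ) / D⌋₊ ∧ ⌊(y:ℝ) / D⌋₊ ≤ q ∧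
        ⌊(y:ℝ) / D⌋₊ ∈ A := by
      intro y hy
      rw [Finset.mem_Ico] at hy
      have h1 : (a:ℝ) ≤ y := by exact_mod_cast hy.1
      have h2 : (y:ℝ) < D * (q + 1) := Nat.lt_ceil.1 hy.2
      have h0 : (0:ℝ) < y := by nlinarith
      refine ⟨?_, ?_, ?_⟩
      · apply Nat.le_floor
        rw [le_div_iff₀ hD0]
        push_cast [Nat.cast_sub hk]
        linarith
      · apply Nat.lt_succ_iff.1
        rw [Nat.floor_lt (by positivity), div_lt_iff₀ hD0]
        push_cast
        linarith
      · rw [hA]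
        refine ⟨y, by exact_mod_cast h0, ?_⟩
        exact Int.natCast_floor_eq_floor (by positivity)
    refine Finset.card_le_card_of_injOn (fun y => q - ⌊(y:ℝ) / D⌋₊) ?_ ?_
    · intro y hy
      obtain ⟨h1, h2, h3⟩ := key y hy
      simp only [Finset.coe_filter, Set.mem_ofPred_eq]
      have h4 : q - ⌊(y:ℝ) / D⌋₊ < k := by omega
      refine ⟨hX _ h4 ?_, h4⟩
      rwa [Nat.sub_sub_self h2]
    · have hmono : StrictMono (fun y : ℕ => ⌊(y:ℝ) / D⌋₊) := by
        apply strictMono_nat_of_lt_succ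
        intro y
        apply Nat.lt_of_succ_le
        apply Nat.le_floor
        have := Nat.floor_le (a := (y:ℝ) / D) (by positivity)
        have h1 : 1 ≤ 1 / D := by rw [le_div_iff₀ hD0]; linarith
        push_cast
        rw [add_div]
        linarith
      intro y hy y' hy' h
      obtain ⟨h1, h2, h3⟩ := key y hy
      obtain ⟨h1', h2', h3'⟩ := key y' hy'
      simp only at h
      apply hmono.injective
      simp only
      omega
  have hle' : ((Finset.Ico a b).card : ℝ) ≤ (X.filter (· < k)).card := by exact_mod_cast hle
  have : (b:ℝ) - a ≤ (Finset.Ico a b).card := by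
    rw [Nat.card_Ico]
    have : (b:ℝ) ≤ (b - a : ℕ) + a := by exact_mod_cast (by omega : b ≤ (b - a) + a)
    linarith
  linarith

lemma pow_sq_succ (j : ℕ) : (3:ℝ) ^ ((j + 1) ^ 2) = 3 ^ (2 * j + 1) * 3 ^ (j ^ 2) := by
  rw [← pow_add]; congr 1; ring

lemma digit_term_le (j t : ℕ) (ht : t < 3 ^ (2 * j + 1)) :
    (t : ℝ) / 3 ^ ((j + 1) ^ 2) ≤ 1 / 3 ^ (j ^ 2) - 1 / 3 ^ ((j + 1) ^ 2) := by
  have h : (t : ℝ) + 1 ≤ 3 ^ (2 * j + 1) := by exact_mod_cast ht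
  have : (1:ℝ) / 3 ^ (j ^ 2) = 3 ^ (2 * j + 1) / 3 ^ ((j + 1) ^ 2) := by
    rw [pow_sq_succ]; field_simp
  rw [this, ← sub_div]
  gcongr
  linarith

lemma digit_term_le_geom (j t : ℕ) (ht : t < 3 ^ (2 * j + 1)) :
    (t : ℝ) / 3 ^ ((j + 1) ^ 2) ≤ (1 / 3) ^ j := by
  refine (digit_term_le j t ht).trans ?_
  have h1 : (0:ℝ) ≤ 1 / 3 ^ ((j + 1) ^ 2) := by positivity
  have h2 : (1:ℝ) / 3 ^ (j ^ 2) ≤ (1 / 3) ^ j := by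
    rw [div_pow, one_pow]
    gcongr
    · norm_num
    · nlinarith
  linarith

lemma geom_summable : Summable (fun j : ℕ => (1 / 3 : ℝ) ^ j) :=
  summable_geometric_of_lt_one (by norm_num) (by norm_num)

lemma digit_summable (t : ℕ → ℕ) (ht : ∀ j, t j < 3 ^ (2 * j + 1)) :
    Summable (fun j => (t j : ℝ) / 3 ^ ((j + 1) ^ 2)) :=
  Summable.of_nonneg_of_le (fun j => by positivity) (fun j => digit_term_le_geom j _ (ht j))
    geom_summable

lemma digit_tsum_mem (t : ℕ → ℕ) (ht : ∀ j, t j < 3 ^ (2 * j + 1)) (n : ℕ) :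
    ∑' j, (t j : ℝ) / 3 ^ ((j + 1) ^ 2) ∈
      Set.Icc (∑ j ∈ Finset.range n, (t j : ℝ) / 3 ^ ((j + 1) ^ 2))
        (∑ j ∈ Finset.range n, (t j : ℝ) / 3 ^ ((j + 1) ^ 2) + 1 / 3 ^ (n ^ 2)) := by
  have hs := digit_summable t ht
  constructor
  · exact hs.sum_le_tsum _ (fun j _ => by positivity)
  · refine le_of_tendsto hs.hasSum.tendsto_sum_nat ?_
    filter_upwards [Filter.eventually_ge_atTop n] with m hm
    have : ∑ j ∈ Finset.range m, (t j : ℝ) / 3 ^ ((j + 1) ^ 2) ≤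
        ∑ j ∈ Finset.range n, (t j : ℝ) / 3 ^ ((j + 1) ^ 2) + 1 / 3 ^ (n ^ 2) - 1 / 3 ^ (m ^ 2) := by
      induction m, hm using Nat.le_induction with
      | base => simp
      | succ m hm ih =>
        rw [Finset.sum_range_succ]
        have := digit_term_le m (t m) (ht m)
        linarith
    have h1 : (0:ℝ) ≤ 1 / 3 ^ (m ^ 2) := by positivity
    linarith

/-- The compact complement on `[0,1]`. -/
def blockSet (T : ℕ → Finset ℕ) : Set ℝ :=
  Set.range (fun t : (∀ j, T j) => ∑' j, ((t j : ℕ) : ℝ) / 3 ^ ((j + 1) ^ 2))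

lemma blockSet_compact (T : ℕ → Finset ℕ) (hT : ∀ j, T j ⊆ Finset.range (3 ^ (2 * j + 1))) :
    IsCompact (blockSet T) := by
  apply isCompact_range
  refine continuous_tsum (u := fun j => (1 / 3 : ℝ) ^ j) ?_ geom_summable ?_
  · intro j
    have : Continuous (fun x : T j => ((x : ℕ) : ℝ) / 3 ^ ((j + 1) ^ 2)) :=
      continuous_of_discreteTopology
    exact this.comp (continuous_apply j)
  · intro j t
    rw [Real.norm_of_nonneg (by positivity)]
    exact digit_term_le_geom j _ (Finset.mem_range.1 (hT j (t j).2))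

lemma blockSet_subset (T : ℕ → Finset ℕ) (hT : ∀ j, T j ⊆ Finset.range (3 ^ (2 * j + 1))) :
    blockSet T ⊆ Set.Icc 0 1 := by
  rintro _ ⟨t, rfl⟩
  have := digit_tsum_mem (fun j => t j) (fun j => Finset.mem_range.1 (hT j (t j).2)) 0
  simpa using this

/-- Left end points at stage `n`. -/
noncomputable def leftEnds (T : ℕ → Finset ℕ) : ℕ → Finset ℝ
  | 0 => {0}
  | n + 1 => Finset.image₂ (fun p (t : ℕ) => p + (t : ℝ) / 3 ^ ((n + 1) ^ 2)) (leftEnds T n) (T n)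

lemma mem_leftEnds (T : ℕ → Finset ℕ) (t : ℕ → ℕ) (ht : ∀ j, t j ∈ T j) (n : ℕ) :
    ∑ j ∈ Finset.range n, (t j : ℝ) / 3 ^ ((j + 1) ^ 2) ∈ leftEnds T n := by
  induction n with
  | zero => simp [leftEnds]
  | succ n ih =>
    rw [Finset.sum_range_succ]
    exact Finset.mem_image₂_of_mem ih (ht n)

lemma card_leftEnds (T : ℕ → Finset ℕ) (α : ℝ)
    (hc : ∀ j, ((T j).card : ℝ) ≤ 15 * ((2 * j + 1 : ℕ) + 1) ^ 2 * 3 ^ (α * (2 * j + 1 : ℕ)))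
    (n : ℕ) : ((leftEnds T n).card : ℝ) ≤ (60 * n ^ 2) ^ n * 3 ^ (α * n ^ 2) := by
  induction n with
  | zero => simp [leftEnds]
  | succ n ih =>
    have h1 : ((leftEnds T (n + 1)).card : ℝ) ≤ (leftEnds T n).card * (T n).card := by
      have h0 : (leftEnds T (n + 1)).card ≤ (leftEnds T n).card * (T n).card :=
        Finset.card_image₂_le _ _ _
      exact_mod_cast h0
    have h2 := hc n
    have e : (3:ℝ) ^ (α * (n + 1 : ℕ) ^ 2) = 3 ^ (α * n ^ 2) * 3 ^ (α * (2 * n + 1 : ℕ)) := by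
      rw [← Real.rpow_add (by norm_num)]; congr 1; push_cast; ring
    calc _ ≤ _ := h1
      _ ≤ ((60 * n ^ 2) ^ n * 3 ^ (α * n ^ 2)) *
          (15 * ((2 * n + 1 : ℕ) + 1) ^ 2 * 3 ^ (α * (2 * n + 1 : ℕ))) := by gcongr
      _ = (60 * (n:ℝ) ^ 2) ^ n * (60 * (n + 1 : ℕ) ^ 2) * 3 ^ (α * (n + 1 : ℕ) ^ 2) := by
          rw [e]; push_cast; ring
      _ ≤ (60 * ((n + 1 : ℕ) : ℝ) ^ 2) ^ n * (60 * (n + 1 : ℕ) ^ 2) * 3 ^ (α * (n + 1 : ℕ) ^ 2) := by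
          gcongr
          omega
      _ = _ := by rw [← pow_succ]

lemma dimH_blockSet (T : ℕ → Finset ℕ) (hT : ∀ j, T j ⊆ Finset.range (3 ^ (2 * j + 1))) (α : ℝ)
    (hα : 0 ≤ α)
    (hc : ∀ j, ((T j).card : ℝ) ≤ 15 * ((2 * j + 1 : ℕ) + 1) ^ 2 * 3 ^ (α * (2 * j + 1 : ℕ))) :
    dimH (blockSet T) ≤ ENNReal.ofReal α := by
  refine le_of_forall_gt_imp_ge_of_dense fun a ha => ?_
  rcases eq_or_ne a ⊤ with rfl | hatop
  · exact le_top
  lift a to NNReal using hatop with d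
  have hd : α < d := by
    rw [ENNReal.ofReal_lt_coe_iff hα] at ha; exact ha
  apply dimH_le_of_hausdorffMeasure_ne_top
  have hdiam : ∀ (n : ℕ) (p : ℝ), Metric.ediam (Set.Icc p (p + 1 / 3 ^ (n ^ 2))) =
      ENNReal.ofReal (1 / 3 ^ (n ^ 2)) := by
    intro n p
    rw [Real.ediam_Icc]; congr 1; ring
  have hr0 : Filter.Tendsto (fun n : ℕ => ENNReal.ofReal (1 / 3 ^ (n ^ 2))) Filter.atTop
      (nhds 0) := by
    rw [← ENNReal.ofReal_zero]
    apply ENNReal.tendsto_ofReal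
    refine squeeze_zero (fun n => by positivity) (g := fun n => (1 / 3 : ℝ) ^ n) ?_
      (tendsto_pow_atTop_nhds_zero_of_lt_one (by norm_num) (by norm_num))
    intro n
    rw [div_pow, one_pow]
    gcongr
    · norm_num
    · nlinarith
  have hmain := MeasureTheory.Measure.hausdorffMeasure_le_liminf_sum (ι := fun n => leftEnds T n)
    (d : ℝ) (blockSet T) (l := Filter.atTop) (fun n : ℕ => ENNReal.ofReal (1 / 3 ^ (n ^ 2))) hr0
    (fun n p => Set.Icc (p : ℝ) (p + 1 / 3 ^ (n ^ 2)))
    (Filter.Eventually.of_forall fun n p => (hdiam n p).le)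
    (Filter.Eventually.of_forall fun n => by
      rintro _ ⟨t, rfl⟩
      have h1 := digit_tsum_mem (fun j => t j) (fun j => Finset.mem_range.1 (hT j (t j).2)) n
      have h2 := mem_leftEnds T (fun j => t j) (fun j => (t j).2) n
      exact Set.mem_iUnion.2 ⟨⟨_, h2⟩, h1⟩)
  refine ne_top_of_le_ne_top ENNReal.one_ne_top (hmain.trans ?_)
  have hr1 : |(3:ℝ) ^ (-(d - α))| < 1 := by
    rw [abs_of_pos (by positivity)]
    exact Real.rpow_lt_one_of_one_lt_of_neg (by norm_num) (by linarith)
  have hlim := (tendsto_pow_const_mul_const_pow_of_abs_lt_one 2 hr1).const_mul 60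
  rw [mul_zero] at hlim
  have hev : ∀ᶠ n : ℕ in Filter.atTop,
      ∑ p : leftEnds T n, Metric.ediam (Set.Icc (p : ℝ) (p + 1 / 3 ^ (n ^ 2))) ^ (d : ℝ) ≤ 1 := by
    filter_upwards [hlim.eventually (ge_mem_nhds one_pos)] with n hn
    simp only [hdiam, Finset.sum_const, nsmul_eq_mul, Finset.card_univ, Fintype.card_coe]
    rw [ENNReal.ofReal_rpow_of_nonneg (by positivity) d.coe_nonneg, ← ENNReal.ofReal_natCast,
      ← ENNReal.ofReal_mul (by positivity), ENNReal.ofReal_le_one]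
    calc ((leftEnds T n).card : ℝ) * (1 / 3 ^ (n ^ 2)) ^ (d:ℝ)
        ≤ (60 * n ^ 2) ^ n * 3 ^ (α * n ^ 2) * (1 / 3 ^ (n ^ 2)) ^ (d:ℝ) := by
          gcongr
          exact card_leftEnds T α hc n
      _ = (60 * (n ^ 2 * ((3:ℝ) ^ (-(d - α))) ^ n)) ^ n := by
          have e1 : ((1:ℝ) / 3 ^ (n ^ 2)) ^ (d:ℝ) = 3 ^ (-(d * n ^ 2 : ℝ)) := by
            rw [one_div, Real.inv_rpow (by positivity), ← Real.rpow_natCast 3 (n ^ 2),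
              ← Real.rpow_mul (by norm_num), ← Real.rpow_neg (by norm_num)]
            congr 1; push_cast; ring
          have e2 : (((3:ℝ) ^ (-(d - α))) ^ n) ^ n = 3 ^ (α * n ^ 2) * 3 ^ (-(d * n ^ 2 : ℝ)) := by
            rw [← Real.rpow_natCast, ← Real.rpow_natCast, ← Real.rpow_mul (by positivity),
              ← Real.rpow_mul (by positivity), ← Real.rpow_add (by norm_num)]
            congr 1; ring
          rw [← mul_assoc 60, mul_pow (60 * (n:ℝ) ^ 2) (((3:ℝ) ^ (-(d - α))) ^ n) n, e1, e2]; ring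
      _ ≤ 1 := pow_le_one₀ (by positivity) hn
  refine (Filter.liminf_le_liminf hev).trans ?_
  simp

lemma expansion_tendsto (x : ℝ) (hx0 : 0 ≤ x) (hx1 : x < 1) :
    ∃ d : ℕ → ℕ, (∀ j, d j < 3 ^ (2 * j + 1)) ∧
      Filter.Tendsto (fun n => ∑ j ∈ Finset.range n, (d j : ℝ) / 3 ^ ((j + 1) ^ 2))
        Filter.atTop (nhds x) := by
  let F : ℕ → ℕ := fun j => ⌊x * 3 ^ (j ^ 2)⌋₊
  have hF : ∀ j, F j = F (j + 1) / 3 ^ (2 * j + 1) := by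
    intro j
    simp only [F]
    rw [← Nat.floor_div_natCast]
    congr 1
    push_cast
    rw [pow_sq_succ]
    field_simp
  refine ⟨fun j => F (j + 1) % 3 ^ (2 * j + 1), fun j => Nat.mod_lt _ (by positivity), ?_⟩
  have hsum : ∀ n, ∑ j ∈ Finset.range n,
      ((F (j + 1) % 3 ^ (2 * j + 1) : ℕ) : ℝ) / 3 ^ ((j + 1) ^ 2) = (F n : ℝ) / 3 ^ (n ^ 2) := by
    intro n
    induction n with
    | zero =>
      have : F 0 = 0 := by simp [F, Nat.floor_eq_zero, hx1]
      simp [this]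
    | succ n ih =>
      rw [Finset.sum_range_succ, ih]
      have h1 := Nat.div_add_mod (F (n + 1)) (3 ^ (2 * n + 1))
      rw [← hF] at h1
      have h2 : (3:ℝ) ^ (2 * n + 1) * F n + (F (n + 1) % 3 ^ (2 * n + 1) : ℕ) = F (n + 1) := by
        exact_mod_cast h1
      rw [← h2, pow_sq_succ]
      field_simp
  simp only [hsum]
  have ht : Filter.Tendsto (fun n : ℕ => (3:ℝ) ^ (n ^ 2)) Filter.atTop Filter.atTop :=
    (tendsto_pow_atTop_atTop_of_one_lt (by norm_num)).comp
      (Filter.tendsto_pow_atTop (by norm_num))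
  exact (tendsto_nat_floor_mul_div_atTop hx0).comp ht

lemma cantor_summable (a : ℕ → ℝ) (ha : ∀ n, a n = 0 ∨ a n = 2) :
    Summable (fun n => a n / 3 ^ (n + 1)) := by
  refine Summable.of_nonneg_of_le (fun n => ?_) (fun n => ?_) geom_summable
  · rcases ha n with h | h <;> rw [h] <;> positivity
  · have : a n ≤ 3 := by rcases ha n with h | h <;> rw [h] <;> norm_num
    rw [div_le_iff₀ (by positivity), div_pow, one_pow, pow_succ]
    field_simp
    exact this

lemma cover_unit (A : Set ℕ) (T : ℕ → Finset ℕ)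
    (hT : ∀ j, T j ⊆ Finset.range (3 ^ (2 * j + 1)))
    (hcov : ∀ j, ∀ z < 3 ^ (2 * j + 1), ∃ B : Finset ℕ,
      (∀ i ∈ B, i < 2 * j + 1 ∧ (j + 1) ^ 2 - i ∈ A) ∧ ∃ t ∈ T j, 2 * ∑ i ∈ B, 3 ^ i + t = z)
    (x : ℝ) (hx0 : 0 ≤ x) (hx1 : x < 1) :
    ∃ c ∈ cantorSetRestricted A, ∃ e ∈ blockSet T, c + e = x := by
  obtain ⟨d, hd, hlim⟩ := expansion_tendsto x hx0 hx1
  choose B hB t ht hsum using fun j => hcov j (d j) (hd j)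
  let a : ℕ → ℝ := fun n => if (n.sqrt + 1) ^ 2 - 1 - n ∈ B n.sqrt then 2 else 0
  have ha : ∀ n, a n = 0 ∨ a n = 2 := by
    intro n
    simp only [a]
    split_ifs <;> simp
  refine ⟨∑' n, a n / 3 ^ (n + 1), ⟨a, ha, ?_, rfl⟩, _, ⟨fun j => ⟨t j, ht j⟩, rfl⟩, ?_⟩
  · intro n hn
    simp only [a] at hn
    split_ifs at hn with h
    · have h1 := (hB _ _ h).2
      have h2 : n < (n.sqrt + 1) ^ 2 := by rw [sq]; exact Nat.lt_succ_sqrt n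
      have h3 : (n.sqrt + 1) ^ 2 - ((n.sqrt + 1) ^ 2 - 1 - n) = n + 1 := by omega
      rwa [h3] at h1
    · norm_num at hn
  · have hts := digit_summable t (fun j => Finset.mem_range.1 (hT j (ht j)))
    have l1 := (cantor_summable a ha).hasSum.tendsto_sum_nat
    have l2 := hts.hasSum.tendsto_sum_nat
    have l3 : Filter.Tendsto (fun n : ℕ => n ^ 2) Filter.atTop Filter.atTop :=
      Filter.tendsto_pow_atTop (by norm_num)
    refine tendsto_nhds_unique ((l1.comp l3).add l2) ?_
    refine hlim.congr fun n => ?_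
    simp only [Function.comp]
    induction n with
    | zero => simp
    | succ j ih =>
      rw [Finset.sum_range_succ, ih, Finset.sum_range_succ]
      have e1 : (j + 1) ^ 2 = j ^ 2 + (2 * j + 1) := by ring
      have e2 : ∑ n ∈ Finset.range ((j + 1) ^ 2), a n / 3 ^ (n + 1) =
          ∑ n ∈ Finset.range (j ^ 2), a n / 3 ^ (n + 1) +
          (2 * ∑ i ∈ B j, (3:ℝ) ^ i) / 3 ^ ((j + 1) ^ 2) := by
        rw [e1, Finset.sum_range_add, ← e1]
        congr 1
        rw [← Finset.sum_range_reflect, Finset.mul_sum, Finset.sum_div]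
        have hsub : B j ⊆ Finset.range (2 * j + 1) := fun i hi =>
          Finset.mem_range.2 (hB j i hi).1
        rw [← Finset.sum_subset hsub (f := fun i => a (j ^ 2 + (2 * j + 1 - 1 - i)) /
          3 ^ (j ^ 2 + (2 * j + 1 - 1 - i) + 1))]
        · refine Finset.sum_congr rfl fun i hi => ?_
          have hi' := (hB j i hi).1
          have hsq : (j ^ 2 + (2 * j + 1 - 1 - i)).sqrt = j := by
            rw [sq]; exact Nat.sqrt_add_eq _ (by omega)
          have hidx : (j + 1) ^ 2 - 1 - (j ^ 2 + (2 * j + 1 - 1 - i)) = i := by omega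
          simp only [a, hsq, hidx, hi, if_true]
          have e3 : (j + 1) ^ 2 = (j ^ 2 + (2 * j + 1 - 1 - i) + 1) + i := by omega
          rw [e3, pow_add _ _ i]
          field_simp
        · intro i hi hni
          have hi' := Finset.mem_range.1 hi
          have hsq : (j ^ 2 + (2 * j + 1 - 1 - i)).sqrt = j := by
            rw [sq]; exact Nat.sqrt_add_eq _ (by omega)
          have hidx : (j + 1) ^ 2 - 1 - (j ^ 2 + (2 * j + 1 - 1 - i)) = i := by omega
          simp only [a, hsq, hidx, hni, if_false, zero_div]
      have e4 : (d j : ℝ) = 2 * ∑ i ∈ B j, (3:ℝ) ^ i + t j := by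
        rw [← hsum j]; push_cast; ring
      rw [e2, e4]
      ring

lemma assemble (A : Set ℕ) (E : Set ℝ) (hE : IsClosed E) (hsub : E ⊆ Set.Icc 0 1)
    (hcov : ∀ x : ℝ, 0 ≤ x → x < 1 → ∃ c ∈ cantorSetRestricted A, ∃ e ∈ E, c + e = x) :
    ∃ E' : Set ℝ, IsClosed E' ∧ cantorSetRestricted A + E' = Set.Icc (0 : ℝ) 2 ∧
      dimH E' ≤ dimH E := by
  classical
  let b : ℕ → ℝ := fun n => if n + 1 ∈ A then 2 else 0
  have hb : ∀ n, b n = 0 ∨ b n = 2 := by intro n; simp only [b]; split_ifs <;> simp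
  set m := ∑' n, b n / 3 ^ (n + 1) with hm
  have hbs := cantor_summable b hb
  have hm1 : m ≤ 1 := by
    have h2 := cantor_summable (fun _ => 2) (fun _ => Or.inr rfl)
    have h3 : ∑' n : ℕ, (2:ℝ) / 3 ^ (n + 1) = 1 := by
      have : (fun n : ℕ => (2:ℝ) / 3 ^ (n + 1)) = fun n => (2 / 3) * (1 / 3) ^ n := by
        funext n; rw [pow_succ, div_pow, one_pow]; field_simp
      rw [this, tsum_mul_left, tsum_geometric_of_lt_one (by norm_num) (by norm_num)]
      norm_num
    rw [← h3]
    refine hbs.tsum_le_tsum (fun n => ?_) h2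
    have : b n ≤ 2 := by rcases hb n with h | h <;> rw [h] <;> norm_num
    gcongr
  have hC0 : ∀ c ∈ cantorSetRestricted A, 0 ≤ c := by
    rintro c ⟨a, ha, haA, rfl⟩
    refine tsum_nonneg fun n => ?_
    rcases ha n with h | h <;> rw [h] <;> positivity
  have hrefl : ∀ c ∈ cantorSetRestricted A, m - c ∈ cantorSetRestricted A := by
    rintro c ⟨a, ha, haA, rfl⟩
    refine ⟨fun n => b n - a n, fun n => ?_, fun n hn => ?_, ?_⟩
    · by_cases h : n + 1 ∈ A
      · rcases ha n with h1 | h1 <;> simp [b, h, h1]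
      · have : a n = 0 := (ha n).resolve_right fun h1 => h (haA n h1)
        simp [b, h, this]
    · by_contra h
      have : a n = 0 := (ha n).resolve_right fun h1 => h (haA n h1)
      simp [b, h, this] at hn
    · rw [hm, ← hbs.tsum_sub (cantor_summable a ha)]
      simp only [sub_div]
  have h0 : (0:ℝ) ∈ cantorSetRestricted A := ⟨fun _ => 0, by simp, by simp, by simp⟩
  let g : ℝ ≃ᵢ ℝ := IsometryEquiv.subLeft (2 - m)
  have hg : ∀ x, g x = 2 - m - x := fun x => rfl
  refine ⟨E ∪ g '' E ∪ {1}, ?_, ?_, ?_⟩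
  · exact (hE.union (g.toHomeomorph.isClosedMap _ hE)).union isClosed_singleton
  · ext x
    constructor
    · rintro ⟨c, hc, e, he, rfl⟩
      have hc0 := hC0 c hc
      have hcm := hC0 _ (hrefl c hc)
      simp only [Set.mem_Icc]
      rcases he with (he | ⟨e, he, rfl⟩) | he
      · have := hsub he
        constructor <;> linarith [this.1, this.2]
      · have := hsub he
        rw [hg]
        constructor <;> linarith [this.1, this.2]
      · rw [Set.mem_singleton_iff.1 he]
        constructor <;> linarith
    · rintro ⟨hx0, hx2⟩
      rcases lt_trichotomy x 1 with hx | hx | hx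
      · obtain ⟨c, hc, e, he, h⟩ := hcov x hx0 hx
        exact ⟨c, hc, e, Or.inl (Or.inl he), h⟩
      · exact ⟨0, h0, 1, Or.inr rfl, by simp [hx]⟩
      · obtain ⟨c, hc, e, he, h⟩ := hcov (2 - x) (by linarith) (by linarith)
        refine ⟨m - c, hrefl c hc, g e, Or.inl (Or.inr ⟨e, he, rfl⟩), ?_⟩
        simp only [hg]
        linarith
  · rw [dimH_union, dimH_union, dimH_singleton, IsometryEquiv.dimH_image]
    simp

/-- Let `1 − log 2/log 3 ≤ α < 1`, `D = (1 − α)/(log 2/log 3)`, and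
`A = {⌊y/D⌋ : y a positive integer}`.  Then there is a closed set `E ⊆ ℝ` with
`𝒞_A + E = [0,2]` and `dim_H E ≤ α`. -/
theorem exists_closed_complement_for_cantorSetRestricted (α : ℝ)
    (hα₁ : 1 - Real.log 2 / Real.log 3 ≤ α) (hα₂ : α < 1)
    (D : ℝ) (hD : D = (1 - α) / (Real.log 2 / Real.log 3))
    (A : Set ℕ) (hA : A = {m : ℕ | ∃ y : ℕ, 0 < y ∧ (m : ℤ) = ⌊(y : ℝ) / D⌋}) :
    ∃ E : Set ℝ, IsClosed E ∧ cantorSetRestricted A + E = Set.Icc (0 : ℝ) 2 ∧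
      dimH E ≤ ENNReal.ofReal α := by
  have hl2 : 0 < Real.log 2 := Real.log_pos (by norm_num)
  have hl3 : 0 < Real.log 3 := Real.log_pos (by norm_num)
  have hl23 : Real.log 2 < Real.log 3 := Real.log_lt_log (by norm_num) (by norm_num)
  have hq0 : 0 < Real.log 2 / Real.log 3 := by positivity
  have hq1 : Real.log 2 / Real.log 3 < 1 := (div_lt_one hl3).2 hl23
  have hα0 : 0 ≤ α := by linarith
  have hD0 : 0 < D := by rw [hD]; exact div_pos (by linarith) hq0
  have hD1 : D ≤ 1 := by rw [hD, div_le_one hq0]; linarith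
  have hαD : (2:ℝ) ^ D = 3 ^ (1 - α) := by
    rw [Real.rpow_def_of_pos (by norm_num), Real.rpow_def_of_pos (by norm_num), hD]
    congr 1
    field_simp
  classical
  have hblock : ∀ j : ℕ, ∃ T ⊆ Finset.range (3 ^ (2 * j + 1)),
      (T.card : ℝ) ≤ 15 * ((2 * j + 1 : ℕ) + 1) ^ 2 * 3 ^ (α * (2 * j + 1 : ℕ)) ∧
      ∀ z < 3 ^ (2 * j + 1), ∃ B : Finset ℕ,
        (∀ i ∈ B, i < 2 * j + 1 ∧ (j + 1) ^ 2 - i ∈ A) ∧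
        ∃ t ∈ T, 2 * ∑ i ∈ B, 3 ^ i + t = z := by
    intro j
    obtain ⟨T, h1, h2, h3⟩ := block_cover α D hα0 hαD
      ((Finset.range (2 * j + 1)).filter (fun i => (j + 1) ^ 2 - i ∈ A)) (2 * j + 1) (by
        intro k hk
        refine beatty_count D hD0 hD1 A hA ((j + 1) ^ 2) k (by nlinarith) _ ?_
        intro i hi hiA
        exact Finset.mem_filter.2 ⟨Finset.mem_range.2 (by omega), hiA⟩)
    refine ⟨T, h1, h2, fun z hz => ?_⟩
    obtain ⟨B, hB, ht⟩ := h3 z hz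
    refine ⟨B, fun i hi => ?_, ht⟩
    have := Finset.mem_filter.1 (hB hi)
    exact ⟨this.2, (Finset.mem_filter.1 this.1).2⟩
  choose T hT hc hcov using hblock
  obtain ⟨E, hE, hsum, hdim⟩ := assemble A (blockSet T) (blockSet_compact T hT).isClosed
    (blockSet_subset T hT) (fun x hx0 hx1 => cover_unit A T hT hcov x hx0 hx1)
  exact ⟨E, hE, hsum, hdim.trans (dimH_blockSet T hT α hα0 hc)⟩
end

section
/- Let α be a real number with 1 − log 2/log 3 ≤ α < 1, let D = (1 − α)/(log 2/log 3), and let A = {⌊y/D⌋ : y a positive integer}. Then every set E ⊆ ℝ satisfying 𝒞_A + E ⊇ [0,2] has Hausdorff dimension at least α. -/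
open scoped Pointwise

lemma cantorAux_count (D : ℝ) (hD : 0 < D) (A : Set ℕ)
    (hA : A = {m : ℕ | ∃ y : ℕ, 0 < y ∧ (m : ℤ) = ⌊(y : ℝ) / D⌋}) (n : ℕ) :
    ∃ B : Finset ℕ, B.card ≤ ⌊D * (n + 1)⌋₊ ∧ ∀ k < n, k + 1 ∈ A → k ∈ B := by
  classical
  refine ⟨(Finset.Icc 1 ⌊D * (n + 1)⌋₊).image (fun y : ℕ => (⌊(y : ℝ) / D⌋ - 1).toNat), ?_, ?_⟩
  · exact Finset.card_image_le.trans (by simp)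
  · intro k hk hkA
    rw [hA] at hkA
    obtain ⟨y, hy, h⟩ := hkA
    refine Finset.mem_image.2 ⟨y, Finset.mem_Icc.2 ⟨hy, ?_⟩, ?_⟩
    · apply Nat.le_floor
      have h1 := Int.lt_floor_add_one ((y : ℝ) / D)
      rw [← h, div_lt_iff₀ hD] at h1
      have h2 : ((k : ℝ) + 1) ≤ n := by exact_mod_cast hk
      push_cast at h1
      nlinarith
    · rw [← h]; push_cast; simp

lemma cantorAux_cover (A : Set ℕ) (n : ℕ) (B : Finset ℕ) (hB : ∀ k < n, k + 1 ∈ A → k ∈ B)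
    (x : ℝ) (hx : x ∈ cantorSetRestricted A) :
    ∃ t ∈ B.powerset.image (fun F => ∑ k ∈ F, (2 : ℝ) / 3 ^ (k + 1)),
      t ≤ x ∧ x ≤ t + (1 / 3) ^ n := by
  classical
  obtain ⟨a, h0, h1, rfl⟩ := hx
  have hg : HasSum (fun k : ℕ => (2 : ℝ) / 3 ^ (k + 1)) 1 := by
    have := (hasSum_geometric_of_lt_one (r := (1 / 3 : ℝ)) (by norm_num) (by norm_num)).mul_left (2 / 3)
    have e : (fun k : ℕ => (2 : ℝ) / 3 ^ (k + 1)) = fun i => 2 / 3 * (1 / 3) ^ i := by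
      funext k
      rw [pow_succ, one_div, inv_pow]; field_simp
    rw [e]
    norm_num at this ⊢
    exact this
  have hn0 : ∀ k, 0 ≤ a k := fun k => by rcases h0 k with h | h <;> rw [h] <;> norm_num
  have hn2 : ∀ k, a k ≤ 2 := fun k => by rcases h0 k with h | h <;> rw [h] <;> norm_num
  have hs : Summable (fun k : ℕ => a k / 3 ^ (k + 1)) :=
    Summable.of_nonneg_of_le (fun k => div_nonneg (hn0 k) (by positivity))
      (fun k => div_le_div_of_nonneg_right (hn2 k) (by positivity)) hg.summable
  refine ⟨∑ k ∈ Finset.range n, a k / 3 ^ (k + 1), ?_, ?_, ?_⟩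
  · refine Finset.mem_image.2 ⟨(Finset.range n).filter (fun k => a k = 2), ?_, ?_⟩
    · rw [Finset.mem_powerset]
      intro k hk
      simp only [Finset.mem_filter, Finset.mem_range] at hk
      exact hB k hk.1 (h1 k hk.2)
    · rw [Finset.sum_filter]
      refine Finset.sum_congr rfl fun k _ => ?_
      rcases h0 k with h | h <;> simp [h]
  · exact hs.sum_le_tsum _ (fun k _ => div_nonneg (hn0 k) (by positivity))
  · rw [← hs.sum_add_tsum_nat_add n]
    gcongr
    have h2 : HasSum (fun k : ℕ => (1 / 3 : ℝ) ^ n * (2 / 3 ^ (k + 1))) ((1 / 3) ^ n) := by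
      simpa using hg.mul_left ((1 / 3 : ℝ) ^ n)
    rw [← h2.tsum_eq]
    refine Summable.tsum_le_tsum (fun k => ?_) ((summable_nat_add_iff n).2 hs) h2.summable
    calc a (k + n) / 3 ^ (k + n + 1) ≤ 2 / 3 ^ (k + n + 1) :=
          div_le_div_of_nonneg_right (hn2 _) (by positivity)
      _ = _ := by rw [one_div, inv_pow]; field_simp; ring

lemma cantorAux_meas (α : ℝ) (hα₂ : α < 1)
    (D : ℝ) (hD : D = (1 - α) / (Real.log 2 / Real.log 3))
    (A : Set ℕ) (hA : A = {m : ℕ | ∃ y : ℕ, 0 < y ∧ (m : ℤ) = ⌊(y : ℝ) / D⌋})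
    (s : Set ℝ) (n : ℕ) (x : ℝ) (hs : ∀ y ∈ s, |y - x| ≤ (1 / 3) ^ n) :
    MeasureTheory.volume (cantorSetRestricted A + s) ≤
      ENNReal.ofReal (9 * ((1 / 3) ^ (n + 1)) ^ α) := by
  classical
  have l2 : 0 < Real.log 2 := Real.log_pos (by norm_num)
  have l3 : 0 < Real.log 3 := Real.log_pos (by norm_num)
  have hDp : 0 < D := by rw [hD]; exact div_pos (by linarith) (by positivity)
  obtain ⟨B, hBc, hB⟩ := cantorAux_count D hDp A hA n
  set T := B.powerset.image (fun F => ∑ k ∈ F, (2 : ℝ) / 3 ^ (k + 1)) with hT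
  have hTc : T.card ≤ 2 ^ B.card := Finset.card_image_le.trans (by simp)
  have hsub : cantorSetRestricted A + s ⊆
      ⋃ t ∈ T, Set.Icc (t + x - (1 / 3) ^ n) (t + x + 2 * (1 / 3) ^ n) := by
    rintro _ ⟨c, hc, y, hy, rfl⟩
    obtain ⟨t, ht, h1, h2⟩ := cantorAux_cover A n B hB c hc
    have h3 := abs_le.1 (hs y hy)
    simp only [Set.mem_iUnion, Set.mem_Icc]
    exact ⟨t, ht, by linarith [h3.1], by linarith [h3.2]⟩
  have hr : (T.card : ℝ) * (3 * (1 / 3) ^ n) ≤ 9 * ((1 / 3) ^ (n + 1)) ^ α := by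
    have e1 : (T.card : ℝ) ≤ (3 : ℝ) ^ ((1 - α) * (n + 1)) := by
      calc (T.card : ℝ) ≤ (2 : ℝ) ^ B.card := by exact_mod_cast hTc
        _ = (2 : ℝ) ^ (B.card : ℝ) := (Real.rpow_natCast _ _).symm
        _ ≤ (2 : ℝ) ^ (D * (n + 1)) := by
          apply Real.rpow_le_rpow_of_exponent_le (by norm_num)
          exact (Nat.cast_le.2 hBc).trans (Nat.floor_le (by positivity))
        _ = _ := by
          rw [Real.rpow_def_of_pos (by norm_num), Real.rpow_def_of_pos (by norm_num), hD]
          congr 1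
          field_simp
    have e2 : (9 : ℝ) * ((1 / 3) ^ (n + 1)) ^ α
        = (3 : ℝ) ^ ((1 - α) * (n + 1)) * (3 * (1 / 3) ^ n) := by
      have k1 : ∀ m : ℕ, ((1 : ℝ) / 3) ^ m = (3 : ℝ) ^ (-(m : ℝ)) := by
        intro m
        rw [Real.rpow_neg (by norm_num), Real.rpow_natCast, one_div, inv_pow]
      have k9 : (9 : ℝ) = (3 : ℝ) ^ (2 : ℝ) := by norm_num
      have k3 : (3 : ℝ) * (3 : ℝ) ^ (-(n : ℝ)) = (3 : ℝ) ^ (1 + -(n : ℝ)) := by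
        rw [Real.rpow_add (by norm_num), Real.rpow_one]
      rw [k1, k1, k3, k9, ← Real.rpow_mul (by norm_num), ← Real.rpow_add (by norm_num),
        ← Real.rpow_add (by norm_num)]
      congr 1
      push_cast; ring
    rw [e2]
    gcongr
  calc MeasureTheory.volume (cantorSetRestricted A + s)
      ≤ MeasureTheory.volume (⋃ t ∈ T, Set.Icc (t + x - (1 / 3) ^ n) (t + x + 2 * (1 / 3) ^ n)) :=
        MeasureTheory.measure_mono hsub
    _ ≤ ∑ t ∈ T, MeasureTheory.volume
          (Set.Icc (t + x - (1 / 3) ^ n) (t + x + 2 * (1 / 3) ^ n)) :=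
        MeasureTheory.measure_biUnion_finset_le _ _
    _ = ∑ t ∈ T, ENNReal.ofReal (3 * (1 / 3) ^ n) := by
        refine Finset.sum_congr rfl fun t _ => ?_
        rw [Real.volume_Icc]; congr 1; ring
    _ = ENNReal.ofReal (T.card * (3 * (1 / 3) ^ n)) := by
        rw [Finset.sum_const, nsmul_eq_mul, ENNReal.ofReal_mul (p := (T.card : ℝ)) (by positivity),
          ENNReal.ofReal_natCast]
    _ ≤ _ := ENNReal.ofReal_le_ofReal hr

/-- The outer measure `S ↦ |C + S|`. -/
noncomputable def cantorAuxOuter (C : Set ℝ) : MeasureTheory.OuterMeasure ℝ where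
  measureOf s := MeasureTheory.volume (C + s)
  empty := by simp
  mono h := MeasureTheory.measure_mono (Set.add_subset_add_left h)
  iUnion_nat s _ := by
    rw [Set.add_iUnion]
    exact MeasureTheory.measure_iUnion_le _

/-- Let `1 − log 2/log 3 ≤ α < 1`, `D = (1 − α)/(log 2/log 3)`, and
`A = {⌊y/D⌋ : y a positive integer}`.  Then every `E ⊆ ℝ` with
`𝒞_A + E ⊇ [0,2]` has `dim_H E ≥ α`. -/
theorem dimH_ge_of_sumset_with_cantorSetRestricted (α : ℝ)
    (hα₁ : 1 - Real.log 2 / Real.log 3 ≤ α) (hα₂ : α < 1)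
    (D : ℝ) (hD : D = (1 - α) / (Real.log 2 / Real.log 3))
    (A : Set ℕ) (hA : A = {m : ℕ | ∃ y : ℕ, 0 < y ∧ (m : ℤ) = ⌊(y : ℝ) / D⌋})
    (E : Set ℝ) (hE : Set.Icc (0 : ℝ) 2 ⊆ cantorSetRestricted A + E) :
    ENNReal.ofReal α ≤ dimH E := by
  have l3 : 0 < Real.log 3 := Real.log_pos (by norm_num)
  have hα : 0 < α := by
    have : Real.log 2 / Real.log 3 < 1 := by
      rw [div_lt_one l3]; exact Real.log_lt_log (by norm_num) (by norm_num)
    linarith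
  set μ := cantorAuxOuter (cantorSetRestricted A) with hμ
  have key : ∀ s : Set ℝ, Metric.ediam s ≤ 1 → μ s ≤ 9 * Metric.ediam s ^ α := by
    intro s hs
    rcases s.eq_empty_or_nonempty with rfl | ⟨x, hx⟩
    · simp
    have htop : Metric.ediam s ≠ ⊤ := ne_top_of_le_ne_top ENNReal.one_ne_top hs
    set d := (Metric.ediam s).toReal with hd
    have hds : Metric.ediam s = ENNReal.ofReal d := (ENNReal.ofReal_toReal htop).symm
    have hd0 : 0 ≤ d := ENNReal.toReal_nonneg
    have hd1 : d ≤ 1 := by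
      have := ENNReal.toReal_mono ENNReal.one_ne_top hs
      simpa using this
    have hdist : ∀ y ∈ s, |y - x| ≤ d := by
      intro y hy
      have := Metric.edist_le_ediam_of_mem hy hx
      rw [edist_dist, hds, ENNReal.ofReal_le_ofReal_iff hd0, Real.dist_eq] at this
      exact this
    have hb : ∀ n : ℕ, d ≤ (1 / 3) ^ n → μ s ≤ ENNReal.ofReal (9 * ((1 / 3) ^ (n + 1)) ^ α) :=
      fun n hn => cantorAux_meas α hα₂ D hD A hA s n x fun y hy => (hdist y hy).trans hn
    have hfin : μ s ≤ ENNReal.ofReal (9 * d ^ α) := by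
      rcases hd0.eq_or_lt with h | h
      · rw [← h, Real.zero_rpow hα.ne', mul_zero]
        have t1 : Filter.Tendsto (fun n : ℕ => ((1 : ℝ) / 3) ^ (n + 1)) Filter.atTop (nhds 0) :=
          (tendsto_pow_atTop_nhds_zero_of_lt_one (by norm_num) (by norm_num)).comp
            (Filter.tendsto_add_atTop_nat 1)
        have t2 := (t1.rpow_const (p := α) (Or.inr hα.le)).const_mul 9
        rw [Real.zero_rpow hα.ne', mul_zero] at t2
        exact ge_of_tendsto' (ENNReal.tendsto_ofReal t2)
          fun n => hb n (by rw [← h]; positivity)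
      · obtain ⟨n, h1, h2⟩ := exists_nat_pow_near_of_lt_one h hd1
          (by norm_num : (0 : ℝ) < 1 / 3) (by norm_num)
        refine (hb n h2).trans (ENNReal.ofReal_le_ofReal ?_)
        have := h1.le
        gcongr
    refine hfin.trans (le_of_eq ?_)
    rw [hds, ENNReal.ofReal_mul (by norm_num), ENNReal.ofReal_rpow_of_nonneg hd0 hα.le]
    norm_num
  have hle : (9 : ENNReal)⁻¹ • μ ≤
      MeasureTheory.OuterMeasure.mkMetric (fun r : ENNReal => r ^ α) := by
    refine MeasureTheory.OuterMeasure.le_mkMetric _ _ 1 one_pos fun s hs => ?_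
    rw [smul_apply, smul_eq_mul]
    calc (9 : ENNReal)⁻¹ * μ s ≤ 9⁻¹ * (9 * Metric.ediam s ^ α) := by gcongr; exact key s hs
      _ = _ := by rw [← mul_assoc, ENNReal.inv_mul_cancel (by norm_num) (by norm_num), one_mul]
  have hvol : μ E ≠ 0 := by
    have : MeasureTheory.volume (Set.Icc (0 : ℝ) 2) ≤ μ E := MeasureTheory.measure_mono hE
    intro h
    rw [h, Real.volume_Icc] at this
    norm_num at this
  have hH : MeasureTheory.Measure.hausdorffMeasure (α.toNNReal : ℝ) E ≠ 0 := by
    intro h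
    rw [Real.coe_toNNReal _ hα.le] at h
    have h2 := hle E
    rw [← MeasureTheory.Measure.coe_toOuterMeasure, MeasureTheory.Measure.hausdorffMeasure,
      MeasureTheory.Measure.mkMetric_toOuterMeasure] at h
    rw [h, smul_apply, smul_eq_mul] at h2
    have := mul_eq_zero.1 (le_antisymm h2 bot_le)
    rcases this with h3 | h3
    · simp at h3
    · exact hvol h3
  exact le_dimH_of_hausdorffMeasure_ne_zero hH
end

section
/- Let α be a real number with 1 − log 2/log 3 ≤ α ≤ 1. There exists a closed set F ⊆ ℝ with Hausdorff dimension at most α such that for every r ∈ [0,1], the Hausdorff dimension of (𝒞 + r) ∩ F is at least α − 1 + log 2/log 3. -/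
noncomputable def terS (d : ℕ → ℝ) : ℝ := ∑' n : ℕ, d n / 3 ^ (n + 1)

theorem geo_sum (M : ℝ) : HasSum (fun n : ℕ => M / 3 ^ (n + 1)) (M / 2) := by
  have h := (hasSum_geometric_of_lt_one (r := (1/3 : ℝ)) (by norm_num) (by norm_num)).mul_left (M / 3)
  have e1 : (fun n : ℕ => M / 3 ^ (n + 1)) = fun n : ℕ => M / 3 * (1 / 3 : ℝ) ^ n := by
    funext n
    rw [pow_succ, one_div, inv_pow]
    field_simp
  have e2 : M / 3 * (1 - 1 / 3 : ℝ)⁻¹ = M / 2 := by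
    norm_num
    ring
  rw [e1, ← e2]
  exact h

theorem terS_norm_le (d : ℕ → ℝ) (M : ℝ) (h : ∀ i, |d i| ≤ M) (n : ℕ) :
    ‖d n / 3 ^ (n + 1)‖ ≤ M / 3 ^ (n + 1) := by
  rw [Real.norm_eq_abs, abs_div, abs_of_pos (by positivity : (0:ℝ) < 3 ^ (n+1))]
  gcongr
  exact h n

theorem terS_summable (d : ℕ → ℝ) (M : ℝ) (h : ∀ i, |d i| ≤ M) :
    Summable (fun n : ℕ => d n / 3 ^ (n + 1)) :=
  Summable.of_norm_bounded (geo_sum M).summable (terS_norm_le d M h)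

theorem terS_abs_le (d : ℕ → ℝ) (M : ℝ) (h : ∀ i, |d i| ≤ M) : |terS d| ≤ M / 2 :=
  tsum_of_norm_bounded (geo_sum M) (terS_norm_le d M h)

theorem terS_nonneg (d : ℕ → ℝ) (h : ∀ i, 0 ≤ d i) : 0 ≤ terS d :=
  tsum_nonneg fun i => div_nonneg (h i) (by positivity)

theorem terS_split (d : ℕ → ℝ) (M : ℝ) (h : ∀ i, |d i| ≤ M) (n : ℕ) :
    terS d = (∑ i ∈ Finset.range n, d i / 3 ^ (i + 1)) + terS (fun i => d (i + n)) / 3 ^ n := by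
  unfold terS
  rw [← Summable.sum_add_tsum_nat_add n (terS_summable d M h), ← tsum_div_const]
  congr 2
  ext i
  rw [div_div]
  congr 1
  ring

theorem terS_sub (a b : ℕ → ℝ) (M : ℝ) (ha : ∀ i, |a i| ≤ M) (hb : ∀ i, |b i| ≤ M) :
    terS a - terS b = terS (fun i => a i - b i) := by
  unfold terS
  rw [← (terS_summable a M ha).tsum_sub (terS_summable b M hb)]
  simp only [sub_div]

theorem terS_add (a b : ℕ → ℝ) (M : ℝ) (ha : ∀ i, |a i| ≤ M) (hb : ∀ i, |b i| ≤ M) :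
    terS a + terS b = terS (fun i => a i + b i) := by
  unfold terS
  rw [← (terS_summable a M ha).tsum_add (terS_summable b M hb)]
  simp only [add_div]

/-- Cantor digits first differing at `i` give points at distance at least `3^{-(i+1)}`. -/
theorem terS_sep (a b : ℕ → ℝ) (ha : ∀ i, a i = 0 ∨ a i = 2) (hb : ∀ i, b i = 0 ∨ b i = 2)
    (i : ℕ) (hlt : ∀ j < i, a j = b j) (hi : a i ≠ b i) :
    (1 / 3 : ℝ) ^ (i + 1) ≤ |terS a - terS b| := by
  have hd : ∀ j, |a j - b j| ≤ 2 := by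
    intro j
    rcases ha j with h | h <;> rcases hb j with h' | h' <;> simp [h, h']
  have hd' : |a i - b i| = 2 := by
    rcases ha i with h | h <;> rcases hb i with h' | h' <;> simp_all
  rw [terS_sub a b 2 (fun j => by rcases ha j with h | h <;> simp [h])
    (fun j => by rcases hb j with h | h <;> simp [h]), terS_split _ 2 hd (i + 1),
    Finset.sum_range_succ, Finset.sum_eq_zero (fun j hj => by
      rw [hlt j (Finset.mem_range.1 hj)]; simp), zero_add]
  have h1 := terS_abs_le (fun j => a (j + (i + 1)) - b (j + (i + 1))) 2 (fun j => hd _)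
  set t := terS (fun j => a (j + (i + 1)) - b (j + (i + 1)))
  rw [← add_div, abs_div, abs_of_pos (by positivity : (0:ℝ) < 3 ^ (i+1)), one_div, inv_pow,
    ← one_div]
  gcongr
  have := abs_sub_abs_le_abs_add (a i - b i) t
  linarith

theorem dim_lower (J : ℕ → Prop) [DecidablePred J] (hJ : (Set.ofPred J).Infinite)
    (c : ℕ → ℝ) (hc : ∀ i, c i = 0 ∨ c i = 2) (s : NNReal) (hs : 0 < s) (C : NNReal)
    (h : ∀ i, (1 / 2 : ℝ) ^ (Nat.count J i) ≤ C * ((1 / 3 : ℝ) ^ (i + 1)) ^ (s : ℝ))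
    (r : ℝ) (E : Set ℝ)
    (hE : ∀ a : ℕ → ℝ, (∀ i, a i = 0 ∨ a i = 2) → (∀ i, ¬ J i → a i = c i) → terS a + r ∈ E) :
    (s : ENNReal) ≤ dimH E := by
  classical
  let A : (ℕ → Fin 2) → ℕ → ℝ := fun w i => if J i then 2 * ((w (Nat.count J i) : ℕ) : ℝ) else c i
  have hA : ∀ w i, A w i = 0 ∨ A w i = 2 := by
    intro w i
    by_cases hi : J i
    · simp only [A, if_pos hi]
      generalize w (Nat.count J i) = z
      fin_cases z <;> simp
    · simp only [A, if_neg hi]; exact hc i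
  let X : (ℕ → Fin 2) → ℝ := fun w => terS (A w) + r
  have key : ∀ w w', |Real.ofDigits w - Real.ofDigits w'| ≤ C * |X w - X w'| ^ (s : ℝ) := by
    intro w w'
    by_cases hw : w = w'
    · subst hw
      simp only [sub_self, abs_zero]
      positivity
    have hex : ∃ j, w j ≠ w' j := Function.ne_iff.1 hw
    let j := Nat.find hex
    have hj : w j ≠ w' j := Nat.find_spec hex
    have hjlt : ∀ k < j, w k = w' k := fun k hk => not_not.1 (Nat.find_min hex hk)
    have hi := Nat.nth_mem_of_infinite hJ j
    have hci := Nat.count_nth_of_infinite hJ j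
    set i := Nat.nth J j
    have hsep := terS_sep (A w) (A w') (hA w) (hA w') i (by
      intro k hk
      by_cases hJk : J k
      · simp only [A, if_pos hJk]
        rw [hjlt]
        rw [← hci]
        exact Nat.count_strict_mono hJk hk
      · simp only [A, if_neg hJk]) (by
      simp only [A, if_pos hi, hci]
      intro h0
      apply hj
      ext
      have : ((w j : ℕ) : ℝ) = ((w' j : ℕ) : ℝ) := by linarith
      exact_mod_cast this)
    have e : X w - X w' = terS (A w) - terS (A w') := by simp only [X]; ring
    rw [e]
    calc |Real.ofDigits w - Real.ofDigits w'| ≤ (((2 : ℕ) : ℝ) ^ j)⁻¹ :=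
          Real.abs_ofDigits_sub_ofDigits_le hjlt
      _ = (1 / 2 : ℝ) ^ (Nat.count J i) := by rw [hci, one_div, inv_pow]; norm_num
      _ ≤ C * ((1 / 3 : ℝ) ^ (i + 1)) ^ (s : ℝ) := h i
      _ ≤ _ := by gcongr
  let f : ℝ → ℝ := fun x => Real.ofDigits (Function.invFun X x)
  have hf : ∀ w, f (X w) = Real.ofDigits w := by
    intro w
    have h1 : X (Function.invFun X (X w)) = X w := Function.invFun_eq ⟨w, rfl⟩
    have h2 := key (Function.invFun X (X w)) w
    rw [h1, sub_self, abs_zero, Real.zero_rpow (by exact_mod_cast hs.ne'), mul_zero] at h2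
    exact sub_eq_zero.1 (abs_eq_zero.1 (le_antisymm h2 (abs_nonneg _)))
  have hH : HolderOnWith C s f (Set.range X) := by
    rintro _ ⟨w, rfl⟩ _ ⟨w', rfl⟩
    rw [hf, hf, edist_dist, edist_dist, Real.dist_eq, Real.dist_eq,
      ENNReal.ofReal_rpow_of_nonneg (abs_nonneg _) (by positivity),
      ← ENNReal.ofReal_coe_nnreal, ← ENNReal.ofReal_mul (by positivity)]
    exact ENNReal.ofReal_le_ofReal (key w w')
  have h1 := hH.dimH_image_le hs
  have h2 : Set.Icc (0:ℝ) 1 ⊆ f '' Set.range X := by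
    intro y hy
    obtain ⟨w, -, hw⟩ := Real.ofDigits_SurjOn (b := 2) (by norm_num) hy
    exact ⟨X w, ⟨w, rfl⟩, by rw [hf, hw]⟩
  have h3 : dimH (Set.Icc (0:ℝ) 1) = 1 := by
    rw [Real.dimH_of_nonempty_interior (by simp)]
    simp
  have h4 : Set.range X ⊆ E := by
    rintro _ ⟨w, rfl⟩
    exact hE _ (hA w) (fun i hi => by simp only [A, if_neg hi])
  have h5 : (1 : ENNReal) ≤ dimH (Set.range X) / s := by
    rw [← h3]; exact (dimH_mono h2).trans h1
  have h6 := (ENNReal.le_div_iff_mul_le (Or.inl (by exact_mod_cast hs.ne')) (Or.inl (by simp))).1 h5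
  rw [one_mul] at h6
  exact h6.trans (dimH_mono h4)

def terT (a : ℕ → ℕ) : ℕ → ℕ
  | 0 => 0
  | n + 1 => 3 * terT a n + a n

theorem terT_split (a : ℕ → ℕ) (m n : ℕ) :
    terT a (m + n) = 3 ^ n * terT a m + terT (fun i => a (m + i)) n := by
  induction n with
  | zero => simp [terT]
  | succ n ih =>
    rw [← add_assoc, terT, ih, terT]
    ring

theorem terT_sum (a b : ℕ → ℕ) (n : ℕ) :
    terT (fun i => a i + b i) n = terT a n + terT b n := by
  induction n with
  | zero => simp [terT]
  | succ n ih => rw [terT, ih, terT, terT]; ring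

theorem terT_congr (a b : ℕ → ℕ) (n : ℕ) (h : ∀ i < n, a i = b i) : terT a n = terT b n := by
  induction n with
  | zero => simp [terT]
  | succ n ih => rw [terT, terT, ih (fun i hi => h i (by omega)), h n (by omega)]

theorem terT_le (a : ℕ → ℕ) (M : ℕ) (h : ∀ i, a i ≤ 2 * M) (n : ℕ) :
    terT a n + M ≤ M * 3 ^ n := by
  induction n with
  | zero => simp [terT]
  | succ n ih =>
    have := h n
    rw [terT, pow_succ, ← mul_assoc]
    omega

theorem terT_real (a : ℕ → ℕ) (n : ℕ) :
    (terT a n : ℝ) / 3 ^ n = ∑ i ∈ Finset.range n, (a i : ℝ) / 3 ^ (i + 1) := by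
  induction n with
  | zero => simp [terT]
  | succ n ih =>
    rw [Finset.sum_range_succ, ← ih, terT]
    push_cast
    field_simp
    ring

def cantA : ℕ → Finset ℕ
  | 0 => {0}
  | n + 1 => (cantA n).image (fun a => 3 * a) ∪ (cantA n).image (fun a => 3 * a + 2)

theorem cantA_card (n : ℕ) : (cantA n).card = 2 ^ n := by
  induction n with
  | zero => simp [cantA]
  | succ n ih =>
    rw [cantA, Finset.card_union_of_disjoint, Finset.card_image_of_injective,
      Finset.card_image_of_injective, ih, pow_succ]
    · ring
    · intro a b h; simp at h; omega
    · intro a b h; simp at h; omega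
    · rw [Finset.disjoint_left]
      intro x hx hx'
      simp only [Finset.mem_image] at hx hx'
      obtain ⟨a, -, ha⟩ := hx
      obtain ⟨b, -, hb⟩ := hx'
      omega

theorem cantA_mem (n : ℕ) : ∀ a ∈ cantA n, ∃ c : ℕ → ℕ, (∀ i, c i = 0 ∨ c i = 2) ∧ terT c n = a := by
  induction n with
  | zero =>
    intro a ha
    simp [cantA] at ha
    exact ⟨fun _ => 0, by simp, by simp [terT, ha]⟩
  | succ n ih =>
    have aux : ∀ a ∈ cantA n, ∀ e, (e = 0 ∨ e = 2) →
        ∃ c : ℕ → ℕ, (∀ i, c i = 0 ∨ c i = 2) ∧ terT c (n + 1) = 3 * a + e := by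
      intro a ha e he
      obtain ⟨c, hc, hca⟩ := ih a ha
      refine ⟨fun i => if i = n then e else c i, fun i => ?_, ?_⟩
      · by_cases hi : i = n
        · simp [hi, he]
        · simp [hi, hc i]
      · rw [terT, terT_congr _ c n, hca]
        · simp
        · intro i hi
          simp [hi.ne]
    intro a ha
    simp only [cantA, Finset.mem_union, Finset.mem_image] at ha
    rcases ha with ⟨b, hb, rfl⟩ | ⟨b, hb, rfl⟩
    · exact aux b hb 0 (Or.inl rfl)
    · exact aux b hb 2 (Or.inr rfl)

theorem cover_greedy (m : ℕ) (hm : 0 < m) (A : Finset ℕ) (hA : ∀ a ∈ A, a < m) (k : ℕ) :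
    ∃ B : Finset ℕ, B.card ≤ k ∧
      (((Finset.range m).filter (fun t => ∀ a ∈ A, t + a ∉ B)).card : ℝ) ≤
        m * (1 - A.card / (2 * m)) ^ k := by
  have hm' : (0 : ℝ) < m := by exact_mod_cast hm
  have hAm : A.card ≤ m := by
    have : A ⊆ Finset.range m := fun a ha => Finset.mem_range.2 (hA a ha)
    simpa using Finset.card_le_card this
  have hAm' : (A.card : ℝ) ≤ m := by exact_mod_cast hAm
  have hx : (0 : ℝ) ≤ 1 - A.card / (2 * m) := by
    rw [sub_nonneg, div_le_one (by positivity)]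
    linarith
  induction k with
  | zero => exact ⟨∅, by simp, by simp⟩
  | succ k ih =>
    obtain ⟨B, hB, hU⟩ := ih
    set U := (Finset.range m).filter (fun t => ∀ a ∈ A, t + a ∉ B) with hUdef
    have hdc := Finset.sum_card_bipartiteAbove_eq_sum_card_bipartiteBelow
      (s := U) (t := Finset.range (2 * m)) (fun t b => ∃ a ∈ A, t + a = b)
    have hleft : ∀ t ∈ U, (Finset.bipartiteAbove (fun t b => ∃ a ∈ A, t + a = b)
        (Finset.range (2 * m)) t).card = A.card := by
      intro t ht
      have : Finset.bipartiteAbove (fun t b => ∃ a ∈ A, t + a = b)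
        (Finset.range (2 * m)) t = A.image (fun a => t + a) := by
        ext b
        simp only [Finset.mem_bipartiteAbove, Finset.mem_range, Finset.mem_image]
        constructor
        · rintro ⟨-, h⟩; exact h
        · rintro ⟨a, ha, rfl⟩
          refine ⟨?_, a, ha, rfl⟩
          have := hA a ha
          have := Finset.mem_range.1 (Finset.mem_filter.1 ht).1
          omega
      rw [this, Finset.card_image_of_injective _ (add_right_injective t)]
    rw [Finset.sum_congr rfl hleft, Finset.sum_const, smul_eq_mul] at hdc
    obtain ⟨b, hb, hbc⟩ : ∃ b ∈ Finset.range (2 * m), (U.card * A.card : ℝ) / (2 * m) ≤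
        ((Finset.bipartiteBelow (fun t b => ∃ a ∈ A, t + a = b) U b).card : ℝ) := by
      apply Finset.exists_le_of_sum_le (by simp; omega)
      rw [Finset.sum_const, Finset.card_range, nsmul_eq_mul]
      have : (U.card * A.card : ℝ) = ∑ b ∈ Finset.range (2 * m),
        ((Finset.bipartiteBelow (fun t b => ∃ a ∈ A, t + a = b) U b).card : ℝ) := by
        exact_mod_cast hdc
      rw [← this]
      push_cast
      apply le_of_eq
      field_simp
    refine ⟨insert b B, (Finset.card_insert_le _ _).trans (by omega), ?_⟩
    set W := Finset.bipartiteBelow (fun t b => ∃ a ∈ A, t + a = b) U b with hW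
    have hWU : W ⊆ U := Finset.filter_subset _ _
    have hsub : (Finset.range m).filter (fun t => ∀ a ∈ A, t + a ∉ insert b B) ⊆ U \ W := by
      intro t ht
      simp only [Finset.mem_filter, Finset.mem_insert, not_or] at ht
      simp only [Finset.mem_sdiff, hUdef, hW, Finset.mem_bipartiteBelow, Finset.mem_filter]
      refine ⟨⟨ht.1, fun a ha => (ht.2 a ha).2⟩, ?_⟩
      rintro ⟨-, a, ha, h⟩
      exact (ht.2 a ha).1 h
    have h1 : (((Finset.range m).filter (fun t => ∀ a ∈ A, t + a ∉ insert b B)).card : ℝ) ≤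
        U.card - W.card := by
      have h2 := Finset.card_le_card hsub
      have h3 := Finset.card_sdiff_add_card_eq_card hWU
      rw [le_sub_iff_add_le]
      exact_mod_cast (by omega)
    calc _ ≤ (U.card : ℝ) - W.card := h1
      _ ≤ U.card - (U.card * A.card : ℝ) / (2 * m) := by linarith
      _ = U.card * (1 - A.card / (2 * m)) := by ring
      _ ≤ (m * (1 - A.card / (2 * m)) ^ k) * (1 - A.card / (2 * m)) := by gcongr
      _ = _ := by ring

theorem thin_cover (g : ℕ) : ∃ B : Finset ℕ, (B.card : ℝ) ≤ 4 * (g + 1) * (3 / 2) ^ g ∧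
    ∀ r : ℕ → ℕ, (∀ i, r i ≤ 2) →
      ∃ c : ℕ → ℕ, (∀ i, c i = 0 ∨ c i = 2) ∧ terT r g + terT c g ∈ B := by
  obtain ⟨B, hB, hU⟩ := cover_greedy (3 ^ g) (by positivity) (cantA g) (by
    intro a ha
    obtain ⟨c, hc, rfl⟩ := cantA_mem g a ha
    have := terT_le c 1 (fun i => by rcases hc i with h | h <;> simp [h]) g
    omega) (⌊4 * (g : ℝ) * (3 / 2) ^ g⌋₊ + 1)
  set k := ⌊4 * (g : ℝ) * (3 / 2) ^ g⌋₊ + 1 with hk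
  have hk1 : 4 * (g : ℝ) * (3 / 2) ^ g < k := by
    rw [hk]; push_cast; exact Nat.lt_floor_add_one _
  have hk2 : (k : ℝ) ≤ 4 * (g : ℝ) * (3 / 2) ^ g + 1 := by
    rw [hk]; push_cast
    have := Nat.floor_le (by positivity : (0:ℝ) ≤ 4 * (g : ℝ) * (3 / 2) ^ g)
    linarith
  have hone : (1 : ℝ) ≤ (3 / 2) ^ g := one_le_pow₀ (by norm_num)
  refine ⟨B, ?_, ?_⟩
  · have : (B.card : ℝ) ≤ k := by exact_mod_cast hB
    nlinarith
  · have hlt : ((3 ^ g : ℕ) : ℝ) * (1 - ((cantA g).card : ℝ) / (2 * ((3 ^ g : ℕ) : ℝ))) ^ k < 1 := by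
      rw [cantA_card]
      push_cast
      set x : ℝ := (2 : ℝ) ^ g / (2 * 3 ^ g) with hx
      have hx0 : 0 < x := by positivity
      have hx1 : x * (3 / 2) ^ g = 1 / 2 := by
        rw [hx, div_pow]; field_simp
      have hx2 : 2 * (g : ℝ) < x * k := by
        have := mul_lt_mul_of_pos_left hk1 hx0
        nlinarith
      have hx3 : x ≤ 1 := by nlinarith
      have h3 : (3 : ℝ) ≤ Real.exp 2 := by
        have := Real.add_one_le_exp 2
        linarith
      calc (3 : ℝ) ^ g * (1 - x) ^ k ≤ Real.exp 2 ^ g * (Real.exp (-x)) ^ k := by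
            have h4 : 1 - x ≤ Real.exp (-x) := by
              have := Real.add_one_le_exp (-x)
              linarith
            have h5 : 0 ≤ 1 - x := by linarith
            gcongr
        _ = Real.exp (g * 2 + k * (-x)) := by
            rw [Real.exp_add, Real.exp_nat_mul, Real.exp_nat_mul]
        _ < 1 := by
            rw [Real.exp_lt_one_iff]
            linarith
    have h0 := hU.trans_lt hlt
    have h0' : ((Finset.range (3 ^ g)).filter (fun t => ∀ a ∈ cantA g, t + a ∉ B)).card = 0 := by
      have : ((Finset.range (3 ^ g)).filter (fun t => ∀ a ∈ cantA g, t + a ∉ B)).card < 1 := by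
        exact_mod_cast h0
      omega
    rw [Finset.card_eq_zero, Finset.filter_eq_empty_iff] at h0'
    intro r hr
    have hr' := terT_le r 1 (fun i => by simpa using hr i) g
    have := h0' (x := terT r g) (Finset.mem_range.2 (by omega))
    push Not at this
    obtain ⟨a, ha, hab⟩ := this
    obtain ⟨c, hc, rfl⟩ := cantA_mem g a ha
    exact ⟨c, hc, hab⟩

def preP (f g : ℕ → ℕ) (B : ℕ → Finset ℕ) : ℕ → Finset ℕ
  | 0 => {0}
  | K + 1 => (preP f g B K ×ˢ (Finset.range (2 * 3 ^ f K) ×ˢ B (g K))).image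
      (fun q => 3 ^ g K * (3 ^ f K * q.1 + q.2.1) + q.2.2)

theorem preP_card (f g : ℕ → ℕ) (B : ℕ → Finset ℕ) (K : ℕ) :
    (preP f g B (K + 1)).card ≤ (preP f g B K).card * ((2 * 3 ^ f K) * (B (g K)).card) := by
  rw [preP]
  refine Finset.card_image_le.trans ?_
  simp [Finset.card_product]

theorem preP_mem (f g : ℕ → ℕ) (hfg : ∀ K, f K + g K = 2 * K + 1) (B : ℕ → Finset ℕ) (a : ℕ → ℕ)
    (ha : ∀ i, a i ≤ 4)
    (hB : ∀ K, terT (fun j => a (K * K + f K + j)) (g K) ∈ B (g K)) (K : ℕ) :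
    terT a (K * K) ∈ preP f g B K := by
  induction K with
  | zero => simp [preP, terT]
  | succ K ih =>
    have e : (K + 1) * (K + 1) = K * K + f K + g K := by
      have := hfg K
      linarith
    rw [e, terT_split, terT_split, preP, Finset.mem_image]
    refine ⟨(terT a (K * K), terT (fun i => a (K * K + i)) (f K), _), ?_, rfl⟩
    simp only [Finset.mem_product, Finset.mem_range]
    refine ⟨ih, ?_, hB K⟩
    have := terT_le (fun i => a (K * K + i)) 2 (fun i => ha _) (f K)
    omega

def finF (P : ℕ → Finset ℕ) : Set ℝ :=
  ⋂ K : ℕ, ⋃ p ∈ P K, Set.Icc ((p : ℝ) / 3 ^ (K * K)) (((p : ℝ) + 2) / 3 ^ (K * K))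

theorem finF_closed (P : ℕ → Finset ℕ) : IsClosed (finF P) := by
  apply isClosed_iInter
  intro K
  exact (P K).finite_toSet.isClosed_biUnion (fun p _ => isClosed_Icc)

theorem sq_pow_tendsto : Filter.Tendsto (fun K : ℕ => (2 : ℝ) / 3 ^ (K * K)) Filter.atTop (nhds 0) := by
  have h : Filter.Tendsto (fun n : ℕ => (2 : ℝ) / 3 ^ n) Filter.atTop (nhds 0) := by
    have := (tendsto_pow_atTop_nhds_zero_of_lt_one (r := (1/3 : ℝ)) (by norm_num) (by norm_num)).const_mul 2
    rw [mul_zero] at this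
    refine this.congr (fun n => ?_)
    rw [one_div, inv_pow, div_eq_mul_inv]
  exact h.comp (Filter.tendsto_atTop_mono (fun n => Nat.le_mul_self n) Filter.tendsto_id)

open MeasureTheory in
theorem dim_upper (P : ℕ → Finset ℕ) (s : NNReal)
    (h : ∀ᶠ K : ℕ in Filter.atTop, ((P K).card : ℝ) ≤ ((3 : ℝ) ^ (K * K)) ^ (s : ℝ)) :
    dimH (finF P) ≤ s := by
  apply dimH_le_of_hausdorffMeasure_ne_top
  let t : ∀ K : ℕ, {p // p ∈ P K} → Set ℝ := fun K p =>
    Set.Icc (((p : ℕ) : ℝ) / 3 ^ (K * K)) ((((p : ℕ) : ℝ) + 2) / 3 ^ (K * K))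
  have hdiam : ∀ K p, Metric.ediam (t K p) = ENNReal.ofReal (2 / 3 ^ (K * K)) := by
    intro K p
    simp only [t]
    rw [Real.ediam_Icc]
    congr 1
    ring
  have h1 := Measure.hausdorffMeasure_le_liminf_sum (s : ℝ) (finF P) (l := Filter.atTop)
    (fun K : ℕ => ENNReal.ofReal (2 / 3 ^ (K * K)))
    (by simpa using ENNReal.tendsto_ofReal sq_pow_tendsto) t
    (Filter.Eventually.of_forall fun K p => (hdiam K p).le)
    (Filter.Eventually.of_forall fun K x hx => by
      have := Set.mem_iInter.1 hx K
      simp only [Set.mem_iUnion] at this ⊢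
      obtain ⟨p, hp, hx⟩ := this
      exact ⟨⟨p, hp⟩, hx⟩)
  have h2 : Filter.liminf (fun K : ℕ => ∑ i, Metric.ediam (t K i) ^ (s : ℝ)) Filter.atTop ≤
      Filter.liminf (fun _ : ℕ => ENNReal.ofReal ((2 : ℝ) ^ (s : ℝ))) Filter.atTop := by
    refine Filter.liminf_le_liminf ?_
    filter_upwards [h] with K hK
    simp only [hdiam]
    rw [Finset.sum_const, nsmul_eq_mul, ENNReal.ofReal_rpow_of_nonneg (by positivity) (by positivity),
      ← ENNReal.ofReal_natCast, ← ENNReal.ofReal_mul (by positivity)]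
    apply ENNReal.ofReal_le_ofReal
    rw [Real.div_rpow (by positivity) (by positivity)]
    simp only [Finset.card_univ, Fintype.card_coe]
    rw [mul_div_assoc', div_le_iff₀ (by positivity), mul_comm]
    gcongr
  rw [Filter.liminf_const] at h2
  exact ((h1.trans h2).trans_lt ENNReal.ofReal_lt_top).ne

theorem growth_s13 (ε : ℝ) (hε : 0 < ε) :
    ∀ᶠ K : ℕ in Filter.atTop, 16 * ((K : ℝ) + 1) ≤ ((3 : ℝ) ^ K) ^ ε := by
  have hb : (1 : ℝ) < 3 ^ ε := Real.one_lt_rpow (by norm_num) hε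
  have h1 := tendsto_pow_const_div_const_pow_of_one_lt 1 hb
  have h0 := tendsto_pow_const_div_const_pow_of_one_lt 0 hb
  have h := (h1.add h0).const_mul 16
  rw [add_zero, mul_zero] at h
  filter_upwards [h.eventually (gt_mem_nhds zero_lt_one)] with K hK
  have hp : (0:ℝ) < (3 ^ ε) ^ K := by positivity
  have e : ((3 : ℝ) ^ K) ^ ε = (3 ^ ε) ^ K := by
    rw [← Real.rpow_natCast, ← Real.rpow_natCast, ← Real.rpow_mul (by norm_num),
      ← Real.rpow_mul (by norm_num), mul_comm]
  rw [e]
  rw [← add_div, mul_div_assoc', div_lt_one hp] at hK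
  simp at hK
  exact hK.le

theorem card_bound (α : ℝ) (P : ℕ → Finset ℕ) (h0 : (P 0).card = 1)
    (hstep : ∀ K, ((P (K + 1)).card : ℝ) ≤
      (P K).card * (16 * ((K : ℝ) + 1) * ((3 : ℝ) ^ (2 * K + 1)) ^ α)) (K : ℕ) :
    ((P K).card : ℝ) ≤ (16 * ((K : ℝ) + 1)) ^ K * ((3 : ℝ) ^ (K * K)) ^ α := by
  induction K with
  | zero => simp [h0]
  | succ K ih =>
    have e : ((3 : ℝ) ^ ((K + 1) * (K + 1))) ^ α = ((3 : ℝ) ^ (K * K)) ^ α * ((3 : ℝ) ^ (2 * K + 1)) ^ α := by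
      rw [← Real.mul_rpow (by positivity) (by positivity), ← pow_add]
      congr 2
      ring
    calc ((P (K + 1)).card : ℝ) ≤ _ := hstep K
      _ ≤ ((16 * ((K : ℝ) + 1)) ^ K * ((3 : ℝ) ^ (K * K)) ^ α) *
            (16 * ((K : ℝ) + 1) * ((3 : ℝ) ^ (2 * K + 1)) ^ α) := by gcongr
      _ = (16 * ((K : ℝ) + 1)) ^ (K + 1) * ((3 : ℝ) ^ ((K + 1) * (K + 1))) ^ α := by
          rw [e]; ring
      _ ≤ _ := by
          push_cast
          gcongr
          linarith

theorem dim_upper' (α : ℝ) (P : ℕ → Finset ℕ) (h0 : (P 0).card = 1)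
    (hstep : ∀ K, ((P (K + 1)).card : ℝ) ≤
      (P K).card * (16 * ((K : ℝ) + 1) * ((3 : ℝ) ^ (2 * K + 1)) ^ α)) :
    dimH (finF P) ≤ ENNReal.ofReal α := by
  refine le_of_forall_gt_imp_ge_of_dense fun c hc => ?_
  induction c with
  | top => exact le_top
  | coe s =>
    apply dim_upper
    have hs : α < s := by
      rw [← ENNReal.ofReal_coe_nnreal] at hc
      exact lt_of_not_ge fun h => hc.not_ge (ENNReal.ofReal_le_ofReal h)
    filter_upwards [growth_s13 (s - α) (by linarith)] with K hK
    refine (card_bound α P h0 hstep K).trans ?_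
    calc _ ≤ (((3 : ℝ) ^ K) ^ ((s : ℝ) - α)) ^ K * ((3 : ℝ) ^ (K * K)) ^ α := by gcongr
      _ = ((3 : ℝ) ^ (K * K)) ^ ((s : ℝ) - α) * ((3 : ℝ) ^ (K * K)) ^ α := by
          congr 1
          rw [← Real.rpow_natCast, ← Real.rpow_mul (by positivity), mul_comm,
            Real.rpow_mul (by positivity), Real.rpow_natCast, pow_mul]
      _ = _ := by
          rw [← Real.rpow_add (by positivity)]
          congr 1
          ring

theorem step_bound (α θ : ℝ) (hθ : θ * Real.log 2 = (α - 1) * Real.log 3 + Real.log 2)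
    (K f g : ℕ) (hfg : f + g = 2 * K + 1) (hf : (f : ℝ) ≤ θ * (2 * K + 1)) (b : ℝ)
    (hb : b ≤ 4 * (g + 1) * (3 / 2) ^ g) :
    2 * (3 : ℝ) ^ f * b ≤ 16 * ((K : ℝ) + 1) * ((3 : ℝ) ^ (2 * K + 1)) ^ α := by
  have hl2 : 0 < Real.log 2 := Real.log_pos (by norm_num)
  have h1 : (3 : ℝ) ^ f * (3 / 2) ^ g ≤ ((3 : ℝ) ^ (2 * K + 1)) ^ α := by
    rw [← Real.log_le_log_iff (by positivity) (by positivity), Real.log_mul (by positivity) (by positivity),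
      Real.log_rpow (by positivity), Real.log_pow, Real.log_pow, Real.log_pow,
      Real.log_div (by norm_num) (by norm_num)]
    have hg : (g : ℝ) = 2 * K + 1 - f := by
      rw [eq_sub_iff_add_eq, add_comm]; exact_mod_cast hfg
    rw [hg]
    push_cast
    nlinarith [mul_le_mul_of_nonneg_right hf hl2.le]
  have hgK : (g : ℝ) + 1 ≤ 2 * (K + 1) := by
    have : g + 1 ≤ 2 * (K + 1) := by omega
    exact_mod_cast this
  calc 2 * (3 : ℝ) ^ f * b ≤ 2 * (3 : ℝ) ^ f * (4 * (g + 1) * (3 / 2) ^ g) := by gcongr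
    _ = 8 * (g + 1) * ((3 : ℝ) ^ f * (3 / 2) ^ g) := by ring
    _ ≤ 8 * (2 * (K + 1)) * ((3 : ℝ) ^ (2 * K + 1)) ^ α := by gcongr
    _ = _ := by ring

/-- Free positions. -/
def freeJ (f : ℕ → ℕ) (i : ℕ) : Prop := i - Nat.sqrt i * Nat.sqrt i < f (Nat.sqrt i)

instance (f : ℕ → ℕ) : DecidablePred (freeJ f) := fun i => by unfold freeJ; infer_instance

theorem freeJ_iff (f : ℕ → ℕ) (K j : ℕ) (hj : j ≤ 2 * K) : freeJ f (K * K + j) ↔ j < f K := by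
  unfold freeJ
  rw [Nat.sqrt_add_eq K (by omega)]
  simp

theorem freeJ_count (f : ℕ → ℕ) (hf : ∀ K, f K ≤ 2 * K + 1) (θ : ℝ)
    (hθ : ∀ K : ℕ, θ * (2 * K + 1) - 1 ≤ f K) (K : ℕ) :
    θ * (K : ℝ) ^ 2 - K ≤ Nat.count (freeJ f) (K * K) := by
  induction K with
  | zero => simp
  | succ K ih =>
    have h1 : Nat.count (freeJ f) (K * K) + f K ≤ Nat.count (freeJ f) ((K + 1) * (K + 1)) := by
      have h2 : Nat.count (fun j => freeJ f (K * K + j)) (f K) = f K := by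
        rw [Nat.count_iff_forall]
        intro j hj
        have := hf K
        exact (freeJ_iff f K j (by omega)).2 hj
      calc _ = Nat.count (freeJ f) (K * K + f K) := by rw [Nat.count_add, h2]
        _ ≤ _ := Nat.count_monotone _ (by have := hf K; nlinarith)
    have h1' : (Nat.count (freeJ f) (K * K) : ℝ) + f K ≤ Nat.count (freeJ f) ((K + 1) * (K + 1)) := by
      exact_mod_cast h1
    have := hθ K
    push_cast
    nlinarith

theorem holder_bound (f : ℕ → ℕ) (hf : ∀ K, f K ≤ 2 * K + 1) (θ : ℝ)
    (hθ : ∀ K : ℕ, θ * (2 * K + 1) - 1 ≤ f K) (s : NNReal)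
    (hs : s * Real.log 3 < θ * Real.log 2) :
    ∃ C : NNReal, ∀ i, (1 / 2 : ℝ) ^ (Nat.count (freeJ f) i) ≤
      C * ((1 / 3 : ℝ) ^ (i + 1)) ^ (s : ℝ) := by
  have hl2 : 0 < Real.log 2 := Real.log_pos (by norm_num)
  have hl3 : 0 < Real.log 3 := Real.log_pos (by norm_num)
  set D := θ * Real.log 2 - s * Real.log 3 with hD
  have hD0 : 0 < D := by linarith
  set q := s * Real.log 3 with hq
  have hq0 : 0 ≤ q := by positivity
  set p := Real.log 2 + 2 * q with hp
  refine ⟨(Real.exp (q + p ^ 2 / (4 * D))).toNNReal, fun i => ?_⟩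
  rw [Real.coe_toNNReal _ (Real.exp_pos _).le]
  set K := Nat.sqrt i
  have h1 : θ * (K : ℝ) ^ 2 - K ≤ Nat.count (freeJ f) i :=
    (freeJ_count f hf θ hθ K).trans (by exact_mod_cast Nat.count_monotone _ (Nat.sqrt_le i))
  have h2 : (i : ℝ) + 1 ≤ (K + 1) ^ 2 := by
    have := Nat.lt_succ_sqrt' i
    exact_mod_cast this
  rw [← Real.log_le_log_iff (by positivity) (by positivity), Real.log_mul (by positivity) (by positivity),
    Real.log_rpow (by positivity), Real.log_pow, Real.log_pow, Real.log_exp, one_div, one_div,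
    Real.log_inv, Real.log_inv]
  push_cast
  have h3 : 0 ≤ D * K ^ 2 - p * K + p ^ 2 / (4 * D) := by
    have : D * K ^ 2 - p * K + p ^ 2 / (4 * D) = D * (K - p / (2 * D)) ^ 2 := by
      field_simp
      ring
    rw [this]
    positivity
  have h4 := mul_le_mul_of_nonneg_right h1 hl2.le
  have h5 := mul_le_mul_of_nonneg_left h2 hq0
  have e : (s : ℝ) * ((↑i + 1) * -Real.log 3) = - (q * (i + 1)) := by rw [hq]; ring
  rw [e]
  nlinarith

theorem freeJ_infinite (f : ℕ → ℕ) (θ : ℝ) (h0 : 0 < θ)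
    (hθ : ∀ K : ℕ, θ * (2 * K + 1) - 1 ≤ f K) : (Set.ofPred (freeJ f)).Infinite := by
  apply Set.infinite_of_forall_exists_gt
  intro n
  obtain ⟨m, hm⟩ := exists_nat_gt (1 / θ)
  rw [div_lt_iff₀ h0] at hm
  refine ⟨(n + m + 1) * (n + m + 1), ?_, by nlinarith⟩
  show freeJ f _
  have := (freeJ_iff f (n + m + 1) 0 (by omega)).2 (by
    have := hθ (n + m + 1)
    push_cast at this
    have hn : (0:ℝ) ≤ n := by positivity
    have hm' : (0:ℝ) ≤ m := by positivity
    have : (0 : ℝ) < f (n + m + 1) := by nlinarith [mul_nonneg h0.le hn, mul_nonneg h0.le hm']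
    exact_mod_cast this)
  simpa using this

theorem exists_closed_lowDim_meeting_translates (α : ℝ)
    (hα₁ : 1 - Real.log 2 / Real.log 3 ≤ α) (hα₂ : α ≤ 1) :
    ∃ F : Set ℝ, IsClosed F ∧ dimH F ≤ ENNReal.ofReal α ∧
      ∀ r ∈ Set.Icc (0 : ℝ) 1,
        ENNReal.ofReal (α - 1 + Real.log 2 / Real.log 3) ≤
          dimH (((· + r) '' ternaryCantorSet) ∩ F) := by
  have hl2 : 0 < Real.log 2 := Real.log_pos (by norm_num)
  have hl3 : 0 < Real.log 3 := Real.log_pos (by norm_num)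
  set β := α - 1 + Real.log 2 / Real.log 3 with hβ
  have hβ0 : 0 ≤ β := by linarith
  have hβ3 : β * Real.log 3 = (α - 1) * Real.log 3 + Real.log 2 := by
    rw [hβ]; field_simp
  obtain ⟨θ, hθ⟩ : ∃ θ, θ * Real.log 2 = β * Real.log 3 :=
    ⟨β * Real.log 3 / Real.log 2, by field_simp⟩
  have hθ0 : 0 ≤ θ := by
    by_contra hneg
    have : θ * Real.log 2 < 0 := mul_neg_of_neg_of_pos (not_le.1 hneg) hl2
    have : 0 ≤ β * Real.log 3 := by positivity
    linarith
  have hθ1 : θ ≤ 1 := by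
    by_contra hneg
    nlinarith [not_le.1 hneg]
  let f : ℕ → ℕ := fun K => ⌊θ * (2 * K + 1)⌋₊
  have hf1 : ∀ K : ℕ, (f K : ℝ) ≤ θ * (2 * K + 1) := fun K => Nat.floor_le (by positivity)
  have hf2 : ∀ K : ℕ, θ * (2 * K + 1) - 1 ≤ f K := fun K => by
    have := Nat.lt_floor_add_one (θ * (2 * (K : ℝ) + 1))
    simp only [f]; linarith
  have hf3 : ∀ K, f K ≤ 2 * K + 1 := fun K => by
    have h1 := hf1 K
    have h2 : (f K : ℝ) ≤ 2 * K + 1 := h1.trans (mul_le_of_le_one_left (by positivity) hθ1)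
    exact_mod_cast h2
  let g : ℕ → ℕ := fun K => 2 * K + 1 - f K
  have hfg : ∀ K, f K + g K = 2 * K + 1 := fun K => by
    have := hf3 K
    simp only [g]; omega
  choose B hB1 hB2 using thin_cover
  refine ⟨finF (preP f g B), finF_closed _, ?_, ?_⟩
  · apply dim_upper'
    · simp [preP]
    · intro K
      have h1 : ((preP f g B (K + 1)).card : ℝ) ≤
          (preP f g B K).card * ((2 * 3 ^ f K) * (B (g K)).card) := by
        exact_mod_cast preP_card f g B K
      refine h1.trans ?_
      have := step_bound α θ (hθ.trans hβ3) K (f K) (g K) (hfg K) (hf1 K) _ (hB1 (g K))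
      gcongr
  · intro r hr
    obtain ⟨w, -, hw⟩ := Real.ofDigits_SurjOn (b := 3) (by norm_num) hr
    let d : ℕ → ℕ := fun i => (w i : ℕ)
    have hd : ∀ i, d i ≤ 2 := fun i => by have := (w i).isLt; simp only [d]; omega
    have hdr : terS (fun i => (d i : ℝ)) = r := by
      rw [← hw]
      simp only [terS, Real.ofDigits, Real.ofDigitsTerm, d, div_eq_mul_inv]
      norm_num
    choose c hc1 hc2 using fun K : ℕ => hB2 (g K) (fun j => d (K * K + f K + j)) (fun j => hd _)
    let cc : ℕ → ℕ := fun i => c (Nat.sqrt i) (i - Nat.sqrt i * Nat.sqrt i - f (Nat.sqrt i))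
    refine ENNReal.le_of_forall_nnreal_lt fun s hs => ?_
    rcases eq_or_ne s 0 with rfl | hs0
    · simp
    have hspos : 0 < s := pos_iff_ne_zero.2 hs0
    have hs' : (s : ℝ) < β := by
      rw [← ENNReal.ofReal_coe_nnreal] at hs
      exact (ENNReal.ofReal_lt_ofReal_iff_of_nonneg (by positivity)).1 hs
    have hs3 : s * Real.log 3 < θ * Real.log 2 := by
      rw [hθ]; gcongr
    have hθpos : 0 < θ := by
      by_contra hneg
      have h0 : θ = 0 := le_antisymm (not_lt.1 hneg) hθ0
      rw [h0, zero_mul] at hs3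
      have : 0 ≤ s * Real.log 3 := by positivity
      linarith
    obtain ⟨C, hC⟩ := holder_bound f hf3 θ hf2 s hs3
    refine dim_lower (freeJ f) (freeJ_infinite f θ hθpos hf2) (fun i => (cc i : ℝ)) (fun i => by
      rcases hc1 (Nat.sqrt i) (i - Nat.sqrt i * Nat.sqrt i - f (Nat.sqrt i)) with h | h <;>
        simp [cc, h]) s hspos C hC r _ ?_
    intro a ha hac
    have hmem : terS a ∈ ternaryCantorSet := by
      unfold ternaryCantorSet
      exact Set.mem_setOf_eq ▸ ⟨a, ha, rfl⟩
    refine ⟨⟨terS a, hmem, rfl⟩, ?_⟩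
    obtain ⟨a', ha'⟩ : ∃ a' : ℕ → ℕ, ∀ i, (a' i : ℝ) = a i := by
      have : ∀ i, ∃ n : ℕ, (n : ℝ) = a i := fun i => by
        rcases ha i with h | h
        · exact ⟨0, by simp [h]⟩
        · exact ⟨2, by simp [h]⟩
      choose a' ha' using this
      exact ⟨a', ha'⟩
    have ha'2 : ∀ i, a' i ≤ 2 := fun i => by
      have : (a' i : ℝ) ≤ 2 := by
        rw [ha']
        rcases ha i with h | h <;> simp [h]
      exact_mod_cast this
    let e : ℕ → ℕ := fun i => d i + a' i
    have he4 : ∀ i, e i ≤ 4 := fun i => by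
      have := hd i
      have := ha'2 i
      simp only [e]; omega
    have hsum : terS a + r = terS (fun i => (e i : ℝ)) := by
      rw [← hdr, terS_add _ _ 2]
      · simp only [e]
        congr 1
        funext i
        push_cast
        rw [ha']; ring
      · intro i
        rcases ha i with h | h <;> simp [h]
      · intro i
        rw [abs_of_nonneg (by positivity)]
        exact_mod_cast hd i
    have hP := preP_mem f g hfg B e he4 (by
      intro K
      have h1 := hc2 K
      rw [← terT_sum] at h1
      convert h1 using 1
      apply terT_congr
      intro j hj
      simp only [e]
      congr 1
      have hlen := hfg K
      have h2 : ¬ freeJ f (K * K + f K + j) := by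
        rw [add_assoc, freeJ_iff f K _ (by omega)]
        omega
      have h3 := hac _ h2
      rw [← ha'] at h3
      have h4 : a' (K * K + f K + j) = cc (K * K + f K + j) := by exact_mod_cast h3
      rw [h4]
      simp only [cc]
      rw [add_assoc, Nat.sqrt_add_eq K (by omega)]
      congr 1
      omega)
    rw [hsum]
    refine Set.mem_iInter.2 fun K => ?_
    simp only [Set.mem_iUnion]
    refine ⟨_, hP K, ?_⟩
    have he4' : ∀ i, |(e i : ℝ)| ≤ 4 := fun i => by
      rw [abs_of_nonneg (by positivity)]
      exact_mod_cast he4 i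
    rw [terS_split _ 4 he4' (K * K), ← terT_real, add_div]
    have h1 := terS_nonneg (fun i => (e (i + K * K) : ℝ)) (fun i => by positivity)
    have h2 := (le_abs_self _).trans (terS_abs_le (fun i => (e (i + K * K) : ℝ)) 4 (fun i => he4' _))
    constructor
    · have : 0 ≤ terS (fun i => (e (i + K * K) : ℝ)) / 3 ^ (K * K) := by positivity
      linarith
    · gcongr
      linarith
end

section
/- Let A ⊆ ℝ, let {Iₙ} be a countable collection of intervals in ℝ, let aₙ > 0 for each n, and let c > 0. Suppose that for every x ∈ A one has ∑_{n : x ∈ Iₙ} aₙ > c. Then ∑ₙ aₙ |Iₙ| ≥ c · λ*(A), where λ* denotes Lebesgue outer measure and |Iₙ| is the length of the interval Iₙ. -/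
open MeasureTheory

/-- **Marstrand-type covering lemma.** Let `A ⊆ ℝ`, let `{Iₙ}` be a countable
collection of intervals, `aₙ > 0`, `c > 0`.  If for every `x ∈ A` one has
`∑_{n : x ∈ Iₙ} aₙ > c`, then `∑ₙ aₙ |Iₙ| ≥ c · λ*(A)`, where `λ*` is Lebesgue
outer measure and `|Iₙ|` the length of `Iₙ`. -/
theorem marstrand_covering_lemma (A : Set ℝ) (I : ℕ → Set ℝ)
    (hI : ∀ n, (I n).OrdConnected) (a : ℕ → ℝ) (ha : ∀ n, 0 < a n)
    (c : ℝ) (hc : 0 < c)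
    (hcover : ∀ x ∈ A, ENNReal.ofReal c < ∑' n : {n : ℕ | x ∈ I n}, ENNReal.ofReal (a n)) :
    ENNReal.ofReal c * volume A ≤ ∑' n : ℕ, ENNReal.ofReal (a n) * volume (I n) := by
  have hm : ∀ n, MeasurableSet (I n) := fun n => (hI n).measurableSet
  have hf : Measurable
      (fun x => ∑' n, (I n).indicator (fun _ => ENNReal.ofReal (a n)) x) :=
    Measurable.ennreal_tsum fun n => measurable_const.indicator (hm n)
  calc ENNReal.ofReal c * volume A
      ≤ ENNReal.ofReal c * volume {x | ENNReal.ofReal c ≤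
          ∑' n, (I n).indicator (fun _ => ENNReal.ofReal (a n)) x} := by
        gcongr
        intro x hx
        have h := (hcover x hx).le
        rw [tsum_subtype {n : ℕ | x ∈ I n} (fun n => ENNReal.ofReal (a n))] at h
        exact h
    _ ≤ ∫⁻ x, ∑' n, (I n).indicator (fun _ => ENNReal.ofReal (a n)) x :=
        mul_meas_ge_le_lintegral hf _
    _ = ∑' n : ℕ, ENNReal.ofReal (a n) * volume (I n) := by
        rw [lintegral_tsum fun n => (measurable_const.indicator (hm n)).aemeasurable]
        congr 1
        funext n
        exact lintegral_indicator_const (hm n) _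
end

section
/- (Mattila's density bound) Let μ be a Radon measure on ℝⁿ (a Borel measure finite on compact sets), let E ⊆ ℝⁿ, let 0 < λ < ∞ and α > 0. Suppose that for every x ∈ E, limsup_{δ→0⁺} μ(N_δ(x))/(2δ)^α ≤ λ, where N_δ(x) is the closed ball of radius δ centered at x. Then ℋ^α(E) ≥ μ(E)/(2^α λ), where μ(E) denotes the outer measure of E under μ. -/
open MeasureTheory Filter
open scoped Topology ENNReal

/-- Uniform-scale version. -/
theorem mattila_aux {n : ℕ} (μ : Measure (EuclideanSpace ℝ (Fin n)))
    (F : Set (EuclideanSpace ℝ (Fin n)))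
    (α : ℝ) (hα : 0 < α) (L : ℝ) (hL : 0 < L) (r : ℝ) (hr : 0 < r)
    (h : ∀ x ∈ F, ∀ δ : ℝ, 0 < δ → δ < r →
      μ (Metric.closedBall x δ) ≤ ENNReal.ofReal L * ENNReal.ofReal ((2 * δ) ^ α)) :
    μ F ≤ ENNReal.ofReal (2 ^ α * L) * μH[α] F := by
  have hc : 0 < 2 ^ α * L := by positivity
  have hc0 : ENNReal.ofReal (2 ^ α * L) ≠ 0 := by simpa using hc
  have hct : ENNReal.ofReal (2 ^ α * L) ≠ ∞ := ENNReal.ofReal_ne_top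
  have key : (ENNReal.ofReal (2 ^ α * L))⁻¹ • μ.restrict F ≤ μH[α] := by
    refine Measure.le_hausdorffMeasure α _ (ENNReal.ofReal (r / 2)) (by simpa using hr) ?_
    intro s hs
    rw [Measure.smul_apply, smul_eq_mul, mul_comm, ← div_eq_mul_inv,
      ENNReal.div_le_iff hc0 hct]
    refine (measure_mono subset_closure).trans ?_
    rw [Measure.restrict_apply isClosed_closure.measurableSet]
    rcases (closure s ∩ F).eq_empty_or_nonempty with he | ⟨x, hxs, hxF⟩
    · simp [he]
    have hdt : Metric.ediam s ≠ ∞ := ne_top_of_le_ne_top ENNReal.ofReal_ne_top hs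
    obtain ⟨d, hd0, hd⟩ : ∃ d : ℝ, 0 ≤ d ∧ Metric.ediam s = ENNReal.ofReal d :=
      ⟨(Metric.ediam s).toReal, ENNReal.toReal_nonneg, (ENNReal.ofReal_toReal hdt).symm⟩
    have hdr : d ≤ r / 2 := by
      rw [hd] at hs
      exact (ENNReal.ofReal_le_ofReal_iff (by positivity)).1 hs
    have hsub : ∀ δ, d ≤ δ → closure s ⊆ Metric.closedBall x δ := by
      intro δ hδ y hy
      have h1 := Metric.edist_le_ediam_of_mem hy hxs
      rw [Metric.ediam_closure, hd, edist_dist] at h1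
      have := (ENNReal.ofReal_le_ofReal_iff hd0).1 h1
      exact Metric.mem_closedBall.2 (this.trans hδ)
    have hb : ∀ δ, d < δ → δ < r →
        μ (closure s ∩ F) ≤ ENNReal.ofReal L * ENNReal.ofReal ((2 * δ) ^ α) := fun δ h1 h2 =>
      (measure_mono (Set.inter_subset_left.trans (hsub δ h1.le))).trans
        (h x hxF δ (hd0.trans_lt h1) h2)
    have hcont : Tendsto (fun δ : ℝ => ENNReal.ofReal L * ENNReal.ofReal ((2 * δ) ^ α))
        (𝓝[>] d) (𝓝 (ENNReal.ofReal L * ENNReal.ofReal ((2 * d) ^ α))) := by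
      have : Continuous (fun δ : ℝ => (2 * δ) ^ α) :=
        (continuous_const.mul continuous_id).rpow_const (fun _ => Or.inr hα.le)
      exact ((ENNReal.Tendsto.const_mul (ENNReal.continuous_ofReal.comp this).continuousAt
        (Or.inr ENNReal.ofReal_ne_top))).mono_left nhdsWithin_le_nhds
    have hfin : μ (closure s ∩ F) ≤ ENNReal.ofReal L * ENNReal.ofReal ((2 * d) ^ α) := by
      refine ge_of_tendsto hcont ?_
      filter_upwards [Ioo_mem_nhdsGT (show d < r by linarith)] with δ hδ
      exact hb δ hδ.1 hδ.2
    refine hfin.trans_eq ?_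
    rw [hd, ENNReal.ofReal_rpow_of_nonneg hd0 hα.le, ← ENNReal.ofReal_mul hL.le,
      ← ENNReal.ofReal_mul (by positivity), Real.mul_rpow (by norm_num) hd0]
    congr 1; ring
  have := key F
  rw [Measure.smul_apply, Measure.restrict_apply_self, smul_eq_mul, mul_comm, ← div_eq_mul_inv,
      ENNReal.div_le_iff hc0 hct, mul_comm] at this
  exact this

/-- **Mattila's density bound.** Let `μ` be a Borel measure on `ℝⁿ` that is finite on
compact sets, `E ⊆ ℝⁿ`, `0 < l < ∞`, `α > 0`.  If for every `x ∈ E`,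
`limsup_{δ→0⁺} μ(N_δ(x))/(2δ)^α ≤ l`, then `ℋ^α(E) ≥ μ(E)/(2^α l)`. -/
theorem mattila_density_bound {n : ℕ} (μ : Measure (EuclideanSpace ℝ (Fin n)))
    [IsFiniteMeasureOnCompacts μ] (E : Set (EuclideanSpace ℝ (Fin n)))
    (α : ℝ) (hα : 0 < α) (l : ℝ) (hl : 0 < l)
    (hdens : ∀ x ∈ E,
      Filter.limsup (fun δ : ℝ => μ (Metric.closedBall x δ) / ENNReal.ofReal ((2 * δ) ^ α))
        (𝓝[>] (0 : ℝ)) ≤ ENNReal.ofReal l) :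
    μ E / ENNReal.ofReal (2 ^ α * l) ≤ μH[α] E := by
  have hc : 0 < 2 ^ α * l := by positivity
  have hc0 : ENNReal.ofReal (2 ^ α * l) ≠ 0 := by simpa using hc
  rw [ENNReal.div_le_iff hc0 ENNReal.ofReal_ne_top, mul_comm]
  have main : ∀ L : ℝ, l < L → μ E ≤ ENNReal.ofReal (2 ^ α * L) * μH[α] E := by
    intro L hL
    have hL0 : 0 < L := hl.trans hL
    let F : ℕ → Set (EuclideanSpace ℝ (Fin n)) := fun k =>
      {x | x ∈ E ∧ ∀ δ : ℝ, 0 < δ → δ < 1 / ((k : ℝ) + 1) →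
        μ (Metric.closedBall x δ) ≤ ENNReal.ofReal L * ENNReal.ofReal ((2 * δ) ^ α)}
    have hmono : Monotone F := by
      intro i j hij x hx
      refine ⟨hx.1, fun δ h0 h1 => hx.2 δ h0 (h1.trans_le ?_)⟩
      exact one_div_le_one_div_of_le (by positivity) (by gcongr)
    have hE : E = ⋃ k, F k := by
      refine Set.Subset.antisymm (fun x hx => ?_) (Set.iUnion_subset fun k x hx => hx.1)
      have h1 := eventually_lt_of_limsup_lt
        ((hdens x hx).trans_lt ((ENNReal.ofReal_lt_ofReal_iff hL0).2 hL))
      obtain ⟨u, hu, hu2⟩ := mem_nhdsGT_iff_exists_Ioo_subset.1 h1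
      obtain ⟨k, hk⟩ := exists_nat_one_div_lt (Set.mem_Ioi.1 hu)
      refine Set.mem_iUnion.2 ⟨k, hx, fun δ h0 h1 => ?_⟩
      have h2 := hu2 ⟨h0, h1.trans hk⟩
      simp only [Set.mem_setOf_eq] at h2
      have hp : 0 < (2 * δ) ^ α := by positivity
      exact (ENNReal.div_le_iff (by simpa using hp) ENNReal.ofReal_ne_top).1 h2.le
    rw [show μ E = ⨆ k, μ (F k) by rw [← hmono.measure_iUnion, ← hE]]
    refine iSup_le fun k => ?_
    refine (mattila_aux μ (F k) α hα L hL0 (1 / ((k : ℝ) + 1)) (by positivity)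
      (fun x hx => hx.2)).trans ?_
    gcongr
    exact fun x hx => hx.1
  have hcont : Tendsto (fun L : ℝ => ENNReal.ofReal (2 ^ α * L) * μH[α] E) (𝓝[>] l)
      (𝓝 (ENNReal.ofReal (2 ^ α * l) * μH[α] E)) := by
    have : Continuous (fun L : ℝ => 2 ^ α * L) := continuous_const.mul continuous_id
    exact (ENNReal.Tendsto.mul_const (ENNReal.continuous_ofReal.comp this).continuousAt
      (Or.inl hc0)).mono_left nhdsWithin_le_nhds
  refine ge_of_tendsto hcont ?_
  filter_upwards [self_mem_nhdsWithin] with L hL using main L hL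
end

section
/- Let α be a real number with 1 − log 2/log 3 < α < 1, let D = (1 − α)/(log 2/log 3), let A = {⌊y/D⌋ : y a positive integer}, and let Ā be the complement of A in the positive integers. Then the (α − 1 + log 2/log 3)-dimensional Hausdorff measure of 𝒞_{Ā} is strictly positive. -/
open MeasureTheory
open scoped ENNReal

namespace CantorAux

lemma sep {a b : ℕ → Fin 3} {m : ℕ} (h : ∀ i < m, a i = b i) (ha : a m = 2) (hb : b m = 0) :
    ((3 : ℝ) ^ (m + 1))⁻¹ ≤ Real.ofDigits a - Real.ofDigits b := by
  rw [Real.ofDigits_eq_sum_add_ofDigits a (m + 1), Real.ofDigits_eq_sum_add_ofDigits b (m + 1),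
    Finset.sum_range_succ, Finset.sum_range_succ]
  have h1 : ∑ i ∈ Finset.range m, Real.ofDigitsTerm a i
      = ∑ i ∈ Finset.range m, Real.ofDigitsTerm b i :=
    Finset.sum_congr rfl fun i hi => by simp [Real.ofDigitsTerm, h i (Finset.mem_range.mp hi)]
  have h2 : Real.ofDigitsTerm a m = 2 * ((3 : ℝ) ^ (m + 1))⁻¹ := by
    simp [Real.ofDigitsTerm, ha]
  have h3 : Real.ofDigitsTerm b m = 0 := by
    simp [Real.ofDigitsTerm, hb]
  rw [h1, h2, h3]
  have hc : (0 : ℝ) < ((3 : ℝ) ^ (m + 1))⁻¹ := by positivity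
  have := Real.ofDigits_nonneg (fun i => a (i + (m + 1)))
  have := Real.ofDigits_le_one (fun i => b (i + (m + 1)))
  push_cast
  nlinarith

open Classical in
noncomputable def e (p : ℕ → Prop) (d : ℕ → Fin 2) (n : ℕ) : Fin 3 :=
  if p n ∧ d (Nat.count p n) = 1 then 2 else 0

open Classical in
lemma key {p : ℕ → Prop} (hp : (Set.ofPred p).Infinite) {d d' : ℕ → Fin 2} (hd : d ≠ d') :
    ∃ m, p m ∧ |Real.ofDigits d - Real.ofDigits d'| ≤ ((2 : ℝ) ^ (Nat.count p m))⁻¹ ∧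
      ((3 : ℝ) ^ (m + 1))⁻¹ ≤ |Real.ofDigits (e p d) - Real.ofDigits (e p d')| := by
  have inj : ∀ i, e p d (Nat.nth p i) = e p d' (Nat.nth p i) → d i = d' i := by
    intro i hi
    have h1 := Nat.nth_mem_of_infinite hp i
    have h2 := Nat.count_nth_of_infinite hp i
    simp only [e, h1, h2, true_and] at hi
    generalize d i = u at *
    generalize d' i = v at *
    revert hi
    revert u v
    decide
  have hex : ∃ m, e p d m ≠ e p d' m := by
    obtain ⟨k, hk⟩ := Function.ne_iff.mp hd
    exact ⟨Nat.nth p k, fun h => hk (inj k h)⟩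
  set m := Nat.find hex with hm
  have hm1 : e p d m ≠ e p d' m := Nat.find_spec hex
  have hm2 : ∀ i < m, e p d i = e p d' i := fun i hi => by
    have := Nat.find_min hex hi
    simpa using this
  refine ⟨m, ?_, ?_, ?_⟩
  · by_contra hpm
    simp [e, hpm] at hm1
  · have := Real.abs_ofDigits_sub_ofDigits_le (x := d) (y := d') (n := Nat.count p m)
      (fun i hi => inj i (hm2 _ (Nat.nth_lt_of_lt_count hi)))
    simpa using this
  · have h02 : ∀ d, e p d m = 0 ∨ e p d m = 2 := fun d => by
      unfold e; split_ifs <;> simp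
    rcases h02 d with h | h <;> rcases h02 d' with h' | h'
    · rw [h, h'] at hm1; exact absurd rfl hm1
    · rw [abs_sub_comm]
      exact (sep (fun i hi => (hm2 i hi).symm) h' h).trans (le_abs_self _)
    · exact (sep hm2 h h').trans (le_abs_self _)
    · rw [h, h'] at hm1; exact absurd rfl hm1

open Classical in
lemma count_bound (D : ℝ) (hD0 : 0 < D) (hD1 : D < 1) (A : Set ℕ)
    (hA : A = {m : ℕ | ∃ y : ℕ, 0 < y ∧ (m : ℤ) = ⌊(y : ℝ) / D⌋}) (n : ℕ) :
    (n : ℝ) * (1 - D) - 1 ≤ (Nat.count (fun n => n + 1 ∉ A) n : ℝ) := by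
  rw [Nat.count_eq_card_filter_range]
  have h1 := Finset.card_filter_add_card_filter_not (s := Finset.range n) (fun i => i + 1 ∉ A)
  have h2 : ((Finset.range n).filter (fun i => ¬ (i + 1 ∉ A))).card
      ≤ ((Finset.Icc 1 ⌊D * (n + 1)⌋₊).image (fun y : ℕ => ⌊(y : ℝ) / D⌋.toNat - 1)).card := by
    apply Finset.card_le_card
    intro i hi
    simp only [Finset.mem_filter, Finset.mem_range, not_not, hA, Set.mem_ofPred_eq] at hi
    obtain ⟨hin, y, hy, hy2⟩ := hi
    rw [Finset.mem_image]
    refine ⟨y, ?_, by rw [← hy2]; simp⟩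
    rw [Finset.mem_Icc]
    refine ⟨hy, Nat.le_floor ?_⟩
    have h3 := Int.lt_floor_add_one ((y : ℝ) / D)
    rw [← hy2, div_lt_iff₀ hD0] at h3
    push_cast at h3
    have : (i : ℝ) + 1 ≤ n := by exact_mod_cast hin
    nlinarith
  have h3 := h2.trans Finset.card_image_le
  rw [Nat.card_Icc, Nat.add_sub_cancel] at h3
  have h4 : (((Finset.range n).filter (fun i => ¬ (i + 1 ∉ A))).card : ℝ) ≤ D * (n + 1) :=
    (Nat.cast_le.mpr h3).trans (Nat.floor_le (by positivity))
  rw [Finset.card_range] at h1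
  have h5 : (((Finset.range n).filter (fun i => i + 1 ∉ A)).card : ℝ)
    + (((Finset.range n).filter (fun i => ¬ (i + 1 ∉ A))).card : ℝ) = n := by exact_mod_cast h1
  linarith

end CantorAux

open CantorAux in
/-- Let `1 − log 2/log 3 < α < 1`, `D = (1 − α)/(log 2/log 3)`,
`A = {⌊y/D⌋ : y a positive integer}`, `Ā` its complement in the positive
integers.  Then `ℋ^{α − 1 + log 2/log 3}(𝒞_{Ā}) > 0`. -/
theorem hausdorffMeasure_cantorSetRestricted_compl_pos (α : ℝ)
    (hα₁ : 1 - Real.log 2 / Real.log 3 < α) (hα₂ : α < 1)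
    (D : ℝ) (hD : D = (1 - α) / (Real.log 2 / Real.log 3))
    (A : Set ℕ) (hA : A = {m : ℕ | ∃ y : ℕ, 0 < y ∧ (m : ℤ) = ⌊(y : ℝ) / D⌋}) :
    0 < μH[α - 1 + Real.log 2 / Real.log 3]
      (cantorSetRestricted {m : ℕ | 0 < m ∧ m ∉ A}) := by
  classical
  have l2 : 0 < Real.log 2 := Real.log_pos (by norm_num)
  have l3 : 0 < Real.log 3 := Real.log_pos (by norm_num)
  set s := Real.log 2 / Real.log 3 with hs
  have hs0 : 0 < s := div_pos l2 l3
  have hD0 : 0 < D := by rw [hD]; exact div_pos (by linarith) hs0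
  have hD1 : D < 1 := by rw [hD, div_lt_one hs0]; linarith
  set β := α - 1 + s with hβ
  have hβ0 : 0 < β := by linarith
  have hβD : β = s * (1 - D) := by rw [hD]; field_simp; linarith
  set p : ℕ → Prop := fun n => n + 1 ∉ A with hpdef
  have hcount : ∀ (n : ℕ) (_ : DecidablePred p), (n : ℝ) * (1 - D) - 1 ≤ (Nat.count p n : ℝ) := by
    intro n _
    convert count_bound D hD0 hD1 A hA n
  have hp : (Set.ofPred p).Infinite := by
    intro hfin
    obtain ⟨n, hn⟩ := exists_nat_gt (((hfin.toFinset.card : ℝ) + 1) / (1 - D))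
    rw [div_lt_iff₀ (by linarith)] at hn
    have h1 := hcount n inferInstance
    have h2 : Nat.count p n ≤ hfin.toFinset.card := by
      rw [Nat.count_eq_card_filter_range]
      apply Finset.card_le_card
      intro i hi
      rw [Set.Finite.mem_toFinset]
      exact (Finset.mem_filter.mp hi).2
    have h3 : (Nat.count p n : ℝ) ≤ hfin.toFinset.card := by exact_mod_cast h2
    linarith
  let g : (ℕ → Fin 2) → ℝ := fun d => Real.ofDigits (e p d)
  have hold : ∀ d d', |Real.ofDigits d - Real.ofDigits d'| ≤ 4 * |g d - g d'| ^ β := by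
    intro d d'
    by_cases hd : d = d'
    · subst hd; simp; positivity
    obtain ⟨m, hpm, h1, h2⟩ := key hp hd
    refine h1.trans ?_
    have h3 : (((3 : ℝ) ^ (m + 1))⁻¹) ^ β ≤ |g d - g d'| ^ β :=
      Real.rpow_le_rpow (by positivity) h2 hβ0.le
    refine le_trans ?_ (mul_le_mul_of_nonneg_left h3 (by norm_num))
    have h4 := hcount (m + 1) (fun a => Classical.propDecidable (p a))
    rw [Nat.count_succ, if_pos hpm] at h4
    have e3 : (((3 : ℝ) ^ (m + 1))⁻¹) ^ β = (2 : ℝ) ^ (-(((m + 1 : ℕ) : ℝ) * (1 - D))) := by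
      rw [← Real.rpow_natCast, ← Real.rpow_neg (by norm_num), ← Real.rpow_mul (by norm_num),
        Real.rpow_def_of_pos (by norm_num), Real.rpow_def_of_pos (by norm_num), hβD, hs]
      congr 1
      field_simp
    have e4 : (4 : ℝ) = (2 : ℝ) ^ (2 : ℝ) := by norm_num
    rw [e3, e4, ← Real.rpow_add (by norm_num), ← Real.rpow_natCast, ← Real.rpow_neg (by norm_num)]
    apply Real.rpow_le_rpow_of_exponent_le (by norm_num)
    push_cast at h4 ⊢
    linarith
  have hsub : Set.range g ⊆ cantorSetRestricted {m : ℕ | 0 < m ∧ m ∉ A} := by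
    rintro _ ⟨d, rfl⟩
    refine ⟨fun n => ((e p d n : ℕ) : ℝ), ?_, ?_, ?_⟩
    · intro n
      unfold e; dsimp only; split_ifs <;> simp
    · intro n hn
      refine ⟨Nat.succ_pos n, ?_⟩
      by_contra hc
      have : ¬ p n := by simpa [hpdef] using hc
      simp [e, this] at hn
    · simp [g, Real.ofDigits, Real.ofDigitsTerm, div_eq_mul_inv]
  let f : ℝ → ℝ := fun x => Real.ofDigits (Function.invFun g x)
  have hinv : ∀ x ∈ Set.range g, g (Function.invFun g x) = x := fun x hx =>
    Function.invFun_eq hx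
  obtain ⟨b, hb⟩ : ∃ b : NNReal, (b : ℝ) = β := ⟨⟨β, hβ0.le⟩, rfl⟩
  have hf : HolderOnWith 4 b f (Set.range g) := by
    intro x hx y hy
    have h := hold (Function.invFun g x) (Function.invFun g y)
    rw [hinv x hx, hinv y hy] at h
    rw [edist_dist, edist_dist, Real.dist_eq, Real.dist_eq]
    refine (ENNReal.ofReal_le_ofReal h).trans ?_
    rw [ENNReal.ofReal_mul (by norm_num), hb, ENNReal.ofReal_rpow_of_nonneg (abs_nonneg _) hβ0.le]
    simp
  have himg : Set.Icc (0 : ℝ) 1 ⊆ f '' (Set.range g) := by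
    intro t ht
    obtain ⟨d, -, rfl⟩ := Real.ofDigits_SurjOn (b := 2) (by norm_num) ht
    refine ⟨g d, ⟨d, rfl⟩, ?_⟩
    have h := hold (Function.invFun g (g d)) d
    rw [hinv _ ⟨d, rfl⟩, sub_self, abs_zero, Real.zero_rpow hβ0.ne', mul_zero] at h
    exact sub_eq_zero.mp (abs_nonpos_iff.mp h)
  have hle := hf.hausdorffMeasure_image_le (by rw [← NNReal.coe_pos, hb]; exact hβ0) (d := 1) zero_le_one
  rw [hausdorffMeasure_real, mul_one, hb] at hle
  have h1 : (1 : ℝ≥0∞) ≤ volume (f '' Set.range g) := by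
    have := measure_mono (μ := volume) himg
    simpa using this
  have hpos : 0 < μH[β] (Set.range g) := by
    rw [pos_iff_ne_zero]
    intro h0
    have h2 := h1.trans hle
    rw [h0, mul_zero] at h2
    simp at h2
  exact hpos.trans_le (measure_mono hsub)
end

section
/- Let D be a real number with 0 < D < 1, let A = {⌊y/D⌋ : y a positive integer}, and let u₁ < u₂ < u₃ < … enumerate the positive integers not in A. Then there exists a fixed number t such that uₙ ≤ (n + t)/(1 − D) for every positive integer n. -/
/-- Let `0 < D < 1`, `A = {⌊y/D⌋ : y a positive integer}`, and let
`u₁ < u₂ < …` enumerate the positive integers not in `A` (here `u n` is the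
`(n+1)`-st such integer `u_{n+1}`).  Then there exists a fixed `t` such that
`uₙ ≤ (n + t)/(1 − D)` for every `n ≥ 1`. -/
theorem complement_enumeration_bound (D : ℝ) (hD0 : 0 < D) (hD1 : D < 1)
    (A : Set ℕ) (hA : A = {m : ℕ | ∃ y : ℕ, 0 < y ∧ (m : ℤ) = ⌊(y : ℝ) / D⌋})
    (u : ℕ → ℕ) (hu : StrictMono u)
    (hrange : Set.range u = {m : ℕ | 0 < m ∧ m ∉ A}) :
    ∃ t : ℝ, ∀ n : ℕ, (u n : ℝ) ≤ ((n + 1 : ℕ) + t) / (1 - D) := by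
  refine ⟨D, fun n => ?_⟩
  rw [le_div_iff₀ (by linarith)]
  have hsub : Finset.Icc 1 (u n) ⊆ (Finset.range (n + 1)).image u ∪
      (Finset.Icc 1 ⌊((u n : ℝ) + 1) * D⌋₊).image (fun y : ℕ => ⌊(y : ℝ) / D⌋.toNat) := by
    intro m hm
    rw [Finset.mem_Icc] at hm
    rw [Finset.mem_union, Finset.mem_image, Finset.mem_image]
    by_cases hmA : m ∈ A
    · right
      rw [hA] at hmA
      obtain ⟨y, hy, hmy⟩ := hmA
      refine ⟨y, ?_, by simp only [← hmy, Int.toNat_natCast]⟩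
      rw [Finset.mem_Icc]
      refine ⟨hy, Nat.le_floor ?_⟩
      have h1 := Int.lt_floor_add_one ((y : ℝ) / D)
      rw [← hmy, div_lt_iff₀ hD0] at h1
      have h2 : (m : ℝ) ≤ u n := by exact_mod_cast hm.2
      push_cast at h1
      nlinarith
    · left
      have : m ∈ Set.range u := by
        rw [hrange]
        exact ⟨hm.1, hmA⟩
      obtain ⟨k, rfl⟩ := this
      exact ⟨k, Finset.mem_range.2 (Nat.lt_succ_of_le (hu.le_iff_le.1 hm.2)), rfl⟩
  have hc := (Finset.card_le_card hsub).trans ((Finset.card_union_le _ _).trans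
    (add_le_add Finset.card_image_le Finset.card_image_le))
  simp only [Nat.card_Icc, Finset.card_range, Nat.add_sub_cancel] at hc
  have hf : ((⌊((u n : ℝ) + 1) * D⌋₊ : ℕ) : ℝ) ≤ ((u n : ℝ) + 1) * D :=
    Nat.floor_le (by positivity)
  have hc' : (u n : ℝ) ≤ ((n + 1 : ℕ) : ℝ) + ((⌊((u n : ℝ) + 1) * D⌋₊ : ℕ) : ℝ) := by
    exact_mod_cast hc
  linarith
end
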